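/- For every first-order formula φ in the language of rings with m free variables there exists a real constant C > 0 such that for every prime p and k ≥ 1, writing Q = p^k and N for the number of m-tuples over GaloisField p k at which φ is satisfied, either N ≤ C or N ≥ Q/C. -/

import Mathlib

namespace Felgner
open Polynomial

section Stepanov
variable {k : Type} [Field k]

/-- Expansion at `b`: the ring homomorphism `x ↦ b + T`. -/
noncomputable def br (b : k) : k[X] →+* PowerSeries k :=
  eval₂RingHom (PowerSeries.C) (PowerSeries.C b + PowerSeries.X)

/-- Evaluation of a bivariate polynomial at a point. -/
noncomputable def ev (b w : k) : k[X][X] →+* k := eval₂RingHom (evalRingHom b) w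

/-- Evaluation of a bivariate polynomial along a branch. -/
noncomputable def evb (b : k) (η : PowerSeries k) : k[X][X] →+* PowerSeries k :=
  eval₂RingHom (br b) η

lemma br_eq_taylor (b : k) (P : k[X]) : br b P = ((taylor b P : k[X]) : PowerSeries k) := by
  induction P using Polynomial.induction_on' with
  | add p q hp hq => simp [hp, hq]
  | monomial n a =>
    simp [br, taylor_monomial, add_comm]

lemma X_pow_dvd_coe {P : k[X]} {n : ℕ} (h : (PowerSeries.X : PowerSeries k) ^ n ∣ (P : PowerSeries k)) :
    (X : k[X]) ^ n ∣ P := by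
  rw [PowerSeries.X_pow_dvd_iff] at h
  rw [Polynomial.X_pow_dvd_iff]
  intro m hm
  simpa using h m hm

lemma br_dvd {b : k} {P : k[X]} {n : ℕ} (h : (PowerSeries.X : PowerSeries k) ^ n ∣ br b P) :
    (X - C b) ^ n ∣ P := by
  rw [br_eq_taylor] at h
  rw [X_sub_C_pow_dvd_iff]
  have := X_pow_dvd_coe h
  rwa [taylor_apply] at this

lemma br_injective (b : k) : Function.Injective (br b) := by
  intro P Q h
  rw [br_eq_taylor, br_eq_taylor] at h
  exact taylor_injective b (Polynomial.coe_injective k h)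

lemma constCoeff_br (b : k) (P : k[X]) : PowerSeries.constantCoeff (br b P) = P.eval b := by
  have : (PowerSeries.constantCoeff (R := k)).comp (br b) = evalRingHom b := by
    ext
    · simp [br]
    · simp [br]
  exact congrArg (fun φ : k[X] →+* k => φ P) this

lemma constCoeff_evb (b : k) (η : PowerSeries k) (G : k[X][X]) :
    PowerSeries.constantCoeff (evb b η G) = ev b (PowerSeries.constantCoeff η) G := by
  have : (PowerSeries.constantCoeff (R := k)).comp (evb b η) = ev b (PowerSeries.constantCoeff η) := by
    ext P
    · simp [ev, evb, br]
    · simp [ev, evb, br]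
    · simp [ev, evb]
  exact congrArg (fun φ : k[X][X] →+* k => φ G) this

/-- Hensel's lemma for branches. -/
lemma exists_branch (f : k[X][X]) (hf : f.Monic) (b w : k) (h0 : ev b w f = 0)
    (h1 : ev b w (derivative f) ≠ 0) :
    ∃ η : PowerSeries k, PowerSeries.constantCoeff η = w ∧ evb b η f = 0 := by
  have H : HenselianRing (PowerSeries k) (Ideal.span {PowerSeries.X}) := inferInstance
  have key : ∀ G : k[X][X], (G.map (br b)).eval (PowerSeries.C w) = evb b (PowerSeries.C w) G := by
    intro G; simp [evb, eval_map]
  obtain ⟨η, h2, h3⟩ := H.is_henselian (f.map (br b)) (hf.map _) (PowerSeries.C w) (by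
      rw [Ideal.mem_span_singleton, PowerSeries.X_dvd_iff, key, constCoeff_evb]
      simpa using h0) (by
      rw [derivative_map, key]
      apply IsUnit.map
      rw [PowerSeries.isUnit_iff_constantCoeff, constCoeff_evb]
      simpa using h1)
  refine ⟨η, ?_, ?_⟩
  · rw [Ideal.mem_span_singleton, PowerSeries.X_dvd_iff] at h3
    simp at h3
    exact sub_eq_zero.mp h3
  · simpa [evb, IsRoot, eval_map] using h2

lemma exists_branches [IsAlgClosed k] (f : k[X][X]) (hf : f.Monic) (b : k)
    (hs : ∀ w, ev b w f = 0 → ev b w (derivative f) ≠ 0) :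
    ∃ η : Fin f.natDegree → PowerSeries k, (∀ l, evb b (η l) f = 0) ∧
      Function.Injective (fun l => PowerSeries.constantCoeff (η l)) ∧
      ∀ w, ev b w f = 0 → ∃ l, PowerSeries.constantCoeff (η l) = w := by
  classical
  set g : k[X] := f.map (evalRingHom b) with hg
  have hgm : g.Monic := hf.map _
  have hgd : g.natDegree = f.natDegree := hf.natDegree_map _
  have hev : ∀ w (G : k[X][X]), ev b w G = (G.map (evalRingHom b)).eval w := by
    intro w G; simp [ev, eval_map]
  have hsep : g.roots.Nodup := by
    rw [Multiset.nodup_iff_count_le_one]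
    intro w
    rw [count_roots]
    by_contra hlt
    push Not at hlt
    have hr := (one_lt_rootMultiplicity_iff_isRoot hgm.ne_zero).mp hlt
    refine hs w ?_ ?_
    · rw [hev]; exact hr.1
    · rw [hev, ← derivative_map]; exact hr.2
  have hcard : g.roots.toFinset.card = f.natDegree := by
    rw [Multiset.toFinset_card_of_nodup hsep, ← hgd]
    exact (splits_iff_card_roots.mp (IsAlgClosed.splits g))
  let e := (Finset.equivFinOfCardEq hcard).symm
  have hroot : ∀ l, ev b (e l : k) f = 0 := by
    intro l
    have := (e l).2
    rw [Multiset.mem_toFinset, mem_roots hgm.ne_zero] at this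
    rw [hev]; exact this
  choose η h1 h2 using fun l => exists_branch f hf b (e l) (hroot l) (hs _ (hroot l))
  refine ⟨η, h2, ?_, ?_⟩
  · intro l l' h
    simp only [h1] at h
    exact e.injective (Subtype.ext h)
  · intro w hw
    have : w ∈ g.roots.toFinset := by
      rw [Multiset.mem_toFinset, mem_roots hgm.ne_zero]
      rw [hev] at hw; exact hw
    exact ⟨e.symm ⟨w, this⟩, by simp [h1]⟩

/-! ### Weighted degree -/

/-- `G` has weighted degree at most `N` (weight of `y` is `e`). -/
def WG (e N : ℕ) (G : k[X][X]) : Prop := ∀ m i, (G.coeff m).coeff i ≠ 0 → i + e * m ≤ N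

lemma WG.zero (e N : ℕ) : WG e N (0 : k[X][X]) := by intro m i h; simp at h

lemma WG.mono {e N N' : ℕ} {G : k[X][X]} (h : WG e N G) (hN : N ≤ N') : WG e N' G :=
  fun m i hi => (h m i hi).trans hN

lemma WG.add {e N : ℕ} {G H : k[X][X]} (hG : WG e N G) (hH : WG e N H) : WG e N (G + H) := by
  intro m i h
  by_cases h1 : (G.coeff m).coeff i = 0
  · apply hH m i
    intro h2
    apply h
    simp [h1, h2]
  · exact hG m i h1

lemma WG.neg {e N : ℕ} {G : k[X][X]} (hG : WG e N G) : WG e N (-G) := by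
  intro m i h
  apply hG m i
  simpa using h

lemma WG.sub {e N : ℕ} {G H : k[X][X]} (hG : WG e N G) (hH : WG e N H) : WG e N (G - H) := by
  rw [sub_eq_add_neg]; exact hG.add hH.neg

lemma WG.sum {ι : Type*} {e N : ℕ} (s : Finset ι) {G : ι → k[X][X]} (hG : ∀ i ∈ s, WG e N (G i)) :
    WG e N (∑ i ∈ s, G i) := by
  classical
  induction s using Finset.induction_on with
  | empty => simpa using WG.zero e N
  | insert a s ha ih =>
    rw [Finset.sum_insert ha]
    exact (hG a (by simp)).add (ih fun i hi => hG i (by simp [hi]))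

lemma WG.mul {e N N' : ℕ} {G H : k[X][X]} (hG : WG e N G) (hH : WG e N' H) :
    WG e (N + N') (G * H) := by
  intro m i h
  rw [coeff_mul, finsetSum_coeff] at h
  obtain ⟨⟨m1, m2⟩, hm, h1⟩ := Finset.exists_ne_zero_of_sum_ne_zero h
  replace hm := Finset.HasAntidiagonal.mem_antidiagonal.mp hm
  dsimp only at hm
  rw [coeff_mul] at h1
  obtain ⟨⟨i1, i2⟩, hi, h2⟩ := Finset.exists_ne_zero_of_sum_ne_zero h1
  replace hi := Finset.HasAntidiagonal.mem_antidiagonal.mp hi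
  dsimp only at hi
  have a1 := hG m1 i1 (left_ne_zero_of_mul h2)
  have a2 := hH m2 i2 (right_ne_zero_of_mul h2)
  subst hm hi
  nlinarith

lemma WG.one (e : ℕ) : WG e 0 (1 : k[X][X]) := by
  intro m i h
  by_cases hm : m = 0
  · subst hm
    by_cases hi : i = 0
    · simp [hi]
    · simp [coeff_one, hi] at h
  · simp [coeff_one, hm] at h

lemma WG.pow {e N : ℕ} {G : k[X][X]} (hG : WG e N G) (n : ℕ) : WG e (n * N) (G ^ n) := by
  induction n with
  | zero => simpa using WG.one e
  | succ n ih => rw [pow_succ, add_mul, one_mul]; exact ih.mul hG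

lemma WG.of_natDegree {e N : ℕ} {G : k[X][X]} (h : ∀ m, (G.coeff m).natDegree + e * m ≤ N ∨ G.coeff m = 0) :
    WG e N G := by
  intro m i hi
  rcases h m with h | h
  · have := le_natDegree_of_ne_zero hi
    omega
  · simp [h] at hi

lemma WG.C {e N : ℕ} {P : k[X]} (h : P.natDegree ≤ N) : WG e N (C P) := by
  apply WG.of_natDegree
  intro m
  by_cases hm : m = 0
  · left; simp [hm, h]
  · right; simp [coeff_C, hm]

/-- Weighted degree for matrices. -/
def WM {d : ℕ} (e w : ℕ) (A : Matrix (Fin d) (Fin d) k[X]) : Prop :=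
  ∀ i j n, (A i j).coeff n ≠ 0 → n + e * j ≤ w + e * i

lemma WM.add {d e w : ℕ} {A B : Matrix (Fin d) (Fin d) k[X]} (hA : WM e w A) (hB : WM e w B) :
    WM e w (A + B) := by
  intro i j n h
  by_cases h1 : (A i j).coeff n = 0
  · apply hB i j n
    intro h2
    apply h
    simp [h1, h2]
  · exact hA i j n h1

lemma WM.zero {d : ℕ} (e w : ℕ) : WM e w (0 : Matrix (Fin d) (Fin d) k[X]) := by
  intro i j n h; simp at h

lemma WM.mul {d e w w' : ℕ} {A B : Matrix (Fin d) (Fin d) k[X]} (hA : WM e w A) (hB : WM e w' B) :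
    WM e (w + w') (A * B) := by
  intro i j n h
  rw [Matrix.mul_apply, finsetSum_coeff] at h
  obtain ⟨l, -, h1⟩ := Finset.exists_ne_zero_of_sum_ne_zero h
  rw [coeff_mul] at h1
  obtain ⟨⟨i1, i2⟩, hi, h2⟩ := Finset.exists_ne_zero_of_sum_ne_zero h1
  replace hi := Finset.HasAntidiagonal.mem_antidiagonal.mp hi
  dsimp only at hi
  have a1 := hA i l i1 (left_ne_zero_of_mul h2)
  have a2 := hB l j i2 (right_ne_zero_of_mul h2)
  omega

lemma WM.mono {d e w w' : ℕ} {A : Matrix (Fin d) (Fin d) k[X]} (hA : WM e w A) (h : w ≤ w') :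
    WM e w' A := fun i j n hn => (hA i j n hn).trans (by omega)

lemma WM.one {d e : ℕ} : WM e 0 (1 : Matrix (Fin d) (Fin d) k[X]) := by
  intro i j n h
  by_cases hij : i = j
  · subst hij
    by_cases hn : n = 0
    · simp [hn]
    · simp [coeff_one, hn] at h
  · simp [hij] at h

lemma WM.pow {d e w : ℕ} {A : Matrix (Fin d) (Fin d) k[X]} (hA : WM e w A) (n : ℕ) :
    WM e (n * w) (A ^ n) := by
  induction n with
  | zero => simpa using WM.one
  | succ n ih => rw [pow_succ, add_mul, one_mul]; exact ih.mul hA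

lemma WM.smul {d e w N : ℕ} {A : Matrix (Fin d) (Fin d) k[X]} (hA : WM e w A) (P : k[X])
    (hP : ∀ n, P.coeff n ≠ 0 → n + w ≤ N) : WM e N (P • A) := by
  intro i j n h
  rw [Matrix.smul_apply, smul_eq_mul, coeff_mul] at h
  obtain ⟨⟨i1, i2⟩, hi, h2⟩ := Finset.exists_ne_zero_of_sum_ne_zero h
  replace hi := Finset.HasAntidiagonal.mem_antidiagonal.mp hi
  dsimp only at hi
  have a1 := hA i j i2 (right_ne_zero_of_mul h2)
  have a2 := hP i1 (left_ne_zero_of_mul h2)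
  omega

lemma WM.det {d e w : ℕ} {A : Matrix (Fin d) (Fin d) k[X]} (hA : WM e w A) :
    A.det.natDegree ≤ d * w := by
  rw [Matrix.det_apply]
  apply natDegree_sum_le_of_forall_le
  intro π _
  refine (natDegree_smul_le _ _).trans ?_
  by_cases h0 : ∃ i, A (π i) i = 0
  · obtain ⟨i, hi⟩ := h0
    have : ∏ i, A (π i) i = 0 := Finset.prod_eq_zero (Finset.mem_univ i) hi
    exact (congrArg natDegree this).le.trans (by simp)
  push Not at h0
  refine (natDegree_prod_le _ _).trans ?_
  have h1 : ∀ i, (A (π i) i).natDegree + e * i ≤ w + e * (π i : Fin d) := by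
    intro i
    apply hA
    rw [coeff_natDegree]
    exact leadingCoeff_ne_zero.mpr (h0 i)
  have h2 := Finset.sum_le_sum (s := Finset.univ) (fun i _ => h1 i)
  rw [Finset.sum_add_distrib, Finset.sum_add_distrib] at h2
  have h3 : ∑ i : Fin d, e * ((π i : Fin d) : ℕ) = ∑ i : Fin d, e * (i : ℕ) :=
    Equiv.sum_comp π (fun i : Fin d => e * (i : ℕ))
  rw [h3] at h2
  simp only [Finset.sum_const, Finset.card_univ, Fintype.card_fin, smul_eq_mul] at h2
  change ∑ i, (A (π i) i).natDegree ≤ d * w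
  omega

/-! ### The norm -/

/-- Companion matrix. -/
noncomputable def comp (f : k[X][X]) : Matrix (Fin f.natDegree) (Fin f.natDegree) k[X] :=
  fun i j => if (i : ℕ) + 1 < f.natDegree then (if (j : ℕ) = i + 1 then 1 else 0) else - f.coeff j

lemma comp_mulVec {S : Type*} [CommRing S] (f : k[X][X]) (hf : f.Monic) (φ : k[X] →+* S) (η : S)
    (h : f.eval₂ φ η = 0) :
    ((comp f).map φ).mulVec (fun j => η ^ (j : ℕ)) = η • (fun j : Fin f.natDegree => η ^ (j : ℕ)) := by
  funext i
  simp only [Matrix.mulVec, dotProduct, Matrix.map_apply, Pi.smul_apply, smul_eq_mul, comp]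
  by_cases hi : (i : ℕ) + 1 < f.natDegree
  · simp only [hi, if_true]
    rw [Finset.sum_eq_single ⟨(i : ℕ) + 1, hi⟩]
    · simp [pow_succ, mul_comm]
    · intro j _ hj
      have : ¬ ((j : ℕ) = i + 1) := fun h => hj (Fin.ext h)
      simp [this]
    · simp
  · simp only [hi, if_false]
    have hi' : f.natDegree = (i : ℕ) + 1 := by omega
    rw [eval₂_eq_sum_range, Finset.sum_range_succ, hf.coeff_natDegree, ← Fin.sum_univ_eq_sum_range
      (fun j => φ (f.coeff j) * η ^ j) f.natDegree] at h
    simp only [map_neg, neg_mul, Finset.sum_neg_distrib]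
    rw [map_one, one_mul] at h
    rw [← pow_succ', ← hi']
    exact (eq_neg_of_add_eq_zero_right h).symm

lemma aeval_comp_mulVec {S : Type*} [CommRing S] (f : k[X][X]) (hf : f.Monic) (φ : k[X] →+* S) (η : S)
    (h : f.eval₂ φ η = 0) (G : k[X][X]) :
    ((aeval (comp f) G).map φ).mulVec (fun j => η ^ (j : ℕ)) =
      (G.eval₂ φ η) • (fun j : Fin f.natDegree => η ^ (j : ℕ)) := by
  induction G using Polynomial.induction_on with
  | C a =>
    funext i
    simp [aeval_C, Matrix.algebraMap_eq_diagonal, Matrix.mulVec_diagonal, Matrix.diagonal_map]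
  | add p q hp hq =>
    rw [map_add, Matrix.map_add _ (map_add φ), Matrix.add_mulVec, hp, hq, eval₂_add, add_smul]
  | monomial n a ih =>
    rw [pow_succ, ← mul_assoc, map_mul, aeval_X, Matrix.map_mul, ← Matrix.mulVec_mulVec,
      comp_mulVec f hf φ η h, Matrix.mulVec_smul, ih, smul_smul, mul_comm,
      eval₂_mul_X φ η (p := C a * X ^ n)]

/-- The norm of `G` modulo `f`. -/
noncomputable def nm (f G : k[X][X]) : k[X] := (aeval (comp f) G).det

lemma map_nm {S : Type*} [CommRing S] [IsDomain S] (f : k[X][X]) (hf : f.Monic) (φ : k[X] →+* S)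
    (η : Fin f.natDegree → S) (hη : Function.Injective η)
    (h : ∀ l, f.eval₂ φ (η l) = 0) (G : k[X][X]) :
    φ (nm f G) = ∏ l, G.eval₂ φ (η l) := by
  have hV := (Matrix.det_vandermonde_ne_zero_iff (v := η)).mpr hη
  have key : ((aeval (comp f) G).map φ) * (Matrix.vandermonde η).transpose =
      (Matrix.vandermonde η).transpose * Matrix.diagonal (fun l => G.eval₂ φ (η l)) := by
    ext i l
    have := congrFun (aeval_comp_mulVec f hf φ (η l) (h l) G) i
    rw [Matrix.mul_diagonal, Matrix.transpose_apply, Matrix.vandermonde_apply]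
    simp only [Matrix.mulVec, dotProduct, Pi.smul_apply, smul_eq_mul] at this
    rw [Matrix.mul_apply]
    simp only [Matrix.transpose_apply, Matrix.vandermonde_apply]
    rw [this, mul_comm]
  have h2 := congrArg Matrix.det key
  rw [Matrix.det_mul, Matrix.det_mul, Matrix.det_transpose, Matrix.det_diagonal, mul_comm] at h2
  have h3 := mul_left_cancel₀ hV h2
  rw [← h3, nm, RingHom.map_det]
  rfl

lemma WM_comp (e : ℕ) (f : k[X][X]) (hf : WG e (e * f.natDegree) f) : WM e e (comp f) := by
  intro i j n h
  unfold comp at h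
  split_ifs at h with h1 h2
  · by_cases hn : n = 0
    · subst hn; rw [h2]; ring_nf; omega
    · simp [coeff_one, hn] at h
  · simp at h
  · have := hf j n (by simpa using h)
    have hi' : f.natDegree = (i : ℕ) + 1 := by have := i.2; omega
    have h5 : e * f.natDegree = e * i + e := (congrArg (e * ·) hi').trans (mul_add e i 1 |>.trans (by simp))
    omega

lemma WM_aeval_comp {e N : ℕ} (f : k[X][X]) (hf : WG e (e * f.natDegree) f) {G : k[X][X]}
    (hG : WG e N G) : WM e N (aeval (comp f) G) := by
  rw [aeval_eq_sum_range]
  have : ∀ s : Finset ℕ, WM e N (∑ i ∈ s, G.coeff i • comp f ^ i) := by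
    intro s
    classical
    induction s using Finset.induction_on with
    | empty => simpa using WM.zero e N
    | insert a s ha ih =>
      rw [Finset.sum_insert ha]
      refine WM.add ?_ ih
      apply ((WM_comp e f hf).pow a).smul
      intro n hn
      have := hG a n hn
      linarith
  exact this _

lemma natDegree_nm {e N : ℕ} (f : k[X][X]) (hf : WG e (e * f.natDegree) f) {G : k[X][X]}
    (hG : WG e N G) : (nm f G).natDegree ≤ f.natDegree * N :=
  (WM_aeval_comp f hf hG).det

/-- An irreducible `f` that has a branch in common with `G` divides `G`. -/
lemma dvd_of_evb (f : k[X][X]) (hf : f.Monic) (hi : Irreducible f) (b : k) (η : PowerSeries k)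
    (h : evb b η f = 0) (G : k[X][X]) (hG : evb b η G = 0) : f ∣ G := by
  let _ := (br b).toAlgebra
  have : Module.IsTorsionFree k[X] (PowerSeries k) := by
    have : FaithfulSMul k[X] (PowerSeries k) :=
      (faithfulSMul_iff_algebraMap_injective _ _).mpr (br_injective b)
    infer_instance
  have hIntg : IsIntegral k[X] η := ⟨f, hf, h⟩
  have h1 : minpoly k[X] η ∣ f := minpoly.isIntegrallyClosed_dvd hIntg h
  have h2 : minpoly k[X] η ∣ G := minpoly.isIntegrallyClosed_dvd hIntg hG
  have h3 : Associated (minpoly k[X] η) f := by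
    refine ((hi.dvd_iff).mp h1).resolve_left ?_ |>.symm
    exact minpoly.not_isUnit _ _
  exact h3.dvd_iff_dvd_left.mp h2

lemma evb_of_dvd {f G : k[X][X]} {b : k} {η : PowerSeries k} (h : evb b η f = 0) (hd : f ∣ G) :
    evb b η G = 0 := by
  obtain ⟨q, rfl⟩ := hd
  rw [map_mul, h, zero_mul]

lemma ev_of_dvd {f G : k[X][X]} {b w : k} (h : ev b w f = 0) (hd : f ∣ G) :
    ev b w G = 0 := by
  obtain ⟨q, rfl⟩ := hd
  rw [map_mul, h, zero_mul]

end Stepanov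
end Felgner

namespace Felgner
open Polynomial
section Stepanov
variable {k : Type} [Field k]

/-- Partial derivative with respect to the inner variable. -/
noncomputable def dx : Derivation k k[X][X] k[X][X] :=
  ((PolynomialModule.equivPolynomialSelf (R := k[X])).toLinearMap).compDer
    ((derivative' (R := k)).mapCoeffs)

lemma coeff_dx (G : k[X][X]) (m : ℕ) : (dx G).coeff m = derivative (G.coeff m) := by
  simp [dx]
  rfl

/-- Partial derivative with respect to the outer variable. -/
noncomputable def dy : Derivation k k[X][X] k[X][X] :=
  (derivative' (R := k[X])).restrictScalars k

lemma dy_apply (G : k[X][X]) : dy G = derivative G := rfl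

/-- Derivation along the curve `f = 0`. -/
noncomputable def De (f : k[X][X]) : Derivation k k[X][X] k[X][X] :=
  (derivative f) • dx - (dx f) • dy

lemma De_apply (f G : k[X][X]) : De f G = derivative f * dx G - dx f * derivative G := by
  simp [De, dy_apply]

lemma derivation_comp_eq (b : k) (η : PowerSeries k) (G : k[X][X]) :
    PowerSeries.derivative k (evb b η G) = evb b η (dx G) +
      evb b η (derivative G) * PowerSeries.derivative k η := by
  induction G using Polynomial.induction_on' with
  | add p q hp hq => simp only [map_add, hp, hq]; ring
  | monomial n a =>
    have h1 : PowerSeries.derivative k (br b a) = br b (derivative a) := by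
      induction a using Polynomial.induction_on' with
      | add p q hp hq => simp only [map_add, hp, hq]
      | monomial n a =>
        rw [derivative_monomial]
        simp [br, Derivation.leibniz, Derivation.leibniz_pow, mul_assoc, mul_comm,mul_left_comm]
    have h2 : dx (monomial n a) = monomial n (derivative a) := by
      ext m : 1
      rw [coeff_dx, coeff_monomial, coeff_monomial]
      split_ifs <;> simp
    rw [h2, derivative_monomial]
    simp [evb, Derivation.leibniz, Derivation.leibniz_pow, h1]
    ring

lemma evb_De {f : k[X][X]} {b : k} {η : PowerSeries k} (h : evb b η f = 0) (G : k[X][X]) :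
    evb b η (De f G) = evb b η (derivative f) * PowerSeries.derivative k (evb b η G) := by
  have h1 := derivation_comp_eq b η f
  rw [h, map_zero] at h1
  rw [De_apply, map_sub, map_mul, map_mul, derivation_comp_eq b η G]
  linear_combination (evb b η (derivative G)) * h1

lemma WG.hdx {e N : ℕ} {G : k[X][X]} (h : WG e N G) : WG e N (dx G) := by
  intro m i hi
  rw [coeff_dx, coeff_derivative] at hi
  have := h m (i + 1) (left_ne_zero_of_mul hi)
  omega

lemma WG.hderivative {e N : ℕ} {G : k[X][X]} (h : WG e N G) : WG e N (derivative G) := by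
  intro m i hi
  rw [coeff_derivative] at hi
  have h3 : (G.coeff (m + 1) * ((m : k[X]) + 1)) = Polynomial.C ((m : k) + 1) * G.coeff (m + 1) := by
    simp [mul_comm]
  rw [h3, coeff_C_mul] at hi
  have := h (m + 1) i (right_ne_zero_of_mul hi)
  rw [mul_add] at this
  omega

lemma WG.hDe {e N d : ℕ} {f G : k[X][X]} (hf : WG e (e * d) f) (h : WG e N G) :
    WG e (N + e * d) (De f G) := by
  rw [De_apply, add_comm]
  exact (hf.hderivative.mul h.hdx).sub (hf.hdx.mul h.hderivative)

lemma WG.hDe_iter {e N d : ℕ} {f G : k[X][X]} (hf : WG e (e * d) f) (h : WG e N G) (n : ℕ) :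
    WG e (N + n * (e * d)) ((De f)^[n] G) := by
  induction n with
  | zero => simpa using h
  | succ n ih =>
    rw [Function.iterate_succ_apply']
    have := WG.hDe hf ih
    rwa [add_assoc, ← Nat.succ_mul] at this

lemma X_pow_dvd_derivative {g : PowerSeries k} {n : ℕ} (h : (PowerSeries.X : PowerSeries k) ^ n ∣ g) :
    (PowerSeries.X : PowerSeries k) ^ (n - 1) ∣ PowerSeries.derivative k g := by
  rw [PowerSeries.X_pow_dvd_iff] at h ⊢
  intro m hm
  rw [PowerSeries.coeff_derivative, h (m + 1) (by omega), zero_mul]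

lemma X_pow_dvd_De_iter {f : k[X][X]} {b : k} {η : PowerSeries k} (h : evb b η f = 0) (G : k[X][X])
    {n : ℕ} (hG : (PowerSeries.X : PowerSeries k) ^ n ∣ evb b η G) (j : ℕ) :
    (PowerSeries.X : PowerSeries k) ^ (n - j) ∣ evb b η ((De f)^[j] G) := by
  induction j with
  | zero => simpa using hG
  | succ j ih =>
    rw [Function.iterate_succ_apply', evb_De h]
    exact Dvd.dvd.mul_left (X_pow_dvd_derivative ih) _

lemma X_pow_dvd_of_De {p : ℕ} [Fact p.Prime] [CharP k p] {f : k[X][X]} {b : k} {η : PowerSeries k}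
    (h : evb b η f = 0) (h1 : ev b (PowerSeries.constantCoeff η) (derivative f) ≠ 0) (n : ℕ) (hn : n ≤ p) :
    ∀ (G : k[X][X]), (∀ j < n, ev b (PowerSeries.constantCoeff η) ((De f)^[j] G) = 0) →
    (PowerSeries.X : PowerSeries k) ^ n ∣ evb b η G := by
  induction n with
  | zero => intro G _; simp
  | succ n ih =>
    intro G hG
    have h2 := ih (by omega) (De f G) (fun j hj => by
      have := hG (j + 1) (by omega)
      rwa [Function.iterate_succ_apply] at this)
    rw [evb_De h] at h2
    have hu : IsUnit (evb b η (derivative f)) := by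
      rw [PowerSeries.isUnit_iff_constantCoeff, constCoeff_evb]
      exact h1.isUnit
    rw [hu.dvd_mul_left, PowerSeries.X_pow_dvd_iff] at h2
    rw [PowerSeries.X_pow_dvd_iff]
    intro m hm
    rcases m with _ | m
    · rw [PowerSeries.coeff_zero_eq_constantCoeff, constCoeff_evb]
      exact hG 0 (by omega)
    · have := h2 m (by omega)
      rw [PowerSeries.coeff_derivative] at this
      refine (mul_eq_zero.mp this).resolve_right ?_
      have h5 : ((m + 1 : ℕ) : k) ≠ 0 := by
        rw [Ne, CharP.cast_eq_zero_iff k p]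
        intro hd
        have := Nat.le_of_dvd (by omega) hd
        omega
      exact_mod_cast h5

/-! ### zero and counting lemmas -/

lemma evb_nm (f : k[X][X]) (hf : f.Monic) (b : k) (η : Fin f.natDegree → PowerSeries k)
    (hη : ∀ l, evb b (η l) f = 0) (hinj : Function.Injective (fun l => PowerSeries.constantCoeff (η l)))
    (G : k[X][X]) : br b (nm f G) = ∏ l, evb b (η l) G :=
  map_nm f hf (br b) η (fun l l' h => hinj (by simp only [h])) hη G

lemma nm_ne_zero (f : k[X][X]) (hf : f.Monic) (hi : Irreducible f) (b : k)
    (η : Fin f.natDegree → PowerSeries k)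
    (hη : ∀ l, evb b (η l) f = 0) (hinj : Function.Injective (fun l => PowerSeries.constantCoeff (η l)))
    (G : k[X][X]) (hG : ¬ f ∣ G) : nm f G ≠ 0 := by
  intro h0
  have h1 := evb_nm f hf b η hη hinj G
  rw [h0, map_zero] at h1
  obtain ⟨l, -, hl⟩ := Finset.prod_eq_zero_iff.mp h1.symm
  exact hG (dvd_of_evb f hf hi b (η l) (hη l) G hl)

lemma X_pow_dvd_nm (f : k[X][X]) (hf : f.Monic) (b : k)
    (η : Fin f.natDegree → PowerSeries k)
    (hη : ∀ l, evb b (η l) f = 0) (hinj : Function.Injective (fun l => PowerSeries.constantCoeff (η l)))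
    (G : k[X][X]) (n : Fin f.natDegree → ℕ)
    (hn : ∀ l, (PowerSeries.X : PowerSeries k) ^ (n l) ∣ evb b (η l) G) :
    (X - C b) ^ (∑ l, n l) ∣ nm f G := by
  apply br_dvd
  rw [evb_nm f hf b η hη hinj G, ← Finset.prod_pow_eq_pow_sum]
  exact Finset.prod_dvd_prod_of_dvd _ _ (fun l _ => hn l)

lemma sum_ite_fin {d : ℕ} (l0 : Fin d) (n0 n1 : ℕ) :
    ∑ l : Fin d, (if l = l0 then n0 else n1) = n0 + (d - 1) * n1 := by
  rw [← Finset.add_sum_erase _ _ (Finset.mem_univ l0)]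
  rw [Finset.sum_congr rfl (g := fun _ => n1)]
  · simp
  · intro x hx
    simp [(Finset.mem_erase.mp hx).1]

lemma zero_lemma {e N n0 n1 : ℕ} (f : k[X][X]) (hf : f.Monic) (hi : Irreducible f)
    (hfW : WG e (e * f.natDegree) f) (b : k)
    (η : Fin f.natDegree → PowerSeries k)
    (hη : ∀ l, evb b (η l) f = 0) (hinj : Function.Injective (fun l => PowerSeries.constantCoeff (η l)))
    (G : k[X][X]) (hG : WG e N G) (l0 : Fin f.natDegree)
    (h0 : (PowerSeries.X : PowerSeries k) ^ n0 ∣ evb b (η l0) G)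
    (h1 : ∀ l, l ≠ l0 → (PowerSeries.X : PowerSeries k) ^ n1 ∣ evb b (η l) G)
    (hN : f.natDegree * N < n0 + (f.natDegree - 1) * n1) : f ∣ G := by
  by_contra hd
  have hne := nm_ne_zero f hf hi b η hη hinj G hd
  have h2 := X_pow_dvd_nm f hf b η hη hinj G (fun l => if l = l0 then n0 else n1) (by
    intro l
    split_ifs with h
    · subst h; exact h0
    · exact h1 l h)
  rw [sum_ite_fin] at h2
  have h3 := natDegree_le_of_dvd h2 hne
  rw [natDegree_pow, natDegree_X_sub_C, mul_one] at h3
  have := natDegree_nm f hfW hG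
  omega

lemma count_lemma [IsAlgClosed k] {e N M : ℕ} (f : k[X][X]) (hf : f.Monic) (hi : Irreducible f)
    (hfW : WG e (e * f.natDegree) f) (b0 : k)
    (η : Fin f.natDegree → PowerSeries k)
    (hη : ∀ l, evb b0 (η l) f = 0) (hinj : Function.Injective (fun l => PowerSeries.constantCoeff (η l)))
    (H : k[X][X]) (hH : WG e N H) (hd : ¬ f ∣ H) (l0 : Fin f.natDegree)
    (h1 : ∀ l, l ≠ l0 → (PowerSeries.X : PowerSeries k) ^ N ∣ evb b0 (η l) H)
    (S : Finset (k × k)) (hS0 : ∀ z ∈ S, z.1 ≠ b0) (hSf : ∀ z ∈ S, ev z.1 z.2 f = 0)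
    (hSs : ∀ z ∈ S, ∀ w, ev z.1 w f = 0 → ev z.1 w (derivative f) ≠ 0)
    (hSM : ∀ z ∈ S, ∀ ξ, PowerSeries.constantCoeff ξ = z.2 → evb z.1 ξ f = 0 →
      (PowerSeries.X : PowerSeries k) ^ M ∣ evb z.1 ξ H) :
    M * S.card ≤ N := by
  classical
  have hne := nm_ne_zero f hf hi b0 η hη hinj H hd
  set B := S.image Prod.fst with hB
  have hcard : S.card = ∑ b ∈ B, (S.filter (fun z => z.1 = b)).card :=
    Finset.card_eq_sum_card_image Prod.fst S
  have hdv : ∀ b ∈ B, (X - C b) ^ (M * (S.filter (fun z => z.1 = b)).card) ∣ nm f H := by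
    intro b hb
    obtain ⟨z0, hz0, rfl⟩ := Finset.mem_image.mp hb
    obtain ⟨ξ, hξ, hξi, hξs⟩ := exists_branches f hf z0.1 (hSs z0 hz0)
    set T := Finset.univ.filter (fun l => (z0.1, PowerSeries.constantCoeff (ξ l)) ∈ S)
    have h5 := X_pow_dvd_nm f hf z0.1 ξ hξ hξi H (fun l => if l ∈ T then M else 0) (by
      intro l
      split_ifs with h
      · have := (Finset.mem_filter.mp h).2
        exact hSM _ this (ξ l) rfl (hξ l)
      · simp)
    refine (pow_dvd_pow _ ?_).trans h5
    rw [Finset.sum_ite_mem, Finset.univ_inter, Finset.sum_const, smul_eq_mul, mul_comm]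
    gcongr
    have : (S.filter (fun z => z.1 = z0.1)) ⊆
        T.image (fun l => (z0.1, PowerSeries.constantCoeff (ξ l))) := by
      intro z hz
      obtain ⟨hz1, hz2⟩ := Finset.mem_filter.mp hz
      obtain ⟨l, hl⟩ := hξs z.2 (hz2 ▸ hSf z hz1)
      refine Finset.mem_image.mpr ⟨l, ?_, ?_⟩
      · refine Finset.mem_filter.mpr ⟨Finset.mem_univ _, ?_⟩
        rw [hl, ← hz2]; exact hz1
      · ext
        · exact hz2.symm
        · exact hl
    exact (Finset.card_le_card this).trans Finset.card_image_le
  have h0 := X_pow_dvd_nm f hf b0 η hη hinj H (fun l => if l = l0 then 0 else N) (by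
    intro l
    split_ifs with h
    · simp
    · exact h1 l h)
  rw [sum_ite_fin, zero_add] at h0
  have hb0 : b0 ∉ B := by
    intro h
    obtain ⟨z, hz, h⟩ := Finset.mem_image.mp h
    exact hS0 z hz h
  have hprod : ∏ b ∈ insert b0 B, (X - C b) ^ (if b = b0 then (f.natDegree - 1) * N else
      M * (S.filter (fun z => z.1 = b)).card) ∣ nm f H := by
    apply Finset.prod_dvd_of_coprime
    · intro b _ b' _ hbb
      apply IsCoprime.pow
      exact isCoprime_X_sub_C_of_isUnit_sub (sub_ne_zero.mpr hbb).isUnit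
    · intro b hb
      split_ifs with h
      · rw [h]; exact h0
      · exact hdv b ((Finset.mem_insert.mp hb).resolve_left h)
  have h3 := natDegree_le_of_dvd hprod hne
  rw [natDegree_prod_of_monic _ _ (fun b _ => (monic_X_sub_C b).pow _)] at h3
  simp only [natDegree_pow, natDegree_X_sub_C, mul_one] at h3
  rw [Finset.sum_insert hb0, if_pos rfl, Finset.sum_congr rfl (g := fun b =>
    M * (S.filter (fun z => z.1 = b)).card), ← Finset.mul_sum, ← hcard] at h3
  · have h4 := natDegree_nm f hfW hH
    have h5 : f.natDegree = (f.natDegree - 1) + 1 := by have := l0.2; omega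
    have h6 : f.natDegree * N = (f.natDegree - 1) * N + N :=
      (congrArg (· * N) h5).trans (Nat.succ_mul _ _)
    omega
  · intro b hb
    have : b ≠ b0 := fun h => hb0 (h ▸ hb)
    simp [this]

end Stepanov
end Felgner

namespace Felgner
open Polynomial
section Stepanov
variable {k : Type} [Field k]

/-- The space of functions with prescribed vanishing along all branches but one. -/
noncomputable def RR (d e m : ℕ) (b : k) {D : ℕ} (η : Fin D → PowerSeries k) (l0 : Fin D) :
    Submodule k k[X][X] where
  carrier := {G | G.degree < d ∧ WG e m G ∧
    ∀ l, l ≠ l0 → (PowerSeries.X : PowerSeries k) ^ m ∣ evb b (η l) G}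
  add_mem' := by
    rintro G H ⟨h1, h2, h3⟩ ⟨h4, h5, h6⟩
    refine ⟨(degree_add_le _ _).trans_lt (max_lt h1 h4), h2.add h5, fun l hl => ?_⟩
    rw [map_add]; exact dvd_add (h3 l hl) (h6 l hl)
  zero_mem' := ⟨by simp [bot_lt_iff_ne_bot], WG.zero _ _, fun l _ => by simp⟩
  smul_mem' := by
    rintro c G ⟨h1, h2, h3⟩
    have h : c • G = C (C c) * G := by
      rw [← smul_eq_C_mul]
      ext m i
      simp
    refine ⟨(degree_smul_le _ _).trans_lt h1, ?_, fun l hl => ?_⟩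
    · rw [h]
      have := (WG.C (e := e) (N := 0) (P := C c) (by simp)).mul h2
      rwa [zero_add] at this
    · rw [h, map_mul]
      exact Dvd.dvd.mul_left (h3 l hl) _

/-- `R` has dimension at least `n`. -/
def Big (n : ℕ) (R : Submodule k k[X][X]) : Prop :=
  ∃ v : Fin n → k[X][X], LinearIndependent k v ∧ ∀ i, v i ∈ R

lemma exists_ne_zero_of_card {ι κ : Type*} [Fintype ι] [Fintype κ] (φ : (ι → k) →ₗ[k] (κ → k))
    (h : Fintype.card κ < Fintype.card ι) : ∃ v, v ≠ 0 ∧ φ v = 0 := by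
  have := LinearMap.ker_ne_bot_of_finrank_lt (f := φ) (by simpa using h)
  obtain ⟨v, hv, h0⟩ := (Submodule.ne_bot_iff _).mp this
  exact ⟨v, h0, hv⟩

lemma big_inter_aux {V : Type} [AddCommGroup V] [Module k V] {n n' : ℕ} {R : Submodule k V}
    {κ : Type} [Fintype κ] (v : Fin n' → V) (hv : LinearIndependent k v) (hR : ∀ i, v i ∈ R)
    (φ : V →ₗ[k] (κ → k)) (hn : n + Fintype.card κ ≤ n') :
    ∃ v : Fin n → V, LinearIndependent k v ∧ ∀ i, v i ∈ R ⊓ LinearMap.ker φ := by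
  set W := Submodule.span k (Set.range v) with hW
  have hWR : W ≤ R := Submodule.span_le.mpr (by rintro _ ⟨i, rfl⟩; exact hR i)
  have hfin : Module.finrank k W = n' := by
    rw [finrank_span_eq_card hv, Fintype.card_fin]
  have : FiniteDimensional k W := FiniteDimensional.span_of_finite k (Set.finite_range v)
  have h1 := LinearMap.finrank_range_add_finrank_ker (φ.domRestrict W)
  have h2 : Module.finrank k (LinearMap.range (φ.domRestrict W)) ≤ Fintype.card κ := by
    have := Submodule.finrank_le (LinearMap.range (φ.domRestrict W))
    simpa using this
  have h3 : n ≤ Module.finrank k (LinearMap.ker (φ.domRestrict W)) := by omega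
  obtain ⟨u, hu⟩ := exists_linearIndependent_of_le_finrank h3
  refine ⟨fun i => ((u i : W) : V), ?_, fun i => ⟨hWR (u i : W).2, ?_⟩⟩
  · have := (hu.map' (Submodule.subtype _) (Submodule.ker_subtype _)).map' W.subtype
      (Submodule.ker_subtype _)
    exact this
  · have := (u i).2
    rw [LinearMap.mem_ker] at this
    exact LinearMap.mem_ker.mpr this

lemma Big.inter {n n' : ℕ} {R : Submodule k k[X][X]} {κ : Type} [Fintype κ] (h : Big n' R)
    (φ : k[X][X] →ₗ[k] (κ → k)) (hn : n + Fintype.card κ ≤ n') :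
    Big n (R ⊓ LinearMap.ker φ) := by
  obtain ⟨v, hv, hR⟩ := h
  exact big_inter_aux v hv hR φ hn

lemma smul_monomial_coeff (c : k) (j i j' i' : ℕ) :
    ((c • (monomial j (monomial i (1 : k)) : k[X][X])).coeff j').coeff i' =
      if j = j' ∧ i = i' then c else 0 := by
  rw [coeff_smul, coeff_monomial]
  split_ifs with h1 h2 h2
  · obtain ⟨rfl, rfl⟩ := h2; simp
  · rw [coeff_smul, coeff_monomial, if_neg (fun h => h2 ⟨h1, h⟩), smul_zero]
  · exact absurd h2.1 h1
  · simp

lemma sum_lower (d e N : ℕ) : d * (N + 1) ≤ ∑ j : Fin d, (N + 1 - e * j) + e * d * d := by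
  have h : ∀ j : Fin d, N + 1 ≤ (N + 1 - e * j) + e * d := by
    intro j
    have : e * (j : ℕ) ≤ e * d := Nat.mul_le_mul_left _ j.2.le
    omega
  have := Finset.sum_le_sum (s := Finset.univ) (fun j _ => h j)
  rw [Finset.sum_add_distrib (f := fun j : Fin d => N + 1 - e * (j : ℕ))] at this
  simp only [Finset.sum_const, Finset.card_univ, Fintype.card_fin, smul_eq_mul] at this
  rw [mul_comm (e * d) d]
  exact this

lemma big_RR (d e m n : ℕ) (b : k) {D : ℕ} (η : Fin D → PowerSeries k) (l0 : Fin D) (hD : D = d)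
    (hn : n + e * d * d ≤ m + 1) : Big n (RR d e m b η l0) := by
  classical
  set n' := ∑ j : Fin d, (m + 1 - e * j)
  let V : Submodule k k[X][X] :=
    { carrier := {G | G.degree < d ∧ WG e m G}
      add_mem' := by
        rintro G H ⟨h1, h2⟩ ⟨h4, h5⟩
        exact ⟨(degree_add_le _ _).trans_lt (max_lt h1 h4), h2.add h5⟩
      zero_mem' := ⟨by simp [bot_lt_iff_ne_bot], WG.zero _ _⟩
      smul_mem' := by
        rintro c G ⟨h1, h2⟩
        refine ⟨(degree_smul_le _ _).trans_lt h1, ?_⟩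
        intro j i hi
        apply h2 j i
        intro h0
        apply hi
        simp [h0] }
  have hV : Big n' V := by
    let idx := Σ j : Fin d, Fin (m + 1 - e * j)
    have hc : Fintype.card idx = n' := by simp [idx, n']
    let E := (Fintype.equivFinOfCardEq hc).symm
    let v : idx → k[X][X] := fun x => monomial (x.1 : ℕ) (monomial (x.2 : ℕ) (1 : k))
    have hv : LinearIndependent k v := by
      rw [Fintype.linearIndependent_iff]
      intro c hc x
      have := congrArg (fun G : k[X][X] => (G.coeff x.1).coeff x.2) hc
      simp only [finsetSum_coeff, coeff_zero, v, smul_monomial_coeff] at this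
      rw [Finset.sum_eq_single x] at this
      · simpa using this
      · intro y _ hy
        rw [if_neg]
        rintro ⟨h1, h2⟩
        apply hy
        obtain ⟨y1, y2⟩ := y
        obtain ⟨x1, x2⟩ := x
        dsimp only at h1 h2
        obtain rfl := Fin.ext h1
        obtain rfl := Fin.ext h2
        rfl
      · simp
    refine ⟨fun i => v (E i), hv.comp E E.injective, fun i => ⟨?_, ?_⟩⟩
    · refine (degree_monomial_le _ _).trans_lt ?_
      exact_mod_cast (E i).1.2
    · intro j i' hi'
      have h := smul_monomial_coeff (1 : k) (E i).1 (E i).2 j i'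
      rw [one_smul] at h
      rw [h] at hi'
      split_ifs at hi' with h'
      · obtain ⟨h1, h2⟩ := h'
        have := (E i).2.2
        rw [h2, h1] at this
        omega
      · exact absurd rfl hi'
  let κ := {l : Fin D // l ≠ l0} × Fin m
  let φ : k[X][X] →ₗ[k] (κ → k) :=
    { toFun := fun G x => PowerSeries.coeff (x.2 : ℕ) (evb b (η x.1) G)
      map_add' := by intro G H; funext x; simp
      map_smul' := by
        intro c G; funext x
        have h : c • G = C (C c) * G := by
          rw [← smul_eq_C_mul]
          ext m i
          simp
        have h2 : evb b (η x.1) (C (C c)) = PowerSeries.C c := by simp [evb, br]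
        rw [h, map_mul, h2]
        simp }
  have hκ : Fintype.card κ = (d - 1) * m := by simp [κ, hD]
  have h1 := sum_lower d e m
  obtain ⟨v, hv, hvR⟩ := hV.inter φ (n := n) (by
    rw [hκ]
    have h5 : d = (d - 1) + 1 := by have := l0.2; omega
    have h6 : d * (m + 1) = (d - 1) * m + (d - 1) + (m + 1) := by
      conv_lhs => rw [h5]
      ring
    change n + (d - 1) * m ≤ n'
    change _ ≤ n' + _ at h1
    omega)
  refine ⟨v, hv, fun i => ⟨(hvR i).1.1, (hvR i).1.2, fun l hl => ?_⟩⟩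
  rw [PowerSeries.X_pow_dvd_iff]
  intro j hj
  have := (hvR i).2
  rw [SetLike.mem_coe, LinearMap.mem_ker] at this
  exact congrFun this (⟨l, hl⟩, ⟨j, hj⟩)

lemma RR_order {d e m : ℕ} (f : k[X][X]) (hf : f.Monic) (hi : Irreducible f)
    (hd : f.natDegree = d)
    (hfW : WG e (e * f.natDegree) f) (b : k)
    (η : Fin f.natDegree → PowerSeries k)
    (hη : ∀ l, evb b (η l) f = 0) (hinj : Function.Injective (fun l => PowerSeries.constantCoeff (η l)))
    (l0 : Fin f.natDegree) (G : k[X][X]) (hG : G ∈ RR d e m b η l0) (h0 : G ≠ 0) :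
    ∃ n ≤ m, (evb b (η l0) G).order = n := by
  obtain ⟨h1, h2, h3⟩ := hG
  have hnd : ¬ f ∣ G := by
    intro h
    apply h0
    refine eq_zero_of_dvd_of_degree_lt h (h1.trans_le ?_)
    rw [degree_eq_natDegree hf.ne_zero, hd]
  have h4 : ¬ (PowerSeries.X : PowerSeries k) ^ (m + 1) ∣ evb b (η l0) G := by
    intro h
    apply hnd
    refine zero_lemma f hf hi hfW b η hη hinj G h2 l0 h h3 ?_
    have h5 : f.natDegree = (f.natDegree - 1) + 1 := by have := l0.2; omega
    have h6 : f.natDegree * m = (f.natDegree - 1) * m + m :=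
      (congrArg (· * m) h5).trans (Nat.succ_mul _ _)
    omega
  have h5 : evb b (η l0) G ≠ 0 := by
    intro h; rw [h] at h4; exact h4 (dvd_zero _)
  rw [PowerSeries.X_pow_dvd_iff] at h4
  push Not at h4
  obtain ⟨j, hj, hj2⟩ := h4
  have h6 := PowerSeries.order_le j hj2
  lift (evb b (η l0) G).order to ℕ using (by rw [Ne, PowerSeries.order_eq_top]; exact h5) with n hn
  refine ⟨n, ?_, rfl⟩
  have : n ≤ j := by exact_mod_cast h6
  omega

lemma exists_orders {d e m n : ℕ} (f : k[X][X]) (hf : f.Monic) (hi : Irreducible f)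
    (hd : f.natDegree = d)
    (hfW : WG e (e * f.natDegree) f) (b : k)
    (η : Fin f.natDegree → PowerSeries k)
    (hη : ∀ l, evb b (η l) f = 0) (hinj : Function.Injective (fun l => PowerSeries.constantCoeff (η l)))
    (l0 : Fin f.natDegree) (hB : Big n (RR d e m b η l0)) :
    ∃ (s : Fin n → k[X][X]) (ν : Fin n → ℕ), (∀ t, s t ∈ RR d e m b η l0) ∧
      Function.Injective ν ∧ ∀ t, (evb b (η l0) (s t)).order = ν t := by
  classical
  obtain ⟨v, hv, hR⟩ := hB
  let O : Finset ℕ := (Finset.range (m + 1)).filter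
    (fun j => ∃ G ∈ RR d e m b η l0, (evb b (η l0) G).order = j)
  have hO : n ≤ O.card := by
    by_contra hlt
    push Not at hlt
    let φ : (Fin n → k) →ₗ[k] (O → k) :=
      { toFun := fun c x => ∑ i, c i * PowerSeries.coeff (x : ℕ) (evb b (η l0) (v i))
        map_add' := by intro a c; funext x; simp [add_mul, Finset.sum_add_distrib]
        map_smul' := by intro a c; funext x; simp [Finset.mul_sum, mul_assoc] }
    obtain ⟨c, hc0, hc⟩ := exists_ne_zero_of_card φ (by simpa using hlt)
    set G := ∑ i, c i • v i with hG
    have hGR : G ∈ RR d e m b η l0 := Submodule.sum_mem _ fun i _ => Submodule.smul_mem _ _ (hR i)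
    have hG0 : G ≠ 0 := by
      intro h
      apply hc0
      funext i
      exact (Fintype.linearIndependent_iff.mp hv) c h i
    obtain ⟨j, hj, hjo⟩ := RR_order f hf hi hd hfW b η hη hinj l0 G hGR hG0
    have hjO : j ∈ O := Finset.mem_filter.mpr ⟨Finset.mem_range.mpr (by omega), G, hGR, hjo⟩
    have h1 := congrFun hc ⟨j, hjO⟩
    have h2 : PowerSeries.coeff j (evb b (η l0) G) = 0 := by
      rw [hG, map_sum, map_sum]
      refine Eq.trans (Finset.sum_congr rfl fun i _ => ?_) h1
      have h : c i • v i = C (C (c i)) * v i := by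
        rw [← smul_eq_C_mul]
        ext m i
        simp
      have h2 : evb b (η l0) (C (C (c i))) = PowerSeries.C (c i) := by simp [evb, br]
      rw [h, map_mul, h2]
      simp
    have h3 := (PowerSeries.order_eq_nat.mp hjo).1
    exact h3 h2
  let ν : Fin n → O := fun t => O.equivFin.symm (Fin.castLE hO t)
  have hν : ∀ t, ∃ G ∈ RR d e m b η l0, (evb b (η l0) G).order = (ν t : ℕ) :=
    fun t => (Finset.mem_filter.mp (ν t).2).2
  choose s hs1 hs2 using hν
  refine ⟨s, fun t => ν t, hs1, ?_, hs2⟩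
  intro t t' h
  have := O.equivFin.symm.injective (Subtype.ext h)
  exact Fin.castLE_injective hO this

lemma sum_ne_zero_of_orders {ι : Type*} (A : Finset ι) (hA : A.Nonempty) (g : ι → PowerSeries k)
    (o : ι → ℕ) (ho : ∀ t ∈ A, (g t).order = o t) (hinj : ∀ t ∈ A, ∀ t' ∈ A, o t = o t' → t = t') :
    ∑ t ∈ A, g t ≠ 0 := by
  classical
  obtain ⟨t0, ht0, hmin⟩ := A.exists_min_image o hA
  intro h
  have h1 := congrArg (PowerSeries.coeff (o t0)) h
  rw [map_sum, Finset.sum_eq_single_of_mem t0 ht0] at h1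
  · exact (PowerSeries.order_eq_nat.mp (ho t0 ht0)).1 h1
  · intro t ht hne
    apply PowerSeries.coeff_of_lt_order
    rw [ho t ht]
    have h2 := hmin t ht
    have : o t ≠ o t0 := fun h => hne (hinj t ht t0 ht0 h)
    exact_mod_cast lt_of_le_of_ne h2 (Ne.symm this)

end Stepanov
end Felgner

namespace Felgner
open Polynomial
section Stepanov
variable {k : Type} [Field k]

lemma evb_smul (b : k) (η : PowerSeries k) (x : k) (G : k[X][X]) :
    evb b η (x • G) = x • evb b η G := by
  have h : x • G = C (C x) * G := by
    rw [← smul_eq_C_mul]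
    ext m i
    simp
  have h2 : evb b η (C (C x)) = PowerSeries.C x := by simp [evb, br]
  rw [h, map_mul, h2]
  ext n
  simp

/-- Frobenius twist of `s`, using `r/h` in place of the Frobenius of `y`. -/
noncomputable def tw (p : ℕ) [Fact p.Prime] [CharP k p] (a d : ℕ) (h : k[X]) (r s : k[X][X]) : k[X][X] :=
  ∑ j ∈ Finset.range d, C ((s.coeff j).map (iterateFrobenius k p a)) * (C h) ^ (d - j) * r ^ j

lemma WG_tw {p : ℕ} [Fact p.Prime] [CharP k p] {a d e c m : ℕ} {h : k[X]} {r s : k[X][X]}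
    (hh : h.natDegree ≤ c) (hr : WG e c r) (hs : WG e m s) : WG e (m + d * c) (tw p a d h r s) := by
  apply WG.sum
  intro j hj
  have hjd := Finset.mem_range.mp hj
  have h1 : WG e m (C ((s.coeff j).map (iterateFrobenius k p a))) := by
    apply WG.C
    refine natDegree_map_le.trans ?_
    by_cases h0 : s.coeff j = 0
    · simp [h0]
    · have := hs j (s.coeff j).natDegree (by rwa [coeff_natDegree, Ne, leadingCoeff_eq_zero])
      omega
  have h2 := (h1.mul ((WG.C (e := e) hh).pow (d - j))).mul (hr.pow j)
  refine h2.mono ?_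
  have : d * c = (d - j) * c + j * c := by rw [← add_mul]; congr 1; omega
  omega

lemma ev_tw {p : ℕ} [Fact p.Prime] [CharP k p] {a d : ℕ} {h : k[X]} {r s : k[X][X]} {b w : k}
    (hb : b ^ (p ^ a) = b) (hw : h.eval b * w ^ (p ^ a) = ev b w r) (hs : s.degree < d) :
    ev b w (tw p a d h r s) = h.eval b ^ d * (ev b w s) ^ (p ^ a) := by
  have h1 : ev b w s = ∑ j ∈ Finset.range d, (s.coeff j).eval b * w ^ j := by
    by_cases h0 : s = 0
    · simp [h0]
    · have hd : s.natDegree < d := by rwa [natDegree_lt_iff_degree_lt h0]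
      simp only [ev, coe_eval₂RingHom]
      rw [eval₂_eq_sum_range' _ hd]
      rfl
  have h2 : ∀ P : k[X], (P.map (iterateFrobenius k p a)).eval b = (P.eval b) ^ (p ^ a) := by
    intro P
    have hb' : iterateFrobenius k p a b = b := by rw [iterateFrobenius_def, hb]
    rw [eval_map]
    conv_lhs => rw [← hb']
    rw [eval₂_hom, iterateFrobenius_def]
  rw [h1, sum_pow_char_pow, Finset.mul_sum, tw, map_sum]
  refine Finset.sum_congr rfl fun j hj => ?_
  have hjd := Finset.mem_range.mp hj
  have h3 : ∀ P : k[X], ev b w (C P) = P.eval b := by intro P; simp [ev]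
  rw [map_mul, map_mul, map_pow, map_pow, h3, h3, ← hw, h2, mul_pow, mul_pow]
  have h4 : h.eval b ^ d = h.eval b ^ (d - j) * h.eval b ^ j := by
    rw [← pow_add]; congr 1; omega
  rw [h4, ← pow_mul, ← pow_mul, mul_comm j]
  ring

lemma De_iter_mul_pow {p : ℕ} [Fact p.Prime] [CharP k p] {f : k[X][X]} {u : ℕ} (hu : p ∣ u)
    (a s : k[X][X]) (n : ℕ) : (De f)^[n] (a * s ^ u) = (De f)^[n] a * s ^ u := by
  induction n with
  | zero => rfl
  | succ n ih =>
    rw [Function.iterate_succ_apply', ih, Function.iterate_succ_apply', Derivation.leibniz,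
      Derivation.leibniz_pow]
    have : (u : k[X][X]) = 0 := (CharP.cast_eq_zero_iff k[X][X] p u).mpr hu
    rw [← Nat.cast_smul_eq_nsmul k[X][X] u, this]
    simp [mul_comm]

lemma De_iter_sum {ι : Type*} (A : Finset ι) (f : k[X][X]) (g : ι → k[X][X]) (n : ℕ) :
    (De f)^[n] (∑ t ∈ A, g t) = ∑ t ∈ A, (De f)^[n] (g t) := by
  induction n with
  | zero => rfl
  | succ n ih => simp only [Function.iterate_succ_apply', ih, map_sum]

lemma De_iter_smul (f : k[X][X]) (x : k) (g : k[X][X]) (n : ℕ) :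
    (De f)^[n] (x • g) = x • (De f)^[n] g := by
  induction n with
  | zero => rfl
  | succ n ih => simp only [Function.iterate_succ_apply', ih, Derivation.map_smul]

lemma De_iter_add (f : k[X][X]) (g g' : k[X][X]) (n : ℕ) :
    (De f)^[n] (g + g') = (De f)^[n] g + (De f)^[n] g' := by
  induction n with
  | zero => rfl
  | succ n ih => simp only [Function.iterate_succ_apply', ih, map_add]

lemma exists_ne_zero_of_card_semi [IsAlgClosed k] {p : ℕ} [Fact p.Prime] [CharP k p] (μ : ℕ)
    {ι κ : Type*} [Fintype ι] [Fintype κ] (Φ : (ι → k) → (κ → k))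
    (hadd : ∀ a b, Φ (a + b) = Φ a + Φ b) (hsm : ∀ (x : k) a, Φ (x • a) = (x ^ p ^ μ) • Φ a)
    (h : Fintype.card κ < Fintype.card ι) : ∃ v, v ≠ 0 ∧ Φ v = 0 := by
  have : PerfectRing k p := PerfectField.toPerfectRing p
  let ρ := (iterateFrobeniusEquiv k p μ).symm
  have hρ : ∀ x : k, ρ (x ^ p ^ μ) = x := by
    intro x
    rw [RingEquiv.symm_apply_eq]
    rfl
  let φ : (ι → k) →ₗ[k] (κ → k) :=
    { toFun := fun v j => ρ (Φ v j)
      map_add' := by intro a b; funext j; simp [hadd]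
      map_smul' := by intro x a; funext j; simp [hsm, hρ] }
  obtain ⟨v, h0, hv⟩ := exists_ne_zero_of_card φ h
  refine ⟨v, h0, funext fun j => ?_⟩
  have : ρ (Φ v j) = 0 := congrFun hv j
  simpa using this

theorem stepanov_core [IsAlgClosed k] {p : ℕ} [Fact p.Prime] [CharP k p]
    {d e c0 M μ α ℓ n2 L : ℕ} (f : k[X][X]) (hf : f.Monic) (hi : Irreducible f)
    (hd : f.natDegree = d) (hfW : WG e (e * f.natDegree) f)
    (h : k[X]) (hh0 : h ≠ 0) (hh : h.natDegree ≤ c0) (r : k[X][X]) (hr : WG e c0 r)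
    (hsep : ∀ b w, h.eval b ≠ 0 → ev b w f = 0 → ev b w (derivative f) ≠ 0)
    (hα : 1 ≤ α) (hℓ : ℓ < p ^ α) (hM : M ≤ p)
    (hn2 : n2 + e * d * d ≤ ℓ + 1)
    (hL : d * (p ^ μ * (ℓ + M * (e * d)) + ((M * p ^ μ + e * d * d) + d * c0)) <
      L + (d - 1) * (p ^ μ * (ℓ - M)))
    (hcount : M * L < (M * p ^ μ + 1) * n2)
    (S : Finset (k × k)) (hSq : ∀ z ∈ S, z.1 ^ (p ^ (α + μ)) = z.1)
    (hSh : ∀ z ∈ S, h.eval z.1 ≠ 0) (hSf : ∀ z ∈ S, ev z.1 z.2 f = 0)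
    (hSr : ∀ z ∈ S, h.eval z.1 * z.2 ^ (p ^ (α + μ)) = ev z.1 z.2 r) :
    M * S.card ≤ ℓ + p ^ α * (M * p ^ μ + e * d * d) := by
  classical
  have hp := (Fact.out : p.Prime)
  set P := p ^ μ with hP
  set u := p ^ α with hu
  set m := M * P + e * d * d with hm
  have hPpos : 0 < P := pow_pos hp.pos _
  have hpu : p ∣ u := dvd_pow_self p (by omega)
  -- the base point
  have hd0 : 0 < f.natDegree := by
    rcases Nat.eq_zero_or_pos f.natDegree with h0 | h0
    · exfalso
      rw [hf.natDegree_eq_zero] at h0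
      exact hi.not_isUnit (h0 ▸ isUnit_one)
    · exact h0
  have hinf : Infinite k := inferInstance
  obtain ⟨b0, hb0⟩ : ∃ b0, (h * (X ^ (p ^ (α + μ)) - X)).eval b0 ≠ 0 := by
    have hne : h * (X ^ (p ^ (α + μ)) - X) ≠ 0 := by
      refine mul_ne_zero hh0 ?_
      apply FiniteField.X_pow_card_pow_sub_X_ne_zero k (by omega) hp.one_lt
    by_contra hall
    push Not at hall
    exact hne (Polynomial.funext (by simpa using hall))
  rw [eval_mul] at hb0
  have hb0h : h.eval b0 ≠ 0 := left_ne_zero_of_mul hb0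
  have hb0q : b0 ^ (p ^ (α + μ)) ≠ b0 := by
    have := right_ne_zero_of_mul hb0
    simpa [sub_eq_zero] using this
  obtain ⟨η, hη, hinj, -⟩ := exists_branches f hf b0 (fun w => hsep b0 w hb0h)
  let l0 : Fin f.natDegree := ⟨0, hd0⟩
  obtain ⟨s, ν, hs, hν, hso⟩ := exists_orders f hf hi hd hfW b0 η hη hinj l0
    (big_RR d e m (M * P + 1) b0 η l0 hd (by omega))
  obtain ⟨v, hv, hvR⟩ := big_RR d e ℓ n2 b0 η l0 hd hn2
  let aa : (Fin (M * P + 1) × Fin n2 → k) → Fin (M * P + 1) → k[X][X] :=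
    fun c t => ∑ i, c (t, i) • v i
  have haadd : ∀ c c' t, aa (c + c') t = aa c t + aa c' t := by
    intro c c' t; simp [aa, add_smul, Finset.sum_add_distrib]
  have hasm : ∀ (x : k) c t, aa (x • c) t = x • aa c t := by
    intro x c t; simp [aa, mul_smul, Finset.smul_sum]
  let ST : Fin (M * P + 1) → k[X][X] := fun t => tw p (α + μ) d h r (s t)
  let GG : (Fin (M * P + 1) × Fin n2 → k) → ℕ → k[X][X] :=
    fun c κ => ∑ t, ((De f)^[κ] (aa c t)) ^ P * ST t
  obtain ⟨c, hc0, hc⟩ := exists_ne_zero_of_card_semi (k := k) (p := p) μ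
    (ι := Fin (M * P + 1) × Fin n2) (κ := Fin M × Fin L)
    (fun c x => PowerSeries.coeff (x.2 : ℕ) (evb b0 (η l0) (GG c x.1)))
    (by
      intro c c'
      funext x
      have : GG (c + c') x.1 = GG c x.1 + GG c' x.1 := by
        simp only [GG, haadd, De_iter_add, hP, add_pow_char_pow, add_mul, Finset.sum_add_distrib]
      simp only [this, map_add, Pi.add_apply])
    (by
      intro y c
      funext x
      have : GG (y • c) x.1 = (y ^ P) • GG c x.1 := by
        simp only [GG, hasm, De_iter_smul, _root_.smul_pow, smul_mul_assoc, Finset.smul_sum]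
      simp only [this, evb_smul, PowerSeries.coeff_smul, Pi.smul_apply, smul_eq_mul, hP])
    (by simpa using hcount)
  have haR : ∀ t, aa c t ∈ RR d e ℓ b0 η l0 := fun t =>
    Submodule.sum_mem _ fun i _ => Submodule.smul_mem _ _ (hvR i)
  -- divisibility
  have hdiv : ∀ κ < M, f ∣ GG c κ := by
    intro κ hκ
    refine zero_lemma (n0 := L) (n1 := P * (ℓ - M)) (N := P * (ℓ + M * (e * d)) + (m + d * c0)) f hf hi hfW b0 η hη hinj (GG c κ) ?_ l0 ?_ ?_ ?_
    · apply WG.sum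
      intro t _
      have h1 := WG.hDe_iter hfW (haR t).2.1 κ
      rw [hd] at h1
      have h1' := h1.mono (N' := ℓ + M * (e * d)) (by gcongr)
      exact (h1'.pow P).mul (WG_tw hh hr (hs t).2.1)
    · rw [PowerSeries.X_pow_dvd_iff]
      intro j hj
      exact congrFun hc (⟨κ, hκ⟩, ⟨j, hj⟩)
    · intro l hl
      simp only [GG]
      rw [map_sum]
      apply Finset.dvd_sum
      intro t _
      rw [map_mul, map_pow, mul_comm P, pow_mul]
      apply Dvd.dvd.mul_right
      apply pow_dvd_pow_of_dvd
      refine (pow_dvd_pow _ ?_).trans (X_pow_dvd_De_iter (hη l) (aa c t) ((haR t).2.2 l hl) κ)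
      omega
    · rw [hd]; exact hL
  -- the auxiliary function
  set H := ∑ t, aa c t * s t ^ u with hH
  have hHD : ∀ n, (De f)^[n] H = ∑ t, (De f)^[n] (aa c t) * s t ^ u := by
    intro n
    rw [hH, De_iter_sum]
    exact Finset.sum_congr rfl fun t _ => De_iter_mul_pow hpu _ _ _
  have hHne : evb b0 (η l0) H ≠ 0 := by
    have hA : (Finset.univ.filter (fun t => aa c t ≠ 0)).Nonempty := by
      by_contra hne
      rw [Finset.not_nonempty_iff_eq_empty, Finset.filter_eq_empty_iff] at hne
      apply hc0
      funext ⟨t, i⟩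
      have := hne (Finset.mem_univ t)
      push Not at this
      exact (Fintype.linearIndependent_iff.mp hv) (fun i => c (t, i)) this i
    have hsum : evb b0 (η l0) H = ∑ t ∈ Finset.univ.filter (fun t => aa c t ≠ 0),
        evb b0 (η l0) (aa c t * s t ^ u) := by
      rw [hH, map_sum]
      symm
      apply Finset.sum_subset (Finset.filter_subset _ _)
      intro t _ ht
      have : aa c t = 0 := by
        by_contra h0
        exact ht (Finset.mem_filter.mpr ⟨Finset.mem_univ t, h0⟩)
      rw [this, zero_mul, map_zero]
    have hord : ∀ t, aa c t ≠ 0 → ∃ n ≤ ℓ, (evb b0 (η l0) (aa c t)).order = n := fun t ht =>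
      RR_order f hf hi hd hfW b0 η hη hinj l0 _ (haR t) ht
    choose! o ho1 ho2 using hord
    rw [hsum]
    refine sum_ne_zero_of_orders _ hA _ (fun t => o t + u * ν t) ?_ ?_
    · intro t ht
      rw [map_mul, map_pow, PowerSeries.order_mul, PowerSeries.order_pow,
        ho2 t (Finset.mem_filter.mp ht).2, hso t]
      simp
    · intro t ht t' ht' heq
      have h1 := ho1 t (Finset.mem_filter.mp ht).2
      have h2 := ho1 t' (Finset.mem_filter.mp ht').2
      apply hν
      have := congrArg (· / u) heq
      rwa [Nat.add_mul_div_left _ _ (by omega), Nat.add_mul_div_left _ _ (by omega),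
        Nat.div_eq_of_lt (by omega), Nat.div_eq_of_lt (by omega), zero_add, zero_add] at this
  refine count_lemma (e := e) f hf hi hfW b0 η hη hinj H ?_ ?_ l0 ?_ S ?_ hSf ?_ ?_
  · apply WG.sum
    intro t _
    exact (haR t).2.1.mul ((hs t).2.1.pow u)
  · intro hfd
    exact hHne (evb_of_dvd (hη l0) hfd)
  · intro l hl
    rw [hH, map_sum]
    apply Finset.dvd_sum
    intro t _
    rw [map_mul, map_pow, pow_add, mul_comm u, pow_mul]
    exact mul_dvd_mul ((haR t).2.2 l hl) (pow_dvd_pow_of_dvd ((hs t).2.2 l hl) _)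
  · intro z hz h0
    exact hb0q (h0 ▸ hSq z hz)
  · intro z hz w
    exact hsep z.1 w (hSh z hz)
  · intro z hz ξ hξ hξf
    refine X_pow_dvd_of_De (p := p) hξf ?_ M hM H ?_
    · rw [hξ]
      exact hsep _ _ (hSh z hz) (hSf z hz)
    · intro j hj
      rw [hξ, hHD]
      have h1 := ev_of_dvd (hSf z hz) (hdiv j hj)
      simp only [GG] at h1
      rw [map_sum] at h1
      have h2 : ∀ t, ev z.1 z.2 ((De f)^[j] (aa c t) ^ P * ST t) =
          h.eval z.1 ^ d * (ev z.1 z.2 ((De f)^[j] (aa c t) * s t ^ u)) ^ P := by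
        intro t
        rw [map_mul, map_pow, ev_tw (hSq z hz) (hSr z hz) (hs t).1, map_mul, map_pow, mul_pow,
          ← pow_mul, hu, hP, ← pow_add]
        ring
      rw [Finset.sum_congr rfl (fun t _ => h2 t), ← Finset.mul_sum] at h1
      have hsp : ∀ g : Fin (M * P + 1) → k, ∑ t, g t ^ P = (∑ t, g t) ^ P := fun g =>
        (sum_pow_char_pow p μ _ _).symm
      rw [hsp, ← map_sum] at h1
      have h3 := (mul_eq_zero.mp h1).resolve_left (pow_ne_zero _ (hSh z hz))
      exact pow_eq_zero_iff (by positivity) |>.mp h3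

end Stepanov
end Felgner

namespace Felgner
open Polynomial
section Stepanov

/-- Threshold. -/
def thr (d e c0 M P : ℕ) : ℕ :=
  1 + M + M * (d * (P * (M * (e * d)) + M * P + e * d * d + d * c0) + d * (P * M) + 1) +
    (M * P + 1) * (e * d * d)

lemma thr_mono {d e c0 M P M' P' : ℕ} (h : M ≤ M') (h' : P ≤ P') : thr d e c0 M P ≤ thr d e c0 M' P' := by
  unfold thr
  gcongr

theorem stepanov_mid {k : Type} [Field k] [IsAlgClosed k] {p : ℕ} [Fact p.Prime] [CharP k p]
    {d e c0 M μ α : ℕ} (f : k[X][X]) (hf : f.Monic) (hi : Irreducible f)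
    (hd : f.natDegree = d) (hfW : WG e (e * f.natDegree) f)
    (h : k[X]) (hh0 : h ≠ 0) (hh : h.natDegree ≤ c0) (r : k[X][X]) (hr : WG e c0 r)
    (hsep : ∀ b w, h.eval b ≠ 0 → ev b w f = 0 → ev b w (derivative f) ≠ 0)
    (hα : 1 ≤ α) (hM : M ≤ p)
    (hthr : thr d e c0 M (p ^ μ) ≤ p ^ α)
    (S : Finset (k × k)) (hSq : ∀ z ∈ S, z.1 ^ (p ^ (α + μ)) = z.1)
    (hSh : ∀ z ∈ S, h.eval z.1 ≠ 0) (hSf : ∀ z ∈ S, ev z.1 z.2 f = 0)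
    (hSr : ∀ z ∈ S, h.eval z.1 * z.2 ^ (p ^ (α + μ)) = ev z.1 z.2 r) :
    M * S.card ≤ p ^ α * (M * p ^ μ + e * d * d + 1) := by
  obtain ⟨ℓ, hℓ⟩ : ∃ ℓ, p ^ α = ℓ + 1 := ⟨p ^ α - 1, by
    have := pow_pos (Fact.out : p.Prime).pos α; omega⟩
  set P := p ^ μ with hP
  set C4 := d * (P * (M * (e * d)) + M * P + e * d * d + d * c0) + d * (P * M) + 1 with hC4
  have ht : M + M * C4 + (M * P + 1) * (e * d * d) ≤ ℓ := by
    unfold thr at hthr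
    rw [← hC4] at hthr
    omega
  have hd1 : 1 ≤ d := by
    rw [← hd]
    rcases Nat.eq_zero_or_pos f.natDegree with h0 | h0
    · exfalso
      rw [hf.natDegree_eq_zero] at h0
      exact hi.not_isUnit (h0 ▸ isUnit_one)
    · exact h0
  have hg : e * d * d ≤ ℓ := by nlinarith [Nat.zero_le (M * P * (e * d * d)), Nat.zero_le (M * C4)]
  have hMl : M ≤ ℓ := by omega
  have := stepanov_core (ℓ := ℓ) (n2 := ℓ + 1 - e * d * d) (L := P * ℓ + C4) (M := M) (μ := μ) (α := α) (c0 := c0)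
    f hf hi hd hfW h hh0 hh r hr hsep hα (by omega) hM (by omega) (by
      rw [← hP]
      obtain ⟨x, rfl⟩ : ∃ x, ℓ = M + x := ⟨ℓ - M, by omega⟩
      obtain ⟨y, rfl⟩ : ∃ y, d = y + 1 := ⟨d - 1, by omega⟩
      simp only [Nat.add_sub_cancel_left, Nat.add_sub_cancel]
      rw [hC4]
      ring_nf
      nlinarith [Nat.zero_le (P * M)]) (by
      rw [← hP]
      obtain ⟨x, rfl⟩ : ∃ x, ℓ = e * d * d + x := ⟨ℓ - e * d * d, by omega⟩
      have : e * d * d + x + 1 - e * d * d = x + 1 := by omega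
      rw [this]
      nlinarith [Nat.zero_le (M * P)]) S hSq hSh hSf hSr
  rw [← hP] at this
  refine this.trans ?_
  rw [mul_add (p ^ α) _ 1]
  omega

theorem stepanov (d e c0 M : ℕ) (hM1 : 1 ≤ M) : ∃ q0 : ℕ, ∀ (k : Type) [Field k] [IsAlgClosed k]
    (p : ℕ) [Fact p.Prime] [CharP k p] (a : ℕ) (_ : q0 ≤ p ^ a)
    (f : k[X][X]) (_ : f.Monic) (_ : Irreducible f)
    (_ : f.natDegree = d) (_ : WG e (e * f.natDegree) f)
    (h : k[X]) (_ : h ≠ 0) (_ : h.natDegree ≤ c0) (r : k[X][X]) (_ : WG e c0 r)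
    (_ : ∀ b w, h.eval b ≠ 0 → ev b w f = 0 → ev b w (derivative f) ≠ 0)
    (S : Finset (k × k)) (_ : ∀ z ∈ S, z.1 ^ (p ^ a) = z.1)
    (_ : ∀ z ∈ S, h.eval z.1 ≠ 0) (_ : ∀ z ∈ S, ev z.1 z.2 f = 0)
    (_ : ∀ z ∈ S, h.eval z.1 * z.2 ^ (p ^ a) = ev z.1 z.2 r),
    M * S.card ≤ p ^ a * (M + e * d * d + 1) := by
  refine ⟨2 * (M * M) * thr d e c0 M (M * M), ?_⟩
  intro k _ _ p _ _ a hq f hf hi hd hfW h hh0 hh r hr hsep S hSq hSh hSf hSr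
  have hp := (Fact.out : p.Prime)
  have hthr1 : 1 ≤ thr d e c0 M (M * M) := by unfold thr; omega
  have hMM : 1 ≤ M * M := Nat.mul_pos hM1 hM1
  by_cases hMp : M ≤ p
  · have ha : 1 ≤ a := by
      by_contra h0
      have : a = 0 := by omega
      subst this
      rw [pow_zero] at hq
      nlinarith
    have := stepanov_mid (M := M) (μ := 0) (α := a) f hf hi hd hfW h hh0 hh r hr hsep ha hMp (by
      refine (thr_mono le_rfl (P' := M * M) (by simpa using hMM)).trans ?_
      nlinarith) S hSq hSh hSf hSr
    simpa using this
  · push Not at hMp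
    obtain ⟨μ, hμ1, hμ2⟩ : ∃ μ, M ≤ p ^ μ ∧ p ^ μ ≤ M * M := by
      have hex : ∃ μ, M ≤ p ^ μ := ⟨M, (Nat.lt_pow_self hp.one_lt).le⟩
      refine ⟨Nat.find hex, Nat.find_spec hex, ?_⟩
      rcases hn : Nat.find hex with _ | n
      · simpa using hMM
      · have := Nat.find_min hex (m := n) (by omega)
        push Not at this
        rw [pow_succ]
        gcongr
    have hμa : μ < a := by
      by_contra h0
      push Not at h0
      have := Nat.pow_le_pow_right hp.pos h0
      nlinarith
    obtain ⟨α, rfl⟩ : ∃ α, a = α + μ := ⟨a - μ, by omega⟩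
    have := stepanov_mid (M := 1) (μ := μ) (α := α) f hf hi hd hfW h hh0 hh r hr hsep (by omega)
      hp.one_lt.le (by
      refine (thr_mono hM1 hμ2).trans ?_
      rw [pow_add] at hq
      have h1 : 2 * (M * M) * thr d e c0 M (M * M) ≤ p ^ α * (M * M) := hq.trans (by gcongr)
      nlinarith) S hSq hSh hSf hSr
    rw [one_mul, one_mul] at this
    rw [pow_add]
    have h2 : M * (p ^ μ + e * d * d + 1) ≤ p ^ μ * (M + e * d * d + 1) := by
      nlinarith [Nat.mul_le_mul_right (e * d * d + 1) hμ1]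
    calc M * S.card ≤ M * (p ^ α * (p ^ μ + e * d * d + 1)) := by gcongr
      _ = p ^ α * (M * (p ^ μ + e * d * d + 1)) := by ring
      _ ≤ p ^ α * (p ^ μ * (M + e * d * d + 1)) := by gcongr
      _ = _ := by ring

end Stepanov
end Felgner

namespace Felgner
open Polynomial
section Stepanov

lemma card_fixed {k : Type} [Field k] [IsAlgClosed k] [DecidableEq k] {p : ℕ} [Fact p.Prime] [CharP k p] {a : ℕ} (ha : a ≠ 0) :
    (X ^ (p ^ a) - X : k[X]).roots.toFinset.card = p ^ a := by
  have hp := (Fact.out : p.Prime)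
  have hsep : (X ^ (p ^ a) - X : k[X]).Separable := galois_poly_separable p _ (dvd_pow_self p ha)
  rw [Multiset.toFinset_card_of_nodup (nodup_roots hsep),
    splits_iff_card_roots.mp (IsAlgClosed.splits _),
    FiniteField.X_pow_card_pow_sub_X_natDegree_eq k ha hp.one_lt]

lemma cheb_num {d B q Fg c0 E M g : ℕ} (hd1 : 1 ≤ d) (hB : 4 * d * B ≤ q) (hF : q ≤ Fg + c0)
    (e1 : Fg * d ≤ B * d + E) (hsum : M * E ≤ (d - 1) * (q * (M + g + 1)))
    (hM : M = 4 * d * (g + 1) + 1) (hq : 4 * d * c0 ≤ q) (hq0 : 0 < q) : False := by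
  obtain ⟨d', hd'⟩ : ∃ d', d = d' + 1 := ⟨d - 1, by omega⟩
  have hd2 : d - 1 = d' := by omega
  rw [hd2] at hsum
  have e2 : q * d ≤ B * d + E + c0 * d :=
    (Nat.mul_le_mul_right d hF).trans (by rw [add_mul]; omega)
  have e3 : M * (q * d) ≤ M * (B * d) + d' * (q * (M + g + 1)) + M * (c0 * d) := by
    refine (Nat.mul_le_mul_left M e2).trans ?_
    rw [mul_add, mul_add]
    omega
  have e4 : d' * (q * (M + g + 1)) = M * (q * d') + q * (d' * (g + 1)) := by ring
  have e5 : M * (q * d) = M * (q * d') + M * q := by rw [hd']; ring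
  have e6 : M * q ≤ M * (B * d) + q * (d' * (g + 1)) + M * (c0 * d) := by omega
  have e7 : 4 * (d' * (g + 1)) ≤ M := by rw [hM, hd']; nlinarith
  have e8 : 4 * (q * (d' * (g + 1))) ≤ M * q := by
    have := Nat.mul_le_mul_left q e7
    linarith
  have e9 : 4 * (M * (B * d)) ≤ M * q := by
    have := Nat.mul_le_mul_left M hB
    linarith
  have e10 : 4 * (M * (c0 * d)) ≤ M * q := by
    have := Nat.mul_le_mul_left M hq
    linarith
  have e11 : 0 < M * q := Nat.mul_pos (by omega) (by omega)
  omega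

theorem chebotarev (d e c0 : ℕ) : ∃ q0 : ℕ, ∀ (k : Type) [Field k] [IsAlgClosed k]
    (p : ℕ) [Fact p.Prime] [CharP k p] (a : ℕ) (_ : q0 ≤ p ^ a)
    (f : k[X][X]) (_ : f.Monic) (_ : Irreducible f)
    (_ : f.natDegree = d) (_ : WG e (e * f.natDegree) f)
    (h : k[X]) (_ : h ≠ 0) (_ : h.natDegree ≤ c0) (D : ℕ) (_ : D ≤ d)
    (r : Fin D → k[X][X]) (_ : ∀ j, WG e c0 (r j))
    (_ : ∀ b w, h.eval b ≠ 0 → ev b w f = 0 → ev b w (derivative f) ≠ 0)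
    (_ : ∀ b w, b ^ (p ^ a) = b → h.eval b ≠ 0 → ev b w f = 0 →
      ∃ j, h.eval b * w ^ (p ^ a) = ev b w (r j))
    (j0 : Fin D) (B : Finset k) (_ : 4 * d * B.card ≤ p ^ a),
    ∃ b w, b ^ (p ^ a) = b ∧ b ∉ B ∧ h.eval b ≠ 0 ∧ ev b w f = 0 ∧
      h.eval b * w ^ (p ^ a) = ev b w (r j0) := by
  set g := e * d * d with hg
  set M := 4 * d * (g + 1) + 1 with hM
  obtain ⟨q1, hq1⟩ := stepanov d e c0 M (by omega)
  refine ⟨q1 + 4 * d * c0 + 2, ?_⟩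
  intro k _ _ p _ _ a hq f hf hi hd hfW h hh0 hh D hD r hr hsep hcov j0 B hB
  classical
  by_contra hno
  push Not at hno
  have hp := (Fact.out : p.Prime)
  have ha : a ≠ 0 := by
    rintro rfl
    simp at hq
  set q := p ^ a with hqdef
  set Fb := (X ^ q - X : k[X]).roots.toFinset with hFb
  have hFbc : Fb.card = q := card_fixed ha
  have hXne : (X ^ q - X : k[X]) ≠ 0 := FiniteField.X_pow_card_pow_sub_X_ne_zero k ha hp.one_lt
  have hFbm : ∀ b, b ∈ Fb ↔ b ^ q = b := by
    intro b
    rw [hFb, Multiset.mem_toFinset, mem_roots hXne]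
    simp [IsRoot, sub_eq_zero]
  set Fg := Fb.filter (fun b => h.eval b ≠ 0) with hFg
  have hFgc : q ≤ Fg.card + c0 := by
    have h1 := Finset.card_filter_add_card_filter_not (s := Fb) (fun b => h.eval b ≠ 0)
    have h2 : (Fb.filter (fun b => ¬ h.eval b ≠ 0)).card ≤ c0 := by
      refine (Finset.card_le_card (t := h.roots.toFinset) ?_).trans
        ((Multiset.toFinset_card_le _).trans ((card_roots' h).trans hh))
      intro b hb
      have := (Finset.mem_filter.mp hb).2
      push Not at this
      rw [Multiset.mem_toFinset, mem_roots hh0]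
      exact this
    change q ≤ (Fb.filter (fun b => h.eval b ≠ 0)).card + c0
    omega
  have hex : ∀ b, ∃ η : Fin d → k, h.eval b ≠ 0 → Function.Injective η ∧ ∀ l, ev b (η l) f = 0 := by
    intro b
    by_cases hb : h.eval b = 0
    · exact ⟨fun _ => 0, fun h' => absurd hb h'⟩
    · obtain ⟨η, h1, h2, -⟩ := exists_branches f hf b (fun w => hsep b w hb)
      subst hd
      refine ⟨fun l => PowerSeries.constantCoeff (η l), fun _ => ⟨h2, fun l => ?_⟩⟩
      rw [← constCoeff_evb, h1, map_zero]
  choose η hη using hex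
  let ϕ : k × Fin d → k × k := fun x => (x.1, η x.1 x.2)
  set T := (Fg ×ˢ (Finset.univ : Finset (Fin d))).image ϕ with hT
  have hTm : ∀ z ∈ T, z.1 ^ q = z.1 ∧ h.eval z.1 ≠ 0 ∧ ev z.1 z.2 f = 0 := by
    intro z hz
    obtain ⟨x, hx, rfl⟩ := Finset.mem_image.mp hz
    have hx1 := Finset.mem_filter.mp (Finset.mem_product.mp hx).1
    exact ⟨(hFbm _).mp hx1.1, hx1.2, (hη x.1 hx1.2).2 x.2⟩
  have hTc : T.card = Fg.card * d := by
    rw [hT, Finset.card_image_of_injOn, Finset.card_product, Finset.card_univ, Fintype.card_fin]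
    rintro ⟨b, l⟩ hx ⟨b', l'⟩ hx' heq
    have hx1 := Finset.mem_filter.mp (Finset.mem_product.mp hx).1
    obtain ⟨h1, h2⟩ := Prod.ext_iff.mp heq
    dsimp only [ϕ] at h1 h2
    subst h1
    rw [(hη b hx1.2).1 h2]
  let TT : Fin D → Finset (k × k) := fun j => T.filter (fun z => h.eval z.1 * z.2 ^ q = ev z.1 z.2 (r j))
  have hTT : ∀ j, M * (TT j).card ≤ q * (M + g + 1) := by
    intro j
    refine hq1 k p a (by omega) f hf hi hd hfW h hh0 hh (r j) (hr j) hsep (TT j) ?_ ?_ ?_ ?_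
    · intro z hz; exact (hTm z (Finset.mem_filter.mp hz).1).1
    · intro z hz; exact (hTm z (Finset.mem_filter.mp hz).1).2.1
    · intro z hz; exact (hTm z (Finset.mem_filter.mp hz).1).2.2
    · intro z hz; exact (Finset.mem_filter.mp hz).2
  have hcover : T.card ≤ ∑ j, (TT j).card := by
    refine (Finset.card_le_card (t := Finset.univ.biUnion TT) ?_).trans Finset.card_biUnion_le
    intro z hz
    obtain ⟨h1, h2, h3⟩ := hTm z hz
    obtain ⟨j, hj⟩ := hcov z.1 z.2 h1 h2 h3
    exact Finset.mem_biUnion.mpr ⟨j, Finset.mem_univ j, Finset.mem_filter.mpr ⟨hz, hj⟩⟩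
  have hj0 : (TT j0).card ≤ B.card * d := by
    refine (Finset.card_le_card (t := (B ×ˢ (Finset.univ : Finset (Fin d))).image ϕ) ?_).trans
      (Finset.card_image_le.trans (by simp))
    intro z hz
    obtain ⟨hz1, hz2⟩ := Finset.mem_filter.mp hz
    obtain ⟨h1, h2, h3⟩ := hTm z hz1
    obtain ⟨x, hx, rfl⟩ := Finset.mem_image.mp hz1
    have hxB : x.1 ∈ B := by
      by_contra hxB
      exact hno x.1 _ h1 hxB h2 h3 hz2
    exact Finset.mem_image.mpr ⟨x, Finset.mem_product.mpr ⟨hxB, Finset.mem_univ _⟩, rfl⟩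
  rw [← Finset.add_sum_erase _ _ (Finset.mem_univ j0)] at hcover
  have hsum : M * ∑ j ∈ Finset.univ.erase j0, (TT j).card ≤ (d - 1) * (q * (M + g + 1)) := by
    rw [Finset.mul_sum]
    refine (Finset.sum_le_sum (fun j _ => hTT j)).trans ?_
    rw [Finset.sum_const, Finset.card_erase_of_mem (Finset.mem_univ _), Finset.card_univ,
      Fintype.card_fin, smul_eq_mul]
    gcongr
  have hd1 : 1 ≤ d := by have := j0.2; omega
  have e1 : Fg.card * d ≤ B.card * d + ∑ j ∈ Finset.univ.erase j0, (TT j).card := by omega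
  exact cheb_num hd1 hB hFgc e1 hsum hM (by omega) (by omega)

end Stepanov
end Felgner

namespace Felgner
open Polynomial
section Ultra

/-- The fixed nonprincipal ultrafilter. -/
noncomputable abbrev UU : Ultrafilter ℕ := Filter.hyperfilter ℕ

lemma uu_not {P : ℕ → Prop} : (∀ᶠ i in UU, ¬ P i) ↔ ¬ ∀ᶠ i in UU, P i := Ultrafilter.eventually_not

lemma uu_ge (n : ℕ) : ∀ᶠ i in UU, n ≤ i :=
  Nat.hyperfilter_le_atTop (Filter.eventually_ge_atTop n)

lemma saturation_nat {S : ℕ → Type*} [∀ i, Nonempty (S i)] (P : ℕ → ∀ i, S i → Prop)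
    (h : ∀ n, ∀ᶠ i in UU, ∃ z, ∀ j < n, P j i z) : ∃ z : ∀ i, S i, ∀ n, ∀ᶠ i in UU, P n i (z i) := by
  classical
  have hN : ∀ i, ∃ z, ∀ n ≤ i, (∃ z, ∀ j < n, P j i z) → ∀ j < n, P j i z := by
    intro i
    let N := Nat.findGreatest (fun n => ∃ z, ∀ j < n, P j i z) i
    have hNs : ∃ z, ∀ j < N, P j i z :=
      Nat.findGreatest_spec (P := fun n => ∃ z, ∀ j < n, P j i z) (Nat.zero_le i)
        ⟨Classical.arbitrary _, by intro j hj; omega⟩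
    obtain ⟨z, hz⟩ := hNs
    refine ⟨z, fun n hn hex j hj => hz j (hj.trans_le ?_)⟩
    exact Nat.le_findGreatest hn hex
  choose z hz using hN
  refine ⟨z, fun n => ?_⟩
  filter_upwards [h (n + 1), uu_ge (n + 1)] with i h1 h2
  exact hz i (n + 1) h2 h1 n (by omega)

lemma saturation {J : Type*} [Countable J] {S : ℕ → Type*} [∀ i, Nonempty (S i)] (P : J → ∀ i, S i → Prop)
    (h : ∀ s : Finset J, ∀ᶠ i in UU, ∃ z, ∀ j ∈ s, P j i z) :
    ∃ z : ∀ i, S i, ∀ j, ∀ᶠ i in UU, P j i (z i) := by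
  classical
  rcases isEmpty_or_nonempty J with hJ | hJ
  · exact ⟨fun i => Classical.arbitrary _, fun j => (hJ.false j).elim⟩
  obtain ⟨g, hg⟩ := exists_surjective_nat J
  obtain ⟨z, hz⟩ := saturation_nat (fun n i z => P (g n) i z) (fun n => by
    filter_upwards [h ((Finset.range n).image g)] with i hi
    obtain ⟨z, hz⟩ := hi
    exact ⟨z, fun j hj => hz _ (Finset.mem_image_of_mem _ (Finset.mem_range.mpr hj))⟩)
  refine ⟨z, fun j => ?_⟩
  obtain ⟨n, rfl⟩ := hg j
  exact hz n

variable (K : ℕ → Type) [∀ i, Field (K i)]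

/-- Ideal of sequences vanishing almost everywhere. -/
def idl : Ideal (∀ i, K i) where
  carrier := {x | ∀ᶠ i in UU, x i = 0}
  add_mem' := by
    intro x y hx hy
    filter_upwards [hx, hy] with i h1 h2
    simp [h1, h2]
  zero_mem' := by simp
  smul_mem' := by
    intro c x hx
    filter_upwards [hx] with i h1
    simp [h1]

lemma mem_idl (x : ∀ i, K i) : x ∈ idl K ↔ ∀ᶠ i in UU, x i = 0 := Iff.rfl

instance idl_max : (idl K).IsMaximal := by
  rw [Ideal.isMaximal_iff]
  constructor
  · rw [mem_idl]
    simp [UU.neBot.ne]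
  · intro J x hJ hx hxJ
    have h1 : ∀ᶠ i in UU, x i ≠ 0 := uu_not.mpr hx
    have h2 : (fun i => (x i)⁻¹) * x ∈ J := J.mul_mem_left _ hxJ
    have h3 : 1 - (fun i => (x i)⁻¹) * x ∈ J := by
      apply hJ
      rw [mem_idl]
      filter_upwards [h1] with i hi
      simp [hi]
    have := J.add_mem h3 h2
    simpa using this

/-- The ultraproduct. -/
def Om : Type := (∀ i, K i) ⧸ idl K

noncomputable instance omField : Field (Om K) := Ideal.Quotient.field (idl K)

variable {K} in
/-- The class of a sequence. -/
noncomputable def mk : (∀ i, K i) →+* Om K := Ideal.Quotient.mk (idl K)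

variable {K}

lemma mk_surj : Function.Surjective (mk (K := K)) := Ideal.Quotient.mk_surjective

lemma mk_eq_zero {x : ∀ i, K i} : mk x = 0 ↔ ∀ᶠ i in UU, x i = 0 := by
  exact (Ideal.Quotient.eq_zero_iff_mem (I := idl K) (a := x))

lemma mk_eq {x y : ∀ i, K i} : mk x = mk y ↔ ∀ᶠ i in UU, x i = y i := by
  rw [← sub_eq_zero, ← map_sub, mk_eq_zero]
  simp [sub_eq_zero]

lemma mk_ne {x y : ∀ i, K i} : mk x ≠ mk y ↔ ∀ᶠ i in UU, x i ≠ y i := by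
  rw [Ne, mk_eq]
  exact uu_not.symm

instance [∀ i, IsAlgClosed (K i)] : IsAlgClosed (Om K) := by
  apply IsAlgClosed.of_exists_root
  intro P hP hirr
  have hlift : P ∈ lifts (mk (K := K)) := (mem_lifts _).mpr (map_surjective _ mk_surj P)
  obtain ⟨Q, hQ, hdeg, hmon⟩ := lifts_and_natDegree_eq_and_monic hlift hP
  have hd : 0 < P.natDegree := hirr.natDegree_pos
  have hroot : ∀ i, ∃ x : K i, (Q.map (Pi.evalRingHom K i)).eval x = 0 := by
    intro i
    apply IsAlgClosed.exists_root
    rw [degree_eq_natDegree (hmon.map _).ne_zero, hmon.natDegree_map, hdeg]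
    exact_mod_cast hd.ne'
  choose x hx using hroot
  refine ⟨mk x, ?_⟩
  have h1 : Q.eval x = 0 := by
    funext i
    have : Pi.evalRingHom K i (Q.eval x) = 0 := by
      rw [← hx i, eval_map, ← eval₂_hom]
      rfl
    exact this
  rw [← hQ, eval_map, eval₂_hom, h1, map_zero]

variable (p a : ℕ → ℕ) [∀ i, Fact (p i).Prime] [∀ i, CharP (K i) (p i)]

variable (K) in
/-- Frobenius on the product. -/
noncomputable def frp : (∀ i, K i) →+* (∀ i, K i) :=
  RingHom.pi fun i => (iterateFrobenius (K i) (p i) (a i)).comp (Pi.evalRingHom K i)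

lemma frp_apply (x : ∀ i, K i) (i : ℕ) : frp K p a x i = x i ^ (p i ^ a i) := rfl

variable (K) in
/-- Frobenius on the ultraproduct. -/
noncomputable def sg : Om K →+* Om K :=
  Ideal.Quotient.lift (idl K) ((mk (K := K)).comp (frp K p a)) (by
    intro x hx
    rw [RingHom.comp_apply, mk_eq_zero]
    rw [mem_idl] at hx
    filter_upwards [hx] with i hi
    rw [frp_apply, hi, zero_pow]
    exact pow_ne_zero _ (Fact.out : (p i).Prime).ne_zero)

lemma sg_mk (x : ∀ i, K i) : sg K p a (mk x) = mk (fun i => x i ^ (p i ^ a i)) := by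
  rfl

end Ultra
end Felgner

namespace Felgner
open Polynomial
section Irr

/-- Evaluation over a general ring. -/
noncomputable def evR {R : Type*} [CommRing R] (b w : R) : R[X][X] →+* R := eval₂RingHom (evalRingHom b) w

lemma ev_eq_evR {k : Type} [Field k] (b w : k) : ev b w = evR b w := rfl

lemma evR_map {R S : Type*} [CommRing R] [CommRing S] (φ : R →+* S) (b w : R) (P : R[X][X]) :
    evR (φ b) (φ w) (P.map (mapRingHom φ)) = φ (evR b w P) := by
  have : (evR (φ b) (φ w)).comp (mapRingHom (mapRingHom φ)) = φ.comp (evR b w) := by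
    ext
    · simp [evR]
    · simp [evR]
    · simp [evR]
  exact congrArg (fun g : R[X][X] →+* S => g P) this

lemma swap_coeff {R : Type*} [CommRing R] (G : R[X][X]) (m n : ℕ) :
    ((Bivariate.swap G).coeff n).coeff m = (G.coeff m).coeff n := by
  induction G using Polynomial.induction_on' with
  | add p q hp hq => simp [hp, hq]
  | monomial k a =>
    induction a using Polynomial.induction_on' with
    | add p q hp hq => simp [hp, hq]
    | monomial l a =>
      rw [Bivariate.swap_monomial_monomial]
      simp only [coeff_monomial]
      split_ifs <;> simp_all [coeff_monomial]

lemma swap_natDegree_le {R : Type*} [CommRing R] (G : R[X][X]) (N : ℕ) :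
    (Bivariate.swap G).natDegree ≤ N ↔ ∀ m, (G.coeff m).natDegree ≤ N := by
  constructor
  · intro h m
    rw [natDegree_le_iff_coeff_eq_zero]
    intro n hn
    rw [← swap_coeff, coeff_eq_zero_of_natDegree_lt (h.trans_lt hn), coeff_zero]
  · intro h
    rw [natDegree_le_iff_coeff_eq_zero]
    intro n hn
    ext m
    rw [swap_coeff, coeff_eq_zero_of_natDegree_lt ((h m).trans_lt hn), coeff_zero]

lemma factor_xdeg {R : Type*} [CommRing R] [IsDomain R] {f g h : R[X][X]} (hf : f ≠ 0) (he : g * h = f) {N : ℕ}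
    (hN : ∀ m, (f.coeff m).natDegree ≤ N) (m : ℕ) : (h.coeff m).natDegree ≤ N := by
  rw [← swap_natDegree_le] at hN
  refine (swap_natDegree_le h N).mp ?_ m
  have h0 : Bivariate.swap g * Bivariate.swap h = Bivariate.swap f := by rw [← map_mul, he]
  have hf' : Bivariate.swap f ≠ 0 := by simpa using hf
  rw [← h0] at hN hf'
  rw [natDegree_mul (left_ne_zero_of_mul hf') (right_ne_zero_of_mul hf')] at hN
  omega

/-- Polynomials over an algebraically closed subfield: descent of bivariate factors. -/
lemma poly_descent {A W : Type*} [Field A] [Infinite A] [Field W] (ι : A →+* W) (c : W[X])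
    (hc : ∀ x : A, c.eval (ι x) ∈ Set.range ι) : c ∈ lifts ι := by
  classical
  choose y hy using hc
  obtain ⟨s, hs⟩ := Infinite.exists_subset_card_eq A (c.natDegree + 1)
  rw [mem_lifts]
  refine ⟨Lagrange.interpolate s id y, ?_⟩
  have hinj : Set.InjOn (fun x : A => ι x) s := ι.injective.injOn
  apply eq_of_degrees_lt_of_eval_index_eq s hinj
  · rw [degree_map]
    exact Lagrange.degree_interpolate_lt _ (Set.injOn_id _)
  · rw [hs]
    exact degree_le_natDegree.trans_lt (by exact_mod_cast Nat.lt_succ_self _)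
  · intro i hi
    rw [← hy, eval_map, eval₂_hom]
    congr 1
    exact Lagrange.eval_interpolate_at_node (v := id) y (Set.injOn_id _) hi

lemma monic_dvd_lifts {A W : Type*} [Field A] [IsAlgClosed A] [Field W] (ι : A →+* W) (P : A[X]) (hP : P.Monic)
    (g : W[X]) (hg : g.Monic) (hd : g ∣ P.map ι) : g ∈ lifts ι := by
  have hs : (P.map ι).Splits := (IsAlgClosed.splits P).map ι
  have hgs : g.Splits := hs.of_dvd (hP.map ι).ne_zero hd
  apply hgs.mem_lift_of_roots_mem_range hg ι
  intro x hx
  have h1 : x ∈ (P.map ι).roots := Multiset.mem_of_le (roots.le_of_dvd (hP.map ι).ne_zero hd) hx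
  rw [(IsAlgClosed.splits P).roots_map] at h1
  obtain ⟨y, -, rfl⟩ := Multiset.mem_map.mp h1
  exact ⟨y, rfl⟩

lemma factor_descent {A W : Type*} [Field A] [IsAlgClosed A] [Field W] (ι : A →+* W) (f : A[X][X]) (hf : f.Monic)
    (g : W[X][X]) (hg : g.Monic) (hd : g ∣ f.map (mapRingHom ι)) : g ∈ lifts (mapRingHom ι) := by
  have : Infinite A := IsAlgClosed.instInfinite
  rw [lifts_iff_coeff_lifts]
  intro m
  have h1 : g.coeff m ∈ lifts ι := by
    apply poly_descent
    intro x
    have h2 : g.map (evalRingHom (ι x)) ∈ lifts ι := by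
      apply monic_dvd_lifts ι (f.map (evalRingHom x)) (hf.map _) _ (hg.map _)
      have h3 := map_dvd (mapRingHom (evalRingHom (ι x))) hd
      convert h3 using 1
      simp only [coe_mapRingHom]
      ext
      simp
    rw [lifts_iff_coeff_lifts] at h2
    simpa using h2 m
  rw [mem_lifts] at h1
  obtain ⟨q, hq⟩ := h1
  exact ⟨q, hq⟩

lemma irr_base_change {A W : Type*} [Field A] [IsAlgClosed A] [Field W] (ι : A →+* W) (f : A[X][X]) (hf : f.Monic)
    (hirr : Irreducible f) : Irreducible (f.map (mapRingHom ι)) := by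
  have hinj : Function.Injective (mapRingHom (mapRingHom ι)) :=
    map_injective _ (map_injective _ ι.injective)
  rw [(hf.map _).irreducible_iff_natDegree']
  refine ⟨?_, ?_⟩
  · intro h
    apply hirr.ne_one
    apply hinj
    simpa using h
  · intro g g' hg hg' hgg hmem
    obtain ⟨G, hG, hGd, hGm⟩ := lifts_and_natDegree_eq_and_monic
      (factor_descent ι f hf g hg (Dvd.intro _ hgg)) hg
    obtain ⟨G', hG', hGd', hGm'⟩ := lifts_and_natDegree_eq_and_monic
      (factor_descent ι f hf g' hg' (Dvd.intro_left _ hgg)) hg'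
    apply (hf.irreducible_iff_natDegree'.mp hirr).2 G G' hGm hGm'
    · apply hinj
      rw [map_mul]
      simp only [coe_mapRingHom, hG, hG', hgg]
    · rw [hGd']
      rwa [hf.natDegree_map] at hmem

end Irr

section Glue
variable {K : ℕ → Type} [∀ i, Field (K i)]

/-- Component of a polynomial over the product. -/
noncomputable def cp (i : ℕ) : (∀ i, K i)[X][X] →+* (K i)[X][X] := mapRingHom (mapRingHom (Pi.evalRingHom K i))

/-- Image of a polynomial in the ultraproduct. -/
noncomputable def um : (∀ i, K i)[X][X] →+* (Om K)[X][X] := mapRingHom (mapRingHom mk)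

lemma cp_coeff (i : ℕ) (P : (∀ i, K i)[X][X]) (m n : ℕ) : ((cp i P).coeff m).coeff n = (P.coeff m).coeff n i := by
  simp [cp]

lemma um_coeff (P : (∀ i, K i)[X][X]) (m n : ℕ) : ((um P).coeff m).coeff n = mk ((P.coeff m).coeff n) := by
  simp [um]

lemma um_surj : Function.Surjective (um (K := K)) := map_surjective _ (map_surjective _ mk_surj)

lemma um_eq_zero {P : (∀ i, K i)[X][X]} (h : um P = 0) : ∀ᶠ i in UU, cp i P = 0 := by
  have h1 : ∀ m ∈ Finset.range (P.natDegree + 1), ∀ n ∈ Finset.range ((P.coeff m).natDegree + 1),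
      ∀ᶠ i in UU, (P.coeff m).coeff n i = 0 := by
    intro m _ n _
    rw [← mk_eq_zero, ← um_coeff, h]
    simp
  have h2 : ∀ᶠ i in UU, ∀ m ∈ Finset.range (P.natDegree + 1), ∀ n ∈ Finset.range ((P.coeff m).natDegree + 1),
      (P.coeff m).coeff n i = 0 := by
    rw [Filter.eventually_all_finset]
    intro m hm
    rw [Filter.eventually_all_finset]
    intro n hn
    exact h1 m hm n hn
  filter_upwards [h2] with i hi
  ext m n
  rw [cp_coeff]
  by_cases hm : m < P.natDegree + 1
  · by_cases hn : n < (P.coeff m).natDegree + 1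
    · simpa using hi m (Finset.mem_range.mpr hm) n (Finset.mem_range.mpr hn)
    · rw [coeff_eq_zero_of_natDegree_lt (by omega)]
      simp
  · rw [coeff_eq_zero_of_natDegree_lt (p := P) (by omega)]
    simp

lemma um_eq {P Q : (∀ i, K i)[X][X]} (h : um P = um Q) : ∀ᶠ i in UU, cp i P = cp i Q := by
  have := um_eq_zero (P := P - Q) ((RingHom.map_sub um P Q).trans (by rw [h, sub_self]))
  filter_upwards [this] with i hi
  have h2 : cp i (P - Q) = cp i P - cp i Q := RingHom.map_sub (cp i) P Q
  rwa [h2, sub_eq_zero] at hi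

lemma um_eq_of {P Q : (∀ i, K i)[X][X]} (h : ∀ᶠ i in UU, cp i P = cp i Q) : um P = um Q := by
  ext m n
  rw [um_coeff, um_coeff, mk_eq]
  filter_upwards [h] with i hi
  rw [← cp_coeff, hi, cp_coeff]

lemma glue (G : ∀ i, (K i)[X][X]) (d N : ℕ) (hd : ∀ᶠ i in UU, (G i).natDegree ≤ d)
    (hN : ∀ᶠ i in UU, ∀ m, ((G i).coeff m).natDegree ≤ N) :
    ∃ P : (∀ i, K i)[X][X], ∀ᶠ i in UU, cp i P = G i := by
  refine ⟨∑ m ∈ Finset.range (d + 1), monomial m (∑ n ∈ Finset.range (N + 1),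
    monomial n (fun i => ((G i).coeff m).coeff n)), ?_⟩
  filter_upwards [hd, hN] with i h1 h2
  ext m n
  rw [cp_coeff]
  rw [finsetSum_coeff]
  simp only [coeff_monomial]
  rw [Finset.sum_ite_eq']
  split_ifs with hm
  · simp only [finsetSum_coeff, coeff_monomial]
    rw [Finset.sum_ite_eq']
    split_ifs with hn
    · rfl
    · rw [coeff_eq_zero_of_natDegree_lt]
      · rfl
      · have := h2 m
        simp at hn
        omega
  · rw [coeff_eq_zero_of_natDegree_lt (p := G i)]
    · simp
    · simp at hm
      omega

lemma cp_natDegree (F : (∀ i, K i)[X][X]) (hF : F.Monic) (i : ℕ) : (cp i F).natDegree = F.natDegree := by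
  unfold cp
  rw [coe_mapRingHom, hF.natDegree_map]

lemma cp_monic (F : (∀ i, K i)[X][X]) (hF : F.Monic) (i : ℕ) : (cp i F).Monic := hF.map _

lemma cp_coeff_natDegree (F : (∀ i, K i)[X][X]) (i m : ℕ) :
    ((cp i F).coeff m).natDegree ≤ (F.coeff m).natDegree := by
  unfold cp
  rw [coe_mapRingHom, coeff_map, coe_mapRingHom]
  exact natDegree_map_le

lemma exists_coeff_bound {R : Type*} [CommRing R] (F : R[X][X]) : ∃ N, ∀ m, (F.coeff m).natDegree ≤ N :=
  ⟨_, (swap_natDegree_le F _).mp le_rfl⟩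

lemma irr_eventually (F : (∀ i, K i)[X][X]) (hF : F.Monic) (hirr : Irreducible (um F)) :
    ∀ᶠ i in UU, Irreducible (cp i F) := by
  by_contra hcon
  rw [← uu_not] at hcon
  have hum : (um F).Monic := hF.map _
  have humd : (um F).natDegree = F.natDegree := hF.natDegree_map _
  have h1 : ∀ᶠ i in UU, cp i F ≠ 1 := by
    have : F.natDegree ≠ 0 := by
      intro h0
      exact hirr.ne_one (eq_one_of_monic_natDegree_zero hum (humd.trans h0))
    refine Filter.Eventually.of_forall fun i hi => this ?_
    rw [← cp_natDegree F hF i, hi, natDegree_one]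
  have h2 : ∀ᶠ i in UU, ∃ n ∈ Finset.Ioc 0 (F.natDegree / 2), ∃ g g' : (K i)[X][X], g.Monic ∧ g'.Monic ∧ g * g' = cp i F ∧
      g'.natDegree = n := by
    filter_upwards [hcon, h1] with i h2 h3
    rw [(cp_monic F hF i).irreducible_iff_natDegree'] at h2
    push Not at h2
    obtain ⟨g, g', h4, h5, h6, h7⟩ := h2 h3
    rw [cp_natDegree F hF] at h7
    exact ⟨_, h7, g, g', h4, h5, h6, rfl⟩
  have h3 := (Ultrafilter.eventually_exists_mem_iff (Finset.finite_toSet (Finset.Ioc 0 (F.natDegree / 2)))).mp h2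
  obtain ⟨n, hn, h4⟩ := h3
  have h5 : ∀ i, ∃ g g' : (K i)[X][X], (∃ g g' : (K i)[X][X], g.Monic ∧ g'.Monic ∧ g * g' = cp i F ∧
      g'.natDegree = n) → g.Monic ∧ g'.Monic ∧ g * g' = cp i F ∧ g'.natDegree = n := by
    intro i
    by_cases h : ∃ g g' : (K i)[X][X], g.Monic ∧ g'.Monic ∧ g * g' = cp i F ∧ g'.natDegree = n
    · obtain ⟨g, g', h⟩ := h
      exact ⟨g, g', fun _ => h⟩
    · exact ⟨0, 0, fun h' => (h h').elim⟩
  choose g g' hgg using h5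
  have h6 : ∀ᶠ i in UU, (g i).Monic ∧ (g' i).Monic ∧ g i * g' i = cp i F ∧ (g' i).natDegree = n :=
    h4.mono fun i hi => hgg i hi
  obtain ⟨N, hN⟩ := exists_coeff_bound F
  have hNi : ∀ i m, ((cp i F).coeff m).natDegree ≤ N := fun i m => (cp_coeff_natDegree F i m).trans (hN m)
  obtain ⟨G, hG⟩ := glue g F.natDegree N (by
      filter_upwards [h6] with i ⟨a1, a2, a3, a4⟩
      rw [← cp_natDegree F hF i, ← a3, a1.natDegree_mul a2]
      omega) (by
      filter_upwards [h6] with i ⟨a1, a2, a3, a4⟩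
      exact factor_xdeg (cp_monic F hF i).ne_zero (by rw [mul_comm, a3]) (hNi i))
  obtain ⟨G', hG'⟩ := glue g' F.natDegree N (by
      filter_upwards [h6] with i ⟨a1, a2, a3, a4⟩
      rw [← cp_natDegree F hF i, ← a3, a1.natDegree_mul a2]
      omega) (by
      filter_upwards [h6] with i ⟨a1, a2, a3, a4⟩
      exact factor_xdeg (cp_monic F hF i).ne_zero a3 (hNi i))
  have h7 : um G * um G' = um F := by
    rw [← map_mul]
    apply um_eq_of
    filter_upwards [hG, hG', h6] with i b1 b2 ⟨a1, a2, a3, a4⟩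
    rw [map_mul, b1, b2, a3]
  have hle : (um G').natDegree ≤ n := by
    rw [natDegree_le_iff_coeff_eq_zero]
    intro m hm
    ext l
    rw [um_coeff, coeff_zero, mk_eq_zero]
    filter_upwards [hG', h6] with i b2 ⟨a1, a2, a3, a4⟩
    rw [← cp_coeff, b2, coeff_eq_zero_of_natDegree_lt (p := g' i) (by omega), coeff_zero]
  have hco : (um G').coeff n = 1 := by
    ext l
    rw [um_coeff]
    have : ((1 : (Om K)[X]).coeff l) = mk ((1 : (∀ i, K i)[X]).coeff l) := by
      simp only [coeff_one]
      split_ifs <;> simp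
    rw [this, mk_eq]
    filter_upwards [hG', h6] with i b2 ⟨a1, a2, a3, a4⟩
    rw [← cp_coeff, b2, ← a4, coeff_natDegree, a2.leadingCoeff]
    simp only [coeff_one]
    split_ifs <;> simp
  have hmon : (um G').Monic := monic_of_natDegree_le_of_coeff_eq_one n hle hco
  have hnd : (um G').natDegree = n := natDegree_eq_of_le_of_coeff_ne_zero hle (by rw [hco]; exact one_ne_zero)
  have hmonG : (um G).Monic := hmon.of_mul_monic_right (h7 ▸ hum)
  refine (hum.irreducible_iff_natDegree'.mp hirr).2 _ _ hmonG hmon h7 ?_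
  rw [hnd, humd]
  exact hn

end Glue
end Felgner

namespace Felgner
open Polynomial
section ChebOm
variable {K : ℕ → Type} [∀ i, Field (K i)]

lemma evR_cp (i : ℕ) (P : (∀ i, K i)[X][X]) (b w : ∀ i, K i) : evR (b i) (w i) (cp i P) = (evR b w P) i :=
  evR_map (Pi.evalRingHom K i) b w P

lemma evR_um (P : (∀ i, K i)[X][X]) (b w : ∀ i, K i) : evR (mk b) (mk w) (um P) = mk (evR b w P) := by
  have := evR_map (R := ∀ i, K i) (S := Om K) mk b w P
  unfold um
  rw [coe_mapRingHom]
  exact this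

lemma eval_cp (i : ℕ) (P : (∀ i, K i)[X]) (b : ∀ i, K i) :
    (P.map (Pi.evalRingHom K i)).eval (b i) = (P.eval b) i := by
  rw [eval_map]
  exact eval₂_hom (p := P) (Pi.evalRingHom K i) b

lemma eval_um (P : (∀ i, K i)[X]) (b : ∀ i, K i) : (P.map mk).eval (mk b) = mk (P.eval b) := by
  rw [eval_map, eval₂_hom]

lemma evR_C {R : Type*} [CommRing R] (b w : R) (P : R[X]) : evR b w (C P) = P.eval b := by
  simp [evR]

lemma card_aux (d s t q : ℕ) (h1 : 8 * d * s ≤ q) (h2 : 8 * d * t ≤ q) (u : ℕ) (hu : u ≤ s + t) : 4 * d * u ≤ q := by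
  have : 4 * d * u ≤ 4 * d * (s + t) := Nat.mul_le_mul_left _ hu
  nlinarith

variable [∀ i, IsAlgClosed (K i)] (p a : ℕ → ℕ) [∀ i, Fact (p i).Prime] [∀ i, CharP (K i) (p i)]

lemma fixed_finite {k : Type} [Field k] (q : ℕ) (hq : 1 < q) : {b : k | b ^ q = b}.Finite := by
  have h0 : (X ^ q - X : k[X]) ≠ 0 := FiniteField.X_pow_card_sub_X_ne_zero k hq
  refine (X ^ q - X : k[X]).rootSet_finite k |>.subset ?_
  intro b hb
  rw [mem_rootSet]
  refine ⟨h0, ?_⟩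
  simp only [Set.mem_ofPred_eq] at hb
  simp [hb]

theorem chebOm (hq : ∀ n, ∀ᶠ i in UU, n ≤ p i ^ a i)
    {A : Type} [Field A] [IsAlgClosed A] [Countable A] (ι : A →+* Om K)
    (f : A[X][X]) (hf : f.Monic) (hirr : Irreducible f) (h : A[X]) (hh : h ≠ 0)
    (s t : A[X][X]) (hs : s * derivative f = C h + t * f)
    (D : ℕ) (hD : D ≤ f.natDegree) (r : Fin D → A[X][X])
    (cover : ∀ b w : Om K, sg K p a b = b → (h.map ι).eval b ≠ 0 → evR b w (f.map (mapRingHom ι)) = 0 →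
      ∃ j, (h.map ι).eval b * sg K p a w = evR b w ((r j).map (mapRingHom ι)))
    (j0 : Fin D) (Z : ∀ i, Set (K i))
    (hZ : ∀ n, ∀ᶠ i in UU, n * {b : K i | b ^ (p i ^ a i) = b ∧ b ∉ Z i}.ncard ≤ p i ^ a i) :
    ∃ (z : ∀ i, K i) (w : Om K), (∀ᶠ i in UU, z i ∈ Z i) ∧ mk z ∉ Set.range ι ∧ sg K p a (mk z) = mk z ∧
      (h.map ι).eval (mk z) ≠ 0 ∧ evR (mk z) w (f.map (mapRingHom ι)) = 0 ∧
      (h.map ι).eval (mk z) * sg K p a w = evR (mk z) w ((r j0).map (mapRingHom ι)) := by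
  classical
  -- lifting
  have hflift : f.map (mapRingHom ι) ∈ lifts (mapRingHom (mk (K := K))) :=
    (mem_lifts _).mpr (um_surj _)
  obtain ⟨F, hF0, hFd, hFm⟩ := lifts_and_natDegree_eq_and_monic hflift (hf.map _)
  rw [hf.natDegree_map] at hFd
  have hF : um F = f.map (mapRingHom ι) := hF0
  obtain ⟨H, hH⟩ := map_surjective mk mk_surj (h.map ι)
  choose R hR using fun j => um_surj (K := K) ((r j).map (mapRingHom ι))
  obtain ⟨S, hS⟩ := um_surj (K := K) (s.map (mapRingHom ι))
  obtain ⟨T, hT⟩ := um_surj (K := K) (t.map (mapRingHom ι))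
  choose y hy using fun x : A => mk_surj (K := K) (ι x)
  have hirr' : ∀ᶠ i in UU, Irreducible (cp i F) := by
    apply irr_eventually F hFm
    rw [hF]
    exact irr_base_change ι f hf hirr
  have hHne : ∀ᶠ i in UU, H.map (Pi.evalRingHom K i) ≠ 0 := by
    have : ∃ n, ∀ᶠ i in UU, H.coeff n i ≠ 0 := by
      by_contra hcon
      rw [not_exists] at hcon
      apply hh
      apply map_injective ι ι.injective
      rw [← hH, Polynomial.map_zero]
      ext n
      rw [coeff_map, coeff_zero, mk_eq_zero]
      by_contra hcon2
      exact hcon n (uu_not.mpr hcon2)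
    obtain ⟨n, hn⟩ := this
    filter_upwards [hn] with i hi h0
    apply hi
    have := congrArg (fun P => P.coeff n) h0
    simpa using this
  have hsep0 : ∀ᶠ i in UU, cp i (S * derivative F) = cp i (C H + T * F) := by
    apply um_eq
    have e1 : um (derivative F) = derivative (f.map (mapRingHom ι)) := by
      rw [← hF]
      exact (derivative_map F (mapRingHom (mk (K := K)))).symm
    have e2 : um (C H) = (C h).map (mapRingHom ι) := by
      rw [map_C, coe_mapRingHom, ← hH]
      exact map_C (mapRingHom (mk (K := K)))
    rw [map_mul, map_add, map_mul, e1, e2, hS, hT, hF, derivative_map, ← Polynomial.map_mul,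
      ← Polynomial.map_mul, ← Polynomial.map_add, hs]
  have hcover : ∀ᶠ i in UU, ∀ b w : K i, b ^ (p i ^ a i) = b → (H.map (Pi.evalRingHom K i)).eval b ≠ 0 →
      evR b w (cp i F) = 0 → ∃ j, (H.map (Pi.evalRingHom K i)).eval b * w ^ (p i ^ a i) = evR b w (cp i (R j)) := by
    by_contra hcon
    rw [← uu_not] at hcon
    have h1 : ∀ i, ∃ b w : K i, (¬ ∀ b w : K i, b ^ (p i ^ a i) = b → (H.map (Pi.evalRingHom K i)).eval b ≠ 0 →
      evR b w (cp i F) = 0 → ∃ j, (H.map (Pi.evalRingHom K i)).eval b * w ^ (p i ^ a i) = evR b w (cp i (R j))) →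
      b ^ (p i ^ a i) = b ∧ (H.map (Pi.evalRingHom K i)).eval b ≠ 0 ∧
      evR b w (cp i F) = 0 ∧ ∀ j, (H.map (Pi.evalRingHom K i)).eval b * w ^ (p i ^ a i) ≠ evR b w (cp i (R j)) := by
      intro i
      by_cases hc : ∀ b w : K i, b ^ (p i ^ a i) = b → (H.map (Pi.evalRingHom K i)).eval b ≠ 0 →
        evR b w (cp i F) = 0 → ∃ j, (H.map (Pi.evalRingHom K i)).eval b * w ^ (p i ^ a i) = evR b w (cp i (R j))
      · exact ⟨0, 0, fun h => (h hc).elim⟩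
      · have hc2 := hc
        push Not at hc2
        obtain ⟨b, w, h1, h2, h3, h4⟩ := hc2
        exact ⟨b, w, fun _ => ⟨h1, h2, h3, h4⟩⟩
    choose b w hbw using h1
    have h2 := hcon.mono fun i hi => hbw i hi
    obtain ⟨j, hj⟩ := cover (mk b) (mk w) (by
        rw [sg_mk, mk_eq]
        exact h2.mono fun i hi => hi.1) (by
        rw [← hH, eval_um, Ne, mk_eq_zero, ← uu_not]
        refine h2.mono fun i hi => ?_
        rw [← eval_cp]
        exact hi.2.1) (by
        rw [← hF, evR_um, mk_eq_zero]
        refine h2.mono fun i hi => ?_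
        rw [← evR_cp]
        exact hi.2.2.1)
    rw [← hH, eval_um, sg_mk, ← hR, evR_um, ← map_mul, mk_eq] at hj
    have h3 : ∀ᶠ (i : ℕ) in UU, False := by
      filter_upwards [h2, hj] with i hi hji
      apply hi.2.2.2 j
      rw [eval_cp, evR_cp]
      exact hji
    exact h3.exists.elim fun _ h => h
  -- bounds
  obtain ⟨e, he⟩ := exists_coeff_bound F
  choose N hN using fun j => exists_coeff_bound (R j)
  let c0 := H.natDegree + ∑ j, (N j + e * (R j).natDegree)
  obtain ⟨q0, hq0⟩ := chebotarev f.natDegree e c0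
  have main : ∀ (s : Finset A), ∀ᶠ i in UU, ∃ bw : K i × K i, bw.1 ∈ Z i ∧ bw.1 ^ (p i ^ a i) = bw.1 ∧
      (H.map (Pi.evalRingHom K i)).eval bw.1 ≠ 0 ∧ evR bw.1 bw.2 (cp i F) = 0 ∧
      (H.map (Pi.evalRingHom K i)).eval bw.1 * bw.2 ^ (p i ^ a i) = evR bw.1 bw.2 (cp i (R j0)) ∧
      ∀ x ∈ s, bw.1 ≠ y x i := by
    intro s
    filter_upwards [hirr', hHne, hsep0, hcover, hq q0, hq 2, hq (8 * f.natDegree * s.card), hZ (8 * f.natDegree)]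
      with i g1 g2 g3 g4 g5 g5' g6 g7
    have hfin : {b : K i | b ^ (p i ^ a i) = b ∧ b ∉ Z i}.Finite :=
      (fixed_finite (k := K i) (p i ^ a i) (by omega)).subset (fun b hb => hb.1)
    have hcard : (hfin.toFinset ∪ s.image (fun x => y x i)).card ≤
        {b : K i | b ^ (p i ^ a i) = b ∧ b ∉ Z i}.ncard + s.card := by
      refine (Finset.card_union_le _ _).trans (Nat.add_le_add ?_ Finset.card_image_le)
      rw [Set.ncard_eq_toFinset_card _ hfin]
    have hfm : (cp i F).Monic := cp_monic F hFm i
    have hfd : (cp i F).natDegree = f.natDegree := (cp_natDegree F hFm i).trans hFd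
    obtain ⟨b, w, k1, k2, k3, k4, k5⟩ := hq0 (K i) (p i) (a i) g5 (cp i F) hfm g1 hfd
      (by
        apply WG.of_natDegree
        intro m
        rcases lt_trichotomy m (cp i F).natDegree with hm | hm | hm
        · left
          have h1 : ((cp i F).coeff m).natDegree ≤ e := (cp_coeff_natDegree F i m).trans (he m)
          have h2 : e * (m + 1) ≤ e * (cp i F).natDegree := Nat.mul_le_mul_left _ hm
          have h3 : e * (m + 1) = e * m + e := by ring
          omega
        · left
          rw [hm, coeff_natDegree, hfm.leadingCoeff, natDegree_one, zero_add]
        · right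
          exact coeff_eq_zero_of_natDegree_lt hm)
      (H.map (Pi.evalRingHom K i)) g2 (natDegree_map_le.trans (Nat.le_add_right _ _)) D hD
      (fun j => cp i (R j))
      (by
        intro j
        apply WG.of_natDegree
        intro m
        rcases le_or_gt m (R j).natDegree with hm | hm
        · left
          have h1 : ((cp i (R j)).coeff m).natDegree ≤ N j := (cp_coeff_natDegree (R j) i m).trans (hN j m)
          have h2 : e * m ≤ e * (R j).natDegree := Nat.mul_le_mul_left _ hm
          have h3 : N j + e * (R j).natDegree ≤ ∑ j, (N j + e * (R j).natDegree) :=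
            Finset.single_le_sum (f := fun j => N j + e * (R j).natDegree) (fun _ _ => Nat.zero_le _) (Finset.mem_univ j)
          change _ ≤ H.natDegree + ∑ j, (N j + e * (R j).natDegree)
          omega
        · right
          apply coeff_eq_zero_of_natDegree_lt
          exact natDegree_map_le.trans_lt hm)
      (by
        intro b w hb hw h0
        have g3' := congrArg (ev b w) g3
        have e1 : cp i (derivative F) = derivative (cp i F) := (derivative_map F _).symm
        have e2 : cp i (C H) = C (H.map (Pi.evalRingHom K i)) := map_C _
        rw [map_mul, map_mul, e1, h0, mul_zero, map_add, map_mul, map_add, map_mul, hw, mul_zero, add_zero, e2,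
          ev_eq_evR, evR_C] at g3'
        exact hb g3'.symm)
      (by
        intro b w h1 h2 h3
        exact g4 b w h1 h2 h3)
      j0 (hfin.toFinset ∪ s.image (fun x => y x i)) (card_aux _ _ _ _ g7 g6 _ hcard)
    refine ⟨(b, w), ?_, k1, k3, k4, k5, ?_⟩
    · by_contra hb
      exact k2 (Finset.mem_union_left _ (by simpa using ⟨k1, hb⟩))
    · intro x hx hb
      exact k2 (Finset.mem_union_right _ (Finset.mem_image.mpr ⟨x, hx, hb.symm⟩))
  obtain ⟨z, hz⟩ := saturation (J := Option A) (S := fun i => K i × K i)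
    (fun o i bw => bw.1 ∈ Z i ∧ bw.1 ^ (p i ^ a i) = bw.1 ∧
      (H.map (Pi.evalRingHom K i)).eval bw.1 ≠ 0 ∧ evR bw.1 bw.2 (cp i F) = 0 ∧
      (H.map (Pi.evalRingHom K i)).eval bw.1 * bw.2 ^ (p i ^ a i) = evR bw.1 bw.2 (cp i (R j0)) ∧
      ∀ x, o = some x → bw.1 ≠ y x i) (by
    intro s
    filter_upwards [main (Finset.eraseNone s)] with i ⟨bw, h1, h2, h3, h4, h5, h6⟩
    refine ⟨bw, fun o ho => ⟨h1, h2, h3, h4, h5, ?_⟩⟩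
    rintro x rfl
    exact h6 x (Finset.mem_eraseNone.mpr ho))
  refine ⟨fun i => (z i).1, mk fun i => (z i).2, (hz none).mono fun i hi => hi.1, ?_, ?_, ?_, ?_, ?_⟩
  · rintro ⟨x, hx⟩
    rw [← hy x, eq_comm, mk_eq] at hx
    have h3 : ∀ᶠ (i : ℕ) in UU, False := by
      filter_upwards [hz (some x), hx] with i h1 h2
      exact h1.2.2.2.2.2 x rfl h2
    exact h3.exists.elim fun _ h => h
  · rw [sg_mk, mk_eq]
    exact (hz none).mono fun i hi => hi.2.1
  · rw [← hH, eval_um, Ne, mk_eq_zero, ← uu_not]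
    refine (hz none).mono fun i hi => ?_
    rw [← eval_cp]
    exact hi.2.2.1
  · rw [← hF, evR_um, mk_eq_zero]
    refine (hz none).mono fun i hi => ?_
    rw [← evR_cp]
    exact hi.2.2.2.1
  · rw [← hH, eval_um, sg_mk, ← hR, evR_um, ← map_mul, mk_eq]
    refine (hz none).mono fun i hi => ?_
    rw [← evR_cp, ← hi.2.2.2.2.1, eval_cp i H (fun i => (z i).1)]
    rfl

end ChebOm
end Felgner

namespace Felgner
open Polynomial
section Periodic

/-- Every element is periodic under the endomorphism. -/
def Per {R : Type*} [CommRing R] (τ : R →+* R) : Prop := ∀ x, ∃ n, 0 < n ∧ (τ ^ n) x = x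

lemma per_mul {R : Type*} [CommRing R] (τ : R →+* R) {n : ℕ} {x : R} (h : (τ ^ n) x = x) (m : ℕ) :
    (τ ^ (n * m)) x = x := by
  rw [pow_mul]
  induction m with
  | zero => simp
  | succ m ih => rw [pow_succ, RingHom.mul_def, RingHom.comp_apply, h, ih]

lemma per_two {R : Type*} [CommRing R] {τ : R →+* R} {x y : R} (hx : ∃ n, 0 < n ∧ (τ ^ n) x = x)
    (hy : ∃ n, 0 < n ∧ (τ ^ n) y = y) : ∃ n, 0 < n ∧ (τ ^ n) x = x ∧ (τ ^ n) y = y := by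
  obtain ⟨n, hn, hx⟩ := hx
  obtain ⟨m, hm, hy⟩ := hy
  refine ⟨n * m, Nat.mul_pos hn hm, per_mul τ hx m, ?_⟩
  rw [mul_comm]
  exact per_mul τ hy n

lemma per_add {R : Type*} [CommRing R] {τ : R →+* R} {x y : R} (hx : ∃ n, 0 < n ∧ (τ ^ n) x = x)
    (hy : ∃ n, 0 < n ∧ (τ ^ n) y = y) : ∃ n, 0 < n ∧ (τ ^ n) (x + y) = x + y := by
  obtain ⟨n, hn, h1, h2⟩ := per_two hx hy
  exact ⟨n, hn, by rw [map_add, h1, h2]⟩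

lemma mapRingHom_pow {R : Type*} [CommRing R] (τ : R →+* R) (n : ℕ) : (mapRingHom τ) ^ n = mapRingHom (τ ^ n) := by
  induction n with
  | zero => ext <;> simp
  | succ n ih =>
    rw [pow_succ, ih, pow_succ, RingHom.mul_def, RingHom.mul_def, mapRingHom_comp]

lemma per_poly {R : Type*} [CommRing R] {τ : R →+* R} (h : Per τ) : Per (mapRingHom τ) := by
  intro P
  induction P using Polynomial.induction_on' with
  | add p q hp hq => exact per_add hp hq
  | monomial k c =>
    obtain ⟨n, hn, hc⟩ := h c
    exact ⟨n, hn, by rw [mapRingHom_pow, coe_mapRingHom, map_monomial, hc]⟩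

lemma pow_comm_hom {R S : Type*} [CommRing R] [CommRing S] (τ : R →+* R) (σ : S →+* S) (g : R →+* S)
    (h : ∀ x, σ (g x) = g (τ x)) (n : ℕ) (x : R) : (σ ^ n) (g x) = g ((τ ^ n) x) := by
  induction n generalizing x with
  | zero => simp
  | succ n ih =>
    rw [pow_succ, pow_succ, RingHom.mul_def, RingHom.mul_def, RingHom.comp_apply, RingHom.comp_apply, h, ih]

lemma per_frac {R Q : Type*} [CommRing R] [Field Q] [Algebra R Q] [IsDomain R] [IsFractionRing R Q] {τ : R →+* R}
    (h : Per τ) (σQ : Q →+* Q) (hQ : ∀ x, σQ (algebraMap R Q x) = algebraMap R Q (τ x)) : Per σQ := by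
  intro x
  obtain ⟨a, b, hb, rfl⟩ := IsFractionRing.div_surjective (A := R) x
  obtain ⟨n, hn, h1, h2⟩ := per_two (h a) (h b)
  refine ⟨n, hn, ?_⟩
  rw [map_div₀, pow_comm_hom τ σQ (algebraMap R Q) hQ, pow_comm_hom τ σQ (algebraMap R Q) hQ, h1, h2]

/-- the endomorphism sends roots to roots of the twisted polynomial -/
lemma eval_twist {R S : Type*} [CommRing R] [CommRing S] [Algebra R S] (τ : R →+* R) (σ : S →+* S)
    (h : ∀ x, σ (algebraMap R S x) = algebraMap R S (τ x)) (P : R[X]) (y : S) :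
    σ (aeval y P) = aeval (σ y) (P.map τ) := by
  induction P using Polynomial.induction_on' with
  | add p q hp hq => simp [hp, hq]
  | monomial k c => simp [aeval_monomial, h]

lemma per_alg {Q M : Type*} [Field Q] [Field M] [Algebra Q M] {σQ : Q →+* Q} (h : Per σQ) (σM : M →+* M)
    (hM : ∀ x, σM (algebraMap Q M x) = algebraMap Q M (σQ x)) (x : M) (hx : IsAlgebraic Q x) :
    ∃ n, 0 < n ∧ (σM ^ n) x = x := by
  obtain ⟨P, hP0, hP⟩ := hx
  obtain ⟨n, hn, hn2⟩ := per_poly h P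
  rw [mapRingHom_pow, coe_mapRingHom] at hn2
  have hstep : ∀ y, aeval y P = 0 → aeval ((σM ^ n) y) P = 0 := by
    intro y hy
    have := eval_twist (σQ ^ n) (σM ^ n) (fun x => pow_comm_hom σQ σM (algebraMap Q M) hM n x) P y
    rw [hy, map_zero, hn2] at this
    exact this.symm
  have hall : ∀ k, aeval ((σM ^ (n * k)) x) P = 0 := by
    intro k
    induction k with
    | zero => simpa using hP
    | succ k ih =>
      have := hstep _ ih
      rw [Nat.mul_succ, Nat.add_comm, pow_add, RingHom.mul_def, RingHom.comp_apply]
      exact this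
  have hfin : (P.rootSet M).Finite := P.rootSet_finite M
  obtain ⟨k, -, l, -, hkl, he⟩ := Set.infinite_univ.exists_lt_map_eq_of_mapsTo (f := fun k : ℕ => (σM ^ (n * k)) x)
    (t := P.rootSet M) (fun k _ => (mem_rootSet.mpr ⟨hP0, hall k⟩)) hfin
  refine ⟨n * l - n * k, ?_, ?_⟩
  · have : n * k < n * l := Nat.mul_lt_mul_of_pos_left hkl hn
    omega
  · apply (σM ^ (n * k)).injective
    rw [← RingHom.comp_apply, ← RingHom.mul_def, ← pow_add, Nat.add_sub_cancel' (Nat.mul_le_mul_left n hkl.le)]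
    exact he.symm

lemma exists_galois {Q M : Type*} [Field Q] [Field M] [Algebra Q M] [IsAlgClosed M] [Algebra.IsAlgebraic Q M]
    {σQ : Q →+* Q} (h : Per σQ) (σM : M →+* M)
    (hM : ∀ x, σM (algebraMap Q M x) = algebraMap Q M (σQ x)) (T : Finset M) (hT : ∀ t ∈ T, IsSeparable Q t) :
    ∃ L : IntermediateField Q M, FiniteDimensional Q L ∧ Normal Q L ∧ Algebra.IsSeparable Q L ∧ (∀ t ∈ T, t ∈ L) ∧
      ∀ x ∈ L, σM x ∈ L := by
  classical
  let P := ∏ t ∈ T, minpoly Q t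
  obtain ⟨N, hN, hN2⟩ := per_poly h P
  rw [mapRingHom_pow, coe_mapRingHom] at hN2
  let F := ∏ n ∈ Finset.range N, P.map (σQ ^ n)
  have hPm : P.Monic := monic_prod_of_monic _ _ fun t _ => minpoly.monic (Algebra.IsIntegral.isIntegral t)
  have hFm : F.Monic := monic_prod_of_monic _ _ fun n _ => hPm.map _
  have hFσ : F.map σQ = F := by
    have e1 : F.map σQ = ∏ n ∈ Finset.range N, P.map (σQ ^ (n + 1)) := by
      simp only [F, Polynomial.map_prod, Polynomial.map_map]
      refine Finset.prod_congr rfl fun n _ => ?_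
      rw [pow_succ', RingHom.mul_def]
    have e2 := Finset.prod_range_succ (fun n => P.map (σQ ^ n)) N
    rw [Finset.prod_range_succ', hN2, pow_zero, RingHom.one_def, Polynomial.map_id] at e2
    rw [e1]
    exact mul_right_cancel₀ hPm.ne_zero e2
  have hspl : (F.map (algebraMap Q M)).Splits := IsAlgClosed.splits _
  have hroot : ∀ x ∈ F.rootSet M, IsSeparable Q x := by
    intro x hx
    have hx2 := (mem_rootSet.mp hx).2
    simp only [F, P, Polynomial.map_prod, map_prod, Finset.prod_eq_zero_iff] at hx2
    obtain ⟨n, -, t, ht, h0⟩ := hx2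
    have hs : ((minpoly Q t).map (σQ ^ n)).Separable := Polynomial.Separable.map (hT t ht)
    exact hs.of_dvd (minpoly.dvd _ _ h0)
  have hI := IntermediateField.adjoin_rootSet_isSplittingField hspl
  refine ⟨IntermediateField.adjoin Q (F.rootSet M), IsSplittingField.finiteDimensional _ F,
    Normal.of_isSplittingField F, (IntermediateField.isSeparable_adjoin_iff_isSeparable Q M).mpr hroot, ?_, ?_⟩
  · intro t ht
    apply IntermediateField.subset_adjoin
    rw [mem_rootSet]
    refine ⟨hFm.ne_zero, ?_⟩
    simp only [F, P, map_prod]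
    apply Finset.prod_eq_zero (Finset.mem_range.mpr hN)
    rw [pow_zero, RingHom.one_def, Polynomial.map_id, map_prod]
    exact Finset.prod_eq_zero ht (minpoly.aeval Q t)
  · intro x hx
    induction hx using IntermediateField.adjoin_induction with
    | mem x hx =>
      apply IntermediateField.subset_adjoin
      have hx2 := (mem_rootSet.mp hx).2
      rw [mem_rootSet]
      refine ⟨hFm.ne_zero, ?_⟩
      have := eval_twist σQ σM hM F x
      rw [hx2, map_zero, hFσ] at this
      exact this.symm
    | algebraMap x => rw [hM]; exact IntermediateField.algebraMap_mem _ _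
    | add x y hx hy h1 h2 => rw [map_add]; exact add_mem h1 h2
    | inv x hx h1 => rw [map_inv₀]; exact inv_mem h1
    | mul x y hx hy h1 h2 => rw [map_mul]; exact mul_mem h1 h2

/-- A primitive integral generator of a stable Galois extension containing the given elements. -/
lemma exists_prim {R Q M : Type*} [CommRing R] [IsDomain R] [Field Q] [Algebra R Q] [IsFractionRing R Q]
    [Field M] [Algebra Q M] [Algebra R M] [IsScalarTower R Q M] [IsAlgClosed M] [Algebra.IsAlgebraic Q M]
    {σQ : Q →+* Q} (h : Per σQ) (σM : M →+* M)
    (hM : ∀ x, σM (algebraMap Q M x) = algebraMap Q M (σQ x)) (T : Finset M) (hT : ∀ t ∈ T, IsSeparable Q t) :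
    ∃ y : M, IsIntegral R y ∧ IsSeparable Q y ∧ (∀ t ∈ T, t ∈ IntermediateField.adjoin Q {y}) ∧
      ∀ x, aeval x (minpoly Q y) = 0 → σM x ∈ IntermediateField.adjoin Q {y} := by
  obtain ⟨L, h1, h2, h3, h4, h5⟩ := exists_galois h σM hM T hT
  obtain ⟨α, hα⟩ := Field.exists_primitive_element Q L
  have hαL : IntermediateField.adjoin Q {(α : M)} = L := by
    rw [← IntermediateField.lift_adjoin_simple, hα, IntermediateField.lift_top]
  have halg : IsAlgebraic R (α : M) := by
    rw [IsFractionRing.isAlgebraic_iff R Q M]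
    exact Algebra.IsAlgebraic.isAlgebraic _
  obtain ⟨d, hd, hIntg⟩ := halg.exists_integral_multiple
  have hdQ : algebraMap R Q d ≠ 0 := by
    rwa [Ne, IsFractionRing.to_map_eq_zero_iff]
  have hdy : d • (α : M) = algebraMap Q M (algebraMap R Q d) * α := by
    rw [Algebra.smul_def, IsScalarTower.algebraMap_apply R Q M]
  have hyL : d • (α : M) ∈ L := by
    rw [hdy]
    exact mul_mem (IntermediateField.algebraMap_mem _ _) α.2
  have hLy : IntermediateField.adjoin Q {d • (α : M)} = L := by
    apply le_antisymm
    · rw [IntermediateField.adjoin_simple_le_iff]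
      exact hyL
    · refine hαL.symm.le.trans ?_
      rw [IntermediateField.adjoin_simple_le_iff]
      have e : (α : M) = (algebraMap Q M (algebraMap R Q d))⁻¹ * (d • (α : M)) := by
        rw [hdy, inv_mul_cancel_left₀]
        simpa using hdQ
      have e2 : (algebraMap Q M (algebraMap R Q d))⁻¹ * (d • (α : M)) ∈ IntermediateField.adjoin Q {d • (α : M)} :=
        mul_mem (inv_mem (IntermediateField.algebraMap_mem _ _)) (IntermediateField.mem_adjoin_simple_self _ _)
      rwa [← e] at e2
  refine ⟨d • (α : M), hIntg, ?_, ?_, ?_⟩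
  · have := h3.isSeparable' ⟨_, hyL⟩
    unfold IsSeparable at this ⊢
    rwa [IntermediateField.minpoly_eq] at this
  · rw [hLy]
    exact h4
  · rw [hLy]
    intro x hx
    apply h5
    have hs := h2.splits ⟨_, hyL⟩
    rw [IntermediateField.splits_iff_mem (IsAlgClosed.splits _)] at hs
    apply hs
    rw [IntermediateField.minpoly_eq, mem_rootSet]
    exact ⟨minpoly.ne_zero (Algebra.IsIntegral.isIntegral _), hx⟩

lemma clear_denom {R Q M : Type*} [CommRing R] [IsDomain R] [Field Q] [Algebra R Q] [IsFractionRing R Q]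
    [Field M] [Algebra Q M] [Algebra R M] [IsScalarTower R Q M] [Algebra.IsAlgebraic Q M] (y x : M)
    (hx : x ∈ IntermediateField.adjoin Q {y}) : ∃ h : R, h ≠ 0 ∧ ∃ r : R[X], algebraMap R M h * x = aeval y r := by
  have hx2 : x ∈ (IntermediateField.adjoin Q {y}).toSubalgebra := hx
  rw [IntermediateField.adjoin_simple_toSubalgebra_of_isAlgebraic (Algebra.IsAlgebraic.isAlgebraic y)] at hx2
  rw [Algebra.adjoin_singleton_eq_range_aeval] at hx2
  obtain ⟨g, hg⟩ := hx2
  obtain ⟨b, hb, hb2⟩ := IsLocalization.integerNormalization_spec (nonZeroDivisors R) g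
  refine ⟨b, nonZeroDivisors.ne_zero hb, IsLocalization.integerNormalization (nonZeroDivisors R) g, ?_⟩
  have := congrArg (aeval y) hb2
  rw [aeval_map_algebraMap] at this
  rw [this, ← hg, ← algebraMap_smul Q b g, map_smul, Algebra.smul_def, ← IsScalarTower.algebraMap_apply R Q M]
  rfl

lemma clear_denoms {R Q M : Type*} [CommRing R] [IsDomain R] [Field Q] [Algebra R Q] [IsFractionRing R Q]
    [Field M] [Algebra Q M] [Algebra R M] [IsScalarTower R Q M] [Algebra.IsAlgebraic Q M] (y : M)
    {J : Type*} [Fintype J] (x : J → M)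
    (hx : ∀ j, x j ∈ IntermediateField.adjoin Q {y}) :
    ∃ h : R, h ≠ 0 ∧ ∃ r : J → R[X], ∀ j, algebraMap R M h * x j = aeval y (r j) := by
  classical
  choose h hh r hr using fun j => clear_denom (R := R) y (x j) (hx j)
  refine ⟨∏ j, h j, Finset.prod_ne_zero_iff.mpr fun j _ => hh j,
    fun j => C (∏ i ∈ Finset.univ.erase j, h i) * r j, fun j => ?_⟩
  rw [← Finset.mul_prod_erase Finset.univ h (Finset.mem_univ j), map_mul, map_mul, aeval_C, ← hr]
  ring

end Periodic
end Felgner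

namespace Felgner
open Polynomial
section FinStep

lemma exists_fin_roots {M : Type*} [Field M] [IsAlgClosed M] (P : M[X]) (hP : P.Monic) (d : ℕ) (hd : P.natDegree = d) :
    ∃ ρ : Fin d → M, P = ∏ j, (X - C (ρ j)) := by
  have hs : P.Splits := IsAlgClosed.splits P
  have hlen : P.roots.toList.length = d := by
    rw [Multiset.length_toList, ← hs.natDegree_eq_card_roots, hd]
  refine ⟨fun j => P.roots.toList.get (Fin.cast hlen.symm j), ?_⟩
  subst hlen
  conv_lhs => rw [hs.eq_prod_roots_of_monic hP]
  rw [← Multiset.coe_toList P.roots]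
  simp only [Multiset.map_coe, Multiset.prod_coe, Fin.cast_eq_self]
  rw [← List.prod_ofFn]
  congr 1
  apply List.ext_getElem
  · simp
  · intro n h1 h2
    simp

lemma cover_aux {R M W : Type*} [CommRing R] [Field M] [Algebra R M] [Field W] (τ : R →+* R) (σM : M →+* M)
    (hM : ∀ x, σM (algebraMap R M x) = algebraMap R M (τ x)) (y : M) (f : R[X]) (d : ℕ)
    (hdiv : ∀ g : R[X], aeval y g = 0 → f ∣ g) (ρ : Fin d → M)
    (hρ : f.map (algebraMap R M) = ∏ j, (X - C (ρ j))) (h : R) (r : Fin d → R[X])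
    (hr : ∀ j, algebraMap R M h * σM (ρ j) = aeval y (r j)) (θ : R →+* W) (σ : W →+* W)
    (hθ : ∀ x, σ (θ x) = θ (τ x)) (w : W) (hw : f.eval₂ θ w = 0) :
    ∃ j, θ h * σ w = (r j).eval₂ θ w := by
  let G : R[X][X] := ∏ j, (C (C h) * X - C (r j)) - C (C h) ^ d * (f.map τ).map C
  have e1 : G.map (aeval y : R[X] →ₐ[R] M).toRingHom = 0 := by
    have e2 : (f.map τ).map (algebraMap R M) = ∏ j, (X - C (σM (ρ j))) := by
      have := congrArg (Polynomial.map σM) hρ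
      rw [Polynomial.map_map, Polynomial.map_prod] at this
      simp only [Polynomial.map_sub, map_X, map_C] at this
      rw [← this, Polynomial.map_map]
      congr 1
      ext x
      exact (hM x).symm
    have e3 : (aeval y : R[X] →ₐ[R] M).toRingHom.comp C = algebraMap R M := by
      ext x
      simp
    simp only [G, Polynomial.map_sub, Polynomial.map_prod, Polynomial.map_mul, Polynomial.map_pow, map_X, map_C]
    rw [Polynomial.map_map, e3, e2]
    have e4 : ∀ j, (C ((aeval y : R[X] →ₐ[R] M).toRingHom (C h)) * X - C ((aeval y : R[X] →ₐ[R] M).toRingHom (r j)) : M[X]) =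
        C (algebraMap R M h) * (X - C (σM (ρ j))) := by
      intro j
      have e5 : (aeval y : R[X] →ₐ[R] M).toRingHom (r j) = algebraMap R M h * σM (ρ j) := (hr j).symm
      have e6 : (aeval y : R[X] →ₐ[R] M).toRingHom (C h) = algebraMap R M h := by simp
      rw [e5, e6, C_mul]
      ring
    simp only [e4]
    rw [Finset.prod_mul_distrib, Finset.prod_const, Finset.card_univ, Fintype.card_fin]
    simp
  have e7 : G.map (eval₂RingHom θ w) = 0 := by
    ext n
    rw [coeff_map, coeff_zero]
    have : aeval y (G.coeff n) = 0 := by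
      have := congrArg (fun P => P.coeff n) e1
      simpa using this
    obtain ⟨t, ht⟩ := hdiv _ this
    rw [ht, map_mul, coe_eval₂RingHom, hw, zero_mul]
  have e8 : (f.map τ).eval₂ θ (σ w) = 0 := by
    rw [eval₂_map]
    have : σ (f.eval₂ θ w) = f.eval₂ (θ.comp τ) (σ w) := by
      rw [hom_eval₂]
      congr 1
      ext x
      exact hθ x
    rw [← this, hw, map_zero]
  have e9 := congrArg (Polynomial.eval (σ w)) e7
  have e10 : (eval₂RingHom θ w).comp C = θ := by
    ext x
    simp
  simp only [G, Polynomial.map_sub, Polynomial.map_prod, Polynomial.map_mul, Polynomial.map_pow, map_X, map_C,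
    eval_sub, eval_prod, eval_mul, eval_pow, eval_C, eval_X, eval_zero] at e9
  rw [Polynomial.map_map, e10, eval_map, e8, mul_zero, sub_zero, Finset.prod_eq_zero_iff] at e9
  obtain ⟨j, -, hj⟩ := e9
  refine ⟨j, ?_⟩
  rw [sub_eq_zero] at hj
  simpa using hj

lemma extend_hom {R Q M W : Type*} [CommRing R] [IsDomain R] [IsIntegrallyClosed R] [Field Q] [Algebra R Q]
    [IsFractionRing R Q] [Field M] [Algebra Q M] [Algebra R M] [IsScalarTower R Q M] [Algebra.IsAlgebraic Q M]
    [Field W] [IsAlgClosed W] (θ : R →+* W) (hθ : Function.Injective θ) (y : M) (hy : IsIntegral R y) (w : W)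
    (hw : (minpoly R y).eval₂ θ w = 0) :
    ∃ χ : M →+* W, (∀ x, χ (algebraMap R M x) = θ x) ∧ χ y = w := by
  let _ : Algebra Q W := (IsFractionRing.lift (K := Q) hθ).toAlgebra
  have hal : ∀ x, algebraMap Q W (algebraMap R Q x) = θ x := fun x => IsFractionRing.lift_algebraMap hθ x
  obtain ⟨χ, hχ⟩ := IntermediateField.exists_algHom_of_splits_of_aeval (F := Q) (E := M) (K := W)
    (fun s => ⟨Algebra.IsIntegral.isIntegral s, IsAlgClosed.splits _⟩) (x := y) (y := w) (by
      rw [minpoly.isIntegrallyClosed_eq_field_fractions' Q hy, aeval_def, eval₂_map]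
      have : (algebraMap Q W).comp (algebraMap R Q) = θ := by
        ext x
        exact hal x
      rw [this, hw])
  refine ⟨χ.toRingHom, fun x => ?_, hχ⟩
  rw [IsScalarTower.algebraMap_apply R Q M]
  exact (χ.commutes _).trans (hal x)

lemma commute_adjoin {R Q M W : Type*} [CommRing R] [IsDomain R] [Field Q] [Algebra R Q]
    [IsFractionRing R Q] [Field M] [Algebra Q M] [Algebra R M] [IsScalarTower R Q M]
    [Field W] (τ : R →+* R) (σM : M →+* M) (hM : ∀ x, σM (algebraMap R M x) = algebraMap R M (τ x))
    (θ : R →+* W) (σ : W →+* W) (hθ : ∀ x, σ (θ x) = θ (τ x)) (χ : M →+* W) (hχ : ∀ x, χ (algebraMap R M x) = θ x)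
    (y : M) (hy : χ (σM y) = σ (χ y)) (x : M) (hx : x ∈ IntermediateField.adjoin Q {y}) :
    χ (σM x) = σ (χ x) := by
  induction hx using IntermediateField.adjoin_induction with
  | mem x hx =>
    rw [Set.mem_singleton_iff] at hx
    rw [hx, hy]
  | algebraMap x =>
    obtain ⟨a, b, hb, rfl⟩ := IsFractionRing.div_surjective (A := R) x
    rw [map_div₀, ← IsScalarTower.algebraMap_apply, ← IsScalarTower.algebraMap_apply]
    simp only [map_div₀, hM, hχ, hθ]
  | add x y hx hy h1 h2 => simp only [map_add, h1, h2]
  | inv x hx h1 => simp only [map_inv₀, h1]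
  | mul x y hx hy h1 h2 => simp only [map_mul, h1, h2]

lemma theta_inj {A W : Type*} [Field A] [IsAlgClosed A] [Field W] (ι : A →+* W) (b : W) (hb : b ∉ Set.range ι) :
    Function.Injective (eval₂RingHom ι b) := by
  rw [injective_iff_map_eq_zero]
  intro P hP
  by_contra h0
  apply hb
  have hm : b ∈ (P.map ι).roots := by
    rw [mem_roots ((Polynomial.map_ne_zero_iff ι.injective).mpr h0), IsRoot, eval_map]
    exact hP
  rw [(IsAlgClosed.splits P).roots_map] at hm
  obtain ⟨y, -, rfl⟩ := Multiset.mem_map.mp hm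
  exact ⟨y, rfl⟩

lemma evR_eq {A W : Type*} [CommRing A] [CommRing W] (ι : A →+* W) (b w : W) (g : A[X][X]) :
    evR b w (g.map (mapRingHom ι)) = g.eval₂ (eval₂RingHom ι b) w := by
  unfold evR
  rw [coe_eval₂RingHom, eval₂_map]
  congr 1
  ext <;> simp

variable {K : ℕ → Type} [∀ i, Field (K i)] [∀ i, IsAlgClosed (K i)]
  (p a : ℕ → ℕ) [∀ i, Fact (p i).Prime] [∀ i, CharP (K i) (p i)]

theorem fin_step_sep (hq : ∀ n, ∀ᶠ i in UU, n ≤ p i ^ a i)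
    {A Q M : Type} [Field A] [IsAlgClosed A] [Countable A] [Field Q] [Algebra A[X] Q] [IsFractionRing A[X] Q]
    [Field M] [IsAlgClosed M] [Algebra Q M] [Algebra A[X] M] [IsScalarTower A[X] Q M] [Algebra.IsAlgebraic Q M]
    (τ : A →+* A) (hper : Per τ) (σQ : Q →+* Q) (hQ : ∀ P, σQ (algebraMap A[X] Q P) = algebraMap A[X] Q (P.map τ))
    (σM : M →+* M) (hM : ∀ x, σM (algebraMap Q M x) = algebraMap Q M (σQ x))
    (ι : A →+* Om K) (hι : ∀ x, sg K p a (ι x) = ι (τ x))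
    (Z : ∀ i, Set (K i))
    (hZ : ∀ n, ∀ᶠ i in UU, n * {b : K i | b ^ (p i ^ a i) = b ∧ b ∉ Z i}.ncard ≤ p i ^ a i)
    (T : Finset M) (hT : ∀ t ∈ T, IsSeparable Q t) :
    ∃ (χ : M →+* Om K) (z : ∀ i, K i), (∀ x, χ (algebraMap A[X] M (C x)) = ι x) ∧
      χ (algebraMap A[X] M X) = mk z ∧ (∀ᶠ i in UU, z i ∈ Z i) ∧ ∀ t ∈ T, χ (σM t) = sg K p a (χ t) := by
  have hperQ : Per σQ := per_frac (per_poly hper) σQ hQ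
  have hM' : ∀ P : A[X], σM (algebraMap A[X] M P) = algebraMap A[X] M (P.map τ) := by
    intro P
    rw [IsScalarTower.algebraMap_apply A[X] Q M, hM, hQ, ← IsScalarTower.algebraMap_apply]
  have hinjM : Function.Injective (algebraMap A[X] M) := by
    rw [IsScalarTower.algebraMap_eq A[X] Q M]
    exact (algebraMap Q M).injective.comp (IsFractionRing.injective A[X] Q)
  have : FaithfulSMul A[X] M := (faithfulSMul_iff_algebraMap_injective A[X] M).mpr hinjM
  obtain ⟨y, hy1, hy2, hy3, hy4⟩ := exists_prim (R := A[X]) hperQ σM hM T hT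
  have hmin : minpoly Q y = (minpoly A[X] y).map (algebraMap A[X] Q) :=
    minpoly.isIntegrallyClosed_eq_field_fractions' Q hy1
  have hfm : (minpoly A[X] y).Monic := minpoly.monic hy1
  obtain ⟨ρ, hρ⟩ := exists_fin_roots ((minpoly A[X] y).map (algebraMap A[X] M)) (hfm.map _) (minpoly A[X] y).natDegree
    (hfm.natDegree_map _)
  have hroot : ∀ x : M, aeval x (minpoly Q y) = 0 ↔ ∃ j, x = ρ j := by
    intro x
    rw [hmin, aeval_map_algebraMap, aeval_def, ← eval_map, hρ, eval_prod, Finset.prod_eq_zero_iff]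
    simp [sub_eq_zero]
  obtain ⟨j0, hj0⟩ := (hroot y).mp (minpoly.aeval Q y)
  have hder : aeval y (derivative (minpoly A[X] y)) ≠ 0 := by
    have := hy2.aeval_derivative_ne_zero (minpoly.aeval Q y)
    rwa [hmin, derivative_map, aeval_map_algebraMap] at this
  have hderQ : (aeval y (derivative (minpoly A[X] y)))⁻¹ ∈ IntermediateField.adjoin Q {y} := by
    apply inv_mem
    rw [← aeval_map_algebraMap Q]
    exact (IntermediateField.algebra_adjoin_le_adjoin Q _) (aeval_mem_adjoin_singleton Q y)
  obtain ⟨h, hh, r, hr⟩ := clear_denoms (R := A[X]) y (J := Option (Fin (minpoly A[X] y).natDegree))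
    (fun o => o.elim (aeval y (derivative (minpoly A[X] y)))⁻¹ (fun j => σM (ρ j))) (by
      rintro (_ | j)
      · exact hderQ
      · exact hy4 _ ((hroot _).mpr ⟨j, rfl⟩))
  have hdiv : ∀ g : A[X][X], aeval y g = 0 → minpoly A[X] y ∣ g := fun g hg => minpoly.isIntegrallyClosed_dvd hy1 hg
  obtain ⟨t, ht⟩ := hdiv (r none * derivative (minpoly A[X] y) - C h) (by
    have := hr none
    simp only [Option.elim_none] at this
    rw [map_sub, map_mul, ← this, aeval_C, inv_mul_cancel_right₀ hder, sub_self])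
  have hθσ : ∀ b, sg K p a b = b → ∀ P : A[X], sg K p a (eval₂RingHom ι b P) = eval₂RingHom ι b (mapRingHom τ P) := by
    intro b hb P
    rw [coe_eval₂RingHom, hom_eval₂, hb, coe_mapRingHom, eval₂_map]
    congr 1
    ext x
    exact hι x
  obtain ⟨z, w, c1, c2, c3, c4, c5, c6⟩ := chebOm p a hq ι (minpoly A[X] y) hfm (minpoly.irreducible hy1) h hh (r none) t
    (by rw [mul_comm t, ← ht]; ring) _ le_rfl (fun j => r (some j)) (by
      intro b w hb _ hw
      rw [evR_eq] at hw
      obtain ⟨j, hj⟩ := cover_aux (mapRingHom τ) σM hM' y (minpoly A[X] y) _ hdiv ρ hρ h (fun j => r (some j))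
        (fun j => hr (some j)) (eval₂RingHom ι b) (sg K p a) (hθσ b hb) w hw
      refine ⟨j, ?_⟩
      rw [evR_eq, eval_map]
      exact hj) j0 Z hZ
  rw [evR_eq] at c5 c6
  rw [eval_map] at c4 c6
  obtain ⟨χ, hχ1, hχ2⟩ := extend_hom (Q := Q) (eval₂RingHom ι (mk z)) (theta_inj ι _ c2) y hy1 w c5
  refine ⟨χ, z, fun x => ?_, ?_, c1, ?_⟩
  · rw [hχ1]
    simp
  · rw [hχ1]
    simp
  · intro x hx
    refine commute_adjoin (Q := Q) (mapRingHom τ) σM hM' (eval₂RingHom ι (mk z)) (sg K p a) (hθσ _ c3) χ hχ1 y ?_ x (hy3 x hx)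
    have e1 := congrArg χ (hr (some j0))
    simp only [Option.elim_some] at e1
    rw [map_mul, hχ1, ← hj0, aeval_def, hom_eval₂, hχ2] at e1
    have e2 : χ.comp (algebraMap A[X] M) = eval₂RingHom ι (mk z) := RingHom.ext hχ1
    rw [e2, ← c6] at e1
    rw [hχ2]
    exact mul_left_cancel₀ c4 e1

theorem fin_step (hq : ∀ n, ∀ᶠ i in UU, n ≤ p i ^ a i)
    {A Q M : Type} [Field A] [IsAlgClosed A] [Countable A] [Field Q] [Algebra A[X] Q] [IsFractionRing A[X] Q]
    [Field M] [IsAlgClosed M] [Algebra Q M] [Algebra A[X] M] [IsScalarTower A[X] Q M] [Algebra.IsAlgebraic Q M]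
    (τ : A →+* A) (hper : Per τ) (σQ : Q →+* Q) (hQ : ∀ P, σQ (algebraMap A[X] Q P) = algebraMap A[X] Q (P.map τ))
    (σM : M →+* M) (hM : ∀ x, σM (algebraMap Q M x) = algebraMap Q M (σQ x))
    (ι : A →+* Om K) (hι : ∀ x, sg K p a (ι x) = ι (τ x))
    (Z : ∀ i, Set (K i))
    (hZ : ∀ n, ∀ᶠ i in UU, n * {b : K i | b ^ (p i ^ a i) = b ∧ b ∉ Z i}.ncard ≤ p i ^ a i)
    (T : Finset M) :
    ∃ (χ : M →+* Om K) (z : ∀ i, K i), (∀ x, χ (algebraMap A[X] M (C x)) = ι x) ∧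
      χ (algebraMap A[X] M X) = mk z ∧ (∀ᶠ i in UU, z i ∈ Z i) ∧ ∀ t ∈ T, χ (σM t) = sg K p a (χ t) := by
  classical
  have hpow : ∀ x : M, ∃ n : ℕ, IsSeparable Q (x ^ (ringExpChar Q) ^ n) := by
    intro x
    have : ExpChar (separableClosure Q M) (ringExpChar Q) :=
      expChar_of_injective_algebraMap (algebraMap Q (separableClosure Q M)).injective _
    obtain ⟨n, y, hy⟩ := IsPurelyInseparable.pow_mem (separableClosure Q M) (ringExpChar Q) x
    refine ⟨n, ?_⟩
    rw [← hy]
    exact mem_separableClosure_iff.mp y.2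
  choose n hn using hpow
  obtain ⟨χ, z, h1, h2, h3, h4⟩ := fin_step_sep p a hq τ hper σQ hQ σM hM ι hι Z hZ
    (T.image fun x => x ^ (ringExpChar Q) ^ n x) (by
      intro t ht
      obtain ⟨x, -, rfl⟩ := Finset.mem_image.mp ht
      exact hn x)
  refine ⟨χ, z, h1, h2, h3, fun t ht => ?_⟩
  have h5 := h4 _ (Finset.mem_image_of_mem _ ht)
  have : ExpChar (Om K) (ringExpChar Q) :=
    expChar_of_injective_ringHom (χ.comp (algebraMap Q M)).injective _
  rw [map_pow, map_pow, map_pow, map_pow] at h5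
  exact (iterateFrobenius (Om K) (ringExpChar Q) (n t)).injective h5

end FinStep
end Felgner

namespace Felgner
open Polynomial
section FullStep
variable {K : ℕ → Type} [∀ i, Field (K i)] [∀ i, IsAlgClosed (K i)]
  (p a : ℕ → ℕ) [∀ i, Fact (p i).Prime] [∀ i, CharP (K i) (p i)]

theorem full_step (hq : ∀ n, ∀ᶠ i in UU, n ≤ p i ^ a i)
    {A Q M : Type} [Field A] [IsAlgClosed A] [Countable A] [Field Q] [Algebra A[X] Q] [IsFractionRing A[X] Q]
    [Field M] [IsAlgClosed M] [Countable M] [Algebra Q M] [Algebra A[X] M] [IsScalarTower A[X] Q M]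
    [Algebra.IsAlgebraic Q M]
    (τ : A →+* A) (hper : Per τ) (σQ : Q →+* Q) (hQ : ∀ P, σQ (algebraMap A[X] Q P) = algebraMap A[X] Q (P.map τ))
    (σM : M →+* M) (hM : ∀ x, σM (algebraMap Q M x) = algebraMap Q M (σQ x))
    (ι : A →+* Om K) (hι : ∀ x, sg K p a (ι x) = ι (τ x))
    (Z : ∀ i, Set (K i))
    (hZ : ∀ n, ∀ᶠ i in UU, n * {b : K i | b ^ (p i ^ a i) = b ∧ b ∉ Z i}.ncard ≤ p i ^ a i) :
    ∃ (χ : M →+* Om K) (z : ∀ i, K i), (∀ x, χ (algebraMap A[X] M (C x)) = ι x) ∧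
      χ (algebraMap A[X] M X) = mk z ∧ (∀ᶠ i in UU, z i ∈ Z i) ∧ ∀ t, χ (σM t) = sg K p a (χ t) := by
  classical
  choose l hl using fun x => mk_surj (K := K) (ι x)
  have key := saturation (J := M × M × A) (S := fun i => M → K i)
    (fun j i z => z (j.1 + j.2.1) = z j.1 + z j.2.1 ∧ z (j.1 * j.2.1) = z j.1 * z j.2.1 ∧ z 1 = 1 ∧
      z (σM j.1) = z j.1 ^ (p i ^ a i) ∧ z (algebraMap A[X] M (C j.2.2)) = l j.2.2 i ∧
      z (algebraMap A[X] M X) ∈ Z i) (by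
    intro s
    obtain ⟨χ, z, h1, h2, h3, h4⟩ := fin_step p a hq τ hper σQ hQ σM hM ι hι Z hZ (s.image fun j => j.1)
    choose w hw using fun x => mk_surj (K := K) (χ x)
    have hall : ∀ j ∈ s, ∀ᶠ i in UU, (w (j.1 + j.2.1) i = w j.1 i + w j.2.1 i ∧
        w (j.1 * j.2.1) i = w j.1 i * w j.2.1 i ∧ w 1 i = 1 ∧
        w (σM j.1) i = w j.1 i ^ (p i ^ a i) ∧ w (algebraMap A[X] M (C j.2.2)) i = l j.2.2 i ∧
        w (algebraMap A[X] M X) i ∈ Z i) := by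
      intro j hj
      have e1 : mk (w (j.1 + j.2.1)) = mk (w j.1 + w j.2.1) := by
        rw [hw, map_add χ, (mk (K := K)).map_add, hw, hw]
      have e2 : mk (w (j.1 * j.2.1)) = mk (w j.1 * w j.2.1) := by
        rw [hw, map_mul χ, (mk (K := K)).map_mul, hw, hw]
      have e3 : mk (w 1) = mk (1 : ∀ i, K i) := by
        rw [hw, map_one χ, (mk (K := K)).map_one]
      have e4 : mk (w (σM j.1)) = mk (fun i => w j.1 i ^ (p i ^ a i)) := by
        rw [hw, h4 _ (Finset.mem_image_of_mem _ hj), ← sg_mk, hw]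
      have e5 : mk (w (algebraMap A[X] M (C j.2.2))) = mk (l j.2.2) := by
        rw [hw, h1, hl]
      have e6 : mk (w (algebraMap A[X] M X)) = mk z := by rw [hw, h2]
      rw [mk_eq] at e1 e2 e3 e4 e5 e6
      filter_upwards [e1, e2, e3, e4, e5, e6, h3] with i f1 f2 f3 f4 f5 f6 f7
      exact ⟨f1, f2, f3, f4, f5, f6 ▸ f7⟩
    have hall' := (Filter.eventually_all_finset s).mpr hall
    filter_upwards [hall'] with i hi
    exact ⟨fun x => w x i, hi⟩)
  obtain ⟨z, hz⟩ := key
  let χ : M →+* Om K :=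
    { toFun := fun x => mk (fun i => z i x)
      map_one' := by
        rw [← (mk (K := K)).map_one, mk_eq]
        filter_upwards [hz (1, 1, 1)] with i hi
        exact hi.2.2.1
      map_mul' := fun x y => by
        rw [← (mk (K := K)).map_mul, mk_eq]
        filter_upwards [hz (x, y, 1)] with i hi
        exact hi.2.1
      map_zero' := by
        rw [← (mk (K := K)).map_zero, mk_eq]
        filter_upwards [hz (0, 0, 1)] with i hi
        have := hi.1
        simpa using this
      map_add' := fun x y => by
        rw [← (mk (K := K)).map_add, mk_eq]
        filter_upwards [hz (x, y, 1)] with i hi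
        exact hi.1 }
  have hχ : ∀ x, χ x = mk (fun i => z i x) := fun _ => rfl
  refine ⟨χ, fun i => z i (algebraMap A[X] M X), fun x => ?_, rfl, ?_, fun t => ?_⟩
  · rw [hχ, ← hl, mk_eq]
    filter_upwards [hz (1, 1, x)] with i hi
    exact hi.2.2.2.2.1
  · filter_upwards [hz (1, 1, 1)] with i hi
    exact hi.2.2.2.2.2
  · rw [hχ, hχ, sg_mk, mk_eq]
    filter_upwards [hz (t, 1, 1)] with i hi
    exact hi.2.2.2.1

end FullStep
end Felgner

namespace Felgner
open Polynomial
section Clos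

lemma countable_poly {A : Type} [CommRing A] [Countable A] : Countable A[X] := by
  rw [← Cardinal.mk_le_aleph0_iff]
  exact Polynomial.cardinalMk_le_max.trans (max_le (Cardinal.mk_le_aleph0_iff.mpr inferInstance) le_rfl)

lemma countable_frac {R Q : Type} [CommRing R] [IsDomain R] [Field Q] [Algebra R Q] [IsFractionRing R Q] [Countable R] :
    Countable Q := by
  have : Function.Surjective (fun x : R × R => algebraMap R Q x.1 / algebraMap R Q x.2) := by
    intro x
    obtain ⟨a, b, hb, h⟩ := IsFractionRing.div_surjective (A := R) x
    exact ⟨(a, b), h⟩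
  exact this.countable

lemma clos {Q W : Type} [Field Q] [Countable Q] [Field W] [IsAlgClosed W] [Algebra Q W] (σQ : Q →+* Q) (hper : Per σQ)
    (σ : W →+* W) (hσ : ∀ x, σ (algebraMap Q W x) = algebraMap Q W (σQ x)) :
    ∃ (M : Type) (_ : Field M) (_ : IsAlgClosed M) (_ : Countable M) (_ : Algebra Q M) (_ : Algebra.IsAlgebraic Q M)
      (σM : M →+* M) (e : M →+* W), (∀ x, σM (algebraMap Q M x) = algebraMap Q M (σQ x)) ∧ Per σM ∧
      (∀ x, σ (e x) = e (σM x)) ∧ (∀ x, e (algebraMap Q M x) = algebraMap Q W x) ∧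
      ∀ x : W, IsAlgebraic Q x → x ∈ Set.range e := by
  have hmem : ∀ x : algebraicClosure Q W, σ x ∈ algebraicClosure Q W := by
    intro x
    obtain ⟨P, hP, hx⟩ := mem_algebraicClosure_iff.mp x.2
    refine mem_algebraicClosure_iff.mpr ⟨P.map σQ, (Polynomial.map_ne_zero_iff σQ.injective).mpr hP, ?_⟩
    rw [← eval_twist σQ σ hσ, hx, map_zero]
  let σM : algebraicClosure Q W →+* algebraicClosure Q W :=
    (σ.comp (algebraicClosure Q W).val.toRingHom).codRestrict (algebraicClosure Q W) hmem
  have hσM : ∀ x, ((σM x : algebraicClosure Q W) : W) = σ x := fun _ => rfl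
  have hM : ∀ x, σM (algebraMap Q _ x) = algebraMap Q _ (σQ x) := by
    intro x
    apply Subtype.ext
    rw [hσM]
    exact hσ x
  refine ⟨algebraicClosure Q W, inferInstance, (algebraicClosure.isAlgClosure Q W).isAlgClosed, ?_, inferInstance,
    inferInstance, σM, (algebraicClosure Q W).val.toRingHom, hM, ?_, fun _ => rfl, fun _ => rfl, ?_⟩
  · rw [← Cardinal.mk_le_aleph0_iff]
    exact (Algebra.IsAlgebraic.cardinalMk_le_max Q _).trans (max_le (Cardinal.mk_le_aleph0_iff.mpr inferInstance) le_rfl)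
  · intro x
    exact per_alg hper σM hM x (Algebra.IsAlgebraic.isAlgebraic x)
  · intro x hx
    exact ⟨⟨x, mem_algebraicClosure_iff.mpr hx⟩, rfl⟩

variable {K : ℕ → Type} [∀ i, Field (K i)]
  {p a : ℕ → ℕ} [∀ i, Fact (p i).Prime] [∀ i, CharP (K i) (p i)]

variable (K p a) in
/-- A partial isomorphism between countable algebraically closed difference subfields. -/
structure Sys where
  A : Type
  fld : Field A
  ac : IsAlgClosed A
  ct : Countable A
  τ : A →+* A
  per : Per τ
  e1 : A →+* Om K
  e2 : A →+* Om K
  c1 : ∀ x, sg K p a (e1 x) = e1 (τ x)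
  c2 : ∀ x, sg K p a (e2 x) = e2 (τ x)

/-- Two elements correspond. -/
def Rel (S : Sys K p a) (x y : Om K) : Prop := let _ := S.fld; ∃ m : S.A, S.e1 m = x ∧ S.e2 m = y

/-- The inverse partial isomorphism. -/
def Sys.swap (S : Sys K p a) : Sys K p a :=
  ⟨S.A, S.fld, S.ac, S.ct, S.τ, S.per, S.e2, S.e1, S.c2, S.c1⟩

lemma rel_swap (S : Sys K p a) (x y : Om K) : Rel S.swap x y ↔ Rel S y x := by
  unfold Rel Sys.swap
  constructor <;> rintro ⟨m, h1, h2⟩ <;> exact ⟨m, h2, h1⟩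

lemma rel_fix {S : Sys K p a} {x y : Om K} (h : Rel S x y) (hx : sg K p a x = x) : sg K p a y = y := by
  let _ := S.fld
  obtain ⟨m, rfl, rfl⟩ := h
  rw [S.c1] at hx
  rw [S.c2, S.e1.injective hx]

lemma rel_add {S : Sys K p a} {x y x' y' : Om K} (h : Rel S x y) (h' : Rel S x' y') : Rel S (x + x') (y + y') := by
  let _ := S.fld
  obtain ⟨m, rfl, rfl⟩ := h
  obtain ⟨m', rfl, rfl⟩ := h'
  exact ⟨m + m', map_add _ _ _, map_add _ _ _⟩

lemma rel_mul {S : Sys K p a} {x y x' y' : Om K} (h : Rel S x y) (h' : Rel S x' y') : Rel S (x * x') (y * y') := by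
  let _ := S.fld
  obtain ⟨m, rfl, rfl⟩ := h
  obtain ⟨m', rfl, rfl⟩ := h'
  exact ⟨m * m', map_mul _ _ _, map_mul _ _ _⟩

lemma rel_neg {S : Sys K p a} {x y : Om K} (h : Rel S x y) : Rel S (-x) (-y) := by
  let _ := S.fld
  obtain ⟨m, rfl, rfl⟩ := h
  exact ⟨-m, map_neg _ _, map_neg _ _⟩

lemma rel_zero (S : Sys K p a) : Rel S 0 0 := by
  let _ := S.fld
  exact ⟨0, map_zero _, map_zero _⟩

lemma rel_one (S : Sys K p a) : Rel S 1 1 := by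
  let _ := S.fld
  exact ⟨1, map_one _, map_one _⟩

lemma rel_eq {S : Sys K p a} {x y x' y' : Om K} (h : Rel S x y) (h' : Rel S x' y') : x = x' ↔ y = y' := by
  let _ := S.fld
  obtain ⟨m, rfl, rfl⟩ := h
  obtain ⟨m', rfl, rfl⟩ := h'
  rw [S.e1.injective.eq_iff, S.e2.injective.eq_iff]

theorem step [∀ i, IsAlgClosed (K i)] (hq : ∀ n, ∀ᶠ i in UU, n ≤ p i ^ a i) (S : Sys K p a) (c : Om K)
    (hc : sg K p a c = c) (hcr : ¬ ∃ y, Rel S c y) (Z : ∀ i, Set (K i))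
    (hZ : ∀ n, ∀ᶠ i in UU, n * {b : K i | b ^ (p i ^ a i) = b ∧ b ∉ Z i}.ncard ≤ p i ^ a i) :
    ∃ S' : Sys K p a, (∀ x y, Rel S x y → Rel S' x y) ∧ ∃ z : ∀ i, K i, Rel S' c (mk z) ∧ ∀ᶠ i in UU, z i ∈ Z i := by
  obtain ⟨A, fA, iA, cA, τ, per, e1, e2, c1, c2⟩ := S
  have hcr' : c ∉ Set.range e1 := by
    rintro ⟨m, rfl⟩
    exact hcr ⟨e2 m, m, rfl, rfl⟩
  have hinj := theta_inj e1 c hcr'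
  have : Countable A[X] := countable_poly
  have : Countable (FractionRing A[X]) := countable_frac (R := A[X])
  have hinj2 : Function.Injective ((algebraMap A[X] (FractionRing A[X])).comp (mapRingHom τ)) :=
    (IsFractionRing.injective A[X] (FractionRing A[X])).comp (map_injective τ τ.injective)
  let σQ : FractionRing A[X] →+* FractionRing A[X] := IsFractionRing.lift hinj2
  have hσQ : ∀ P, σQ (algebraMap A[X] (FractionRing A[X]) P) = algebraMap A[X] (FractionRing A[X]) (P.map τ) := by
    intro P
    exact IsFractionRing.lift_algebraMap hinj2 P
  let f : FractionRing A[X] →+* Om K := IsFractionRing.lift hinj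
  have hf : ∀ P, f (algebraMap A[X] (FractionRing A[X]) P) = eval₂RingHom e1 c P :=
    fun P => IsFractionRing.lift_algebraMap hinj P
  let _ : Algebra (FractionRing A[X]) (Om K) := f.toAlgebra
  have hσ : ∀ x, sg K p a (algebraMap (FractionRing A[X]) (Om K) x) = algebraMap (FractionRing A[X]) (Om K) (σQ x) := by
    intro x
    change sg K p a (f x) = f (σQ x)
    have hpol : ∀ P, sg K p a (eval₂RingHom e1 c P) = eval₂RingHom e1 c (P.map τ) := by
      intro P
      rw [coe_eval₂RingHom, hom_eval₂, hc, eval₂_map]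
      congr 1
      ext x
      exact c1 x
    obtain ⟨u, v, hv, rfl⟩ := IsFractionRing.div_surjective (A := A[X]) x
    rw [map_div₀, map_div₀, map_div₀, map_div₀, hf, hf, hσQ, hσQ, hf, hf, hpol, hpol]
  have hperQ : Per σQ := per_frac (per_poly per) σQ hσQ
  obtain ⟨M, fM, iM, cM, aM, algM, σM, e, g1, g2, g3, g4, g5⟩ := clos σQ hperQ (sg K p a) hσ
  let _ : Algebra A[X] M := ((algebraMap (FractionRing A[X]) M).comp (algebraMap A[X] (FractionRing A[X]))).toAlgebra
  have : IsScalarTower A[X] (FractionRing A[X]) M := IsScalarTower.of_algebraMap_eq fun _ => rfl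
  obtain ⟨χ, z, h1, h2, h3, h4⟩ := full_step p a hq τ per σQ hσQ σM g1 e2 c2 Z hZ
  have hC : ∀ P : A[X], e (algebraMap A[X] M P) = eval₂RingHom e1 c P := by
    intro P
    rw [IsScalarTower.algebraMap_apply A[X] (FractionRing A[X]) M, g4]
    exact hf P
  refine ⟨⟨M, fM, iM, cM, σM, g2, e, χ, g3, fun x => (h4 x).symm⟩, ?_, z, ⟨algebraMap A[X] M X, ?_, h2⟩, h3⟩
  · rintro x y ⟨m, rfl, rfl⟩
    refine ⟨algebraMap A[X] M (C m), ?_, h1 m⟩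
    exact (hC _).trans (by simp)
  · exact (hC _).trans (by simp)

/-- Back and forth, without side condition. -/
theorem bf [∀ i, IsAlgClosed (K i)] (hq : ∀ n, ∀ᶠ i in UU, n ≤ p i ^ a i) (S : Sys K p a) (c : Om K)
    (hc : sg K p a c = c) : ∃ S' : Sys K p a, (∀ x y, Rel S x y → Rel S' x y) ∧ ∃ y, Rel S' c y := by
  by_cases h : ∃ y, Rel S c y
  · exact ⟨S, fun _ _ h => h, h⟩
  · obtain ⟨S', h1, z, h2, -⟩ := step hq S c hc h (fun _ => Set.univ) (by simp)
    exact ⟨S', h1, _, h2⟩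

/-- The initial system: algebraic elements over the prime field. -/
theorem initial_system [∀ i, IsAlgClosed (K i)] : ∃ S : Sys K p a, S.swap = S := by
  have : Countable (⊥ : Subfield (Om K)) := by
    have h2 : (⊥ : Subfield (Om K)) = Subfield.closure ∅ := Subfield.closure_empty.symm
    rw [h2]
    rw [← Cardinal.mk_le_aleph0_iff]
    refine (Subfield.cardinalMk_closure_le_max _).trans ?_
    simp
  obtain ⟨M, fM, iM, cM, aM, algM, σM, e, g1, g2, g3, g4, g5⟩ := clos (Q := (⊥ : Subfield (Om K))) (W := Om K)
    (RingHom.id _) (fun x => ⟨1, one_pos, by simp⟩) (sg K p a) (by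
      intro x
      have : (⊥ : Subfield (Om K)) ≤ (RingHom.eqLocusField (sg K p a) (RingHom.id _)) := bot_le
      exact this x.2)
  exact ⟨⟨M, fM, iM, cM, σM, g2, e, e, g3, g3⟩, rfl⟩

end Clos
end Felgner

namespace Felgner
open FirstOrder Language
section Transfer
set_option linter.unusedSectionVars false

variable {K : ℕ → Type} [∀ i, Field (K i)] [∀ i, IsAlgClosed (K i)]
  {p a : ℕ → ℕ} [∀ i, Fact (p i).Prime] [∀ i, CharP (K i) (p i)]
  {F : ℕ → Type} [∀ i, Field (F i)] [∀ i, FirstOrder.Ring.CompatibleRing (F i)]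

/-- The class of a sequence from the small fields. -/
noncomputable def cl (f : ∀ i, F i →+* K i) (x : ∀ i, F i) : Om K := mk fun i => f i (x i)

lemma rel_term {f : ∀ i, F i →+* K i} {α : Type*} (t : Language.ring.Term α) (S : Sys K p a)
    (v1 v2 : ∀ i, α → F i) (h : ∀ x, Rel S (cl f fun i => v1 i x) (cl f fun i => v2 i x)) :
    Rel S (cl f fun i => t.realize (v1 i)) (cl f fun i => t.realize (v2 i)) := by
  induction t with
  | var x => exact h x
  | func g ts ih =>
    cases g with
    | add =>
      have := rel_add (ih 0) (ih 1)
      unfold cl at this ⊢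
      rw [← (mk (K := K)).map_add, ← (mk (K := K)).map_add] at this
      convert this using 2 <;> ext i <;>
        simp only [Term.realize, Pi.add_apply, ← map_add] <;> congr 1 <;>
        exact FirstOrder.Ring.CompatibleRing.funMap_add _
    | mul =>
      have := rel_mul (ih 0) (ih 1)
      unfold cl at this ⊢
      rw [← (mk (K := K)).map_mul, ← (mk (K := K)).map_mul] at this
      convert this using 2 <;> ext i <;>
        simp only [Term.realize, Pi.mul_apply, ← map_mul] <;> congr 1 <;>
        exact FirstOrder.Ring.CompatibleRing.funMap_mul _
    | neg =>
      have := rel_neg (ih 0)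
      unfold cl at this ⊢
      have e : ∀ x : ∀ i, K i, - mk x = mk (-x) := fun x => (RingHom.map_neg (mk (K := K)) x).symm
      rw [e, e] at this
      convert this using 2 <;> ext i <;>
        simp only [Term.realize, Pi.neg_apply, ← map_neg] <;> congr 1 <;>
        exact FirstOrder.Ring.CompatibleRing.funMap_neg _
    | zero =>
      have := rel_zero S
      unfold cl at this ⊢
      rw [← (mk (K := K)).map_zero] at this
      convert this using 2 <;> ext i <;>
        simp only [Term.realize, Pi.zero_apply, ← (f i).map_zero] <;> congr 1 <;>
        exact FirstOrder.Ring.CompatibleRing.funMap_zero _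
    | one =>
      have := rel_one S
      unfold cl at this ⊢
      rw [← (mk (K := K)).map_one] at this
      convert this using 2 <;> ext i <;>
        simp only [Term.realize, Pi.one_apply, ← (f i).map_one] <;> congr 1 <;>
        exact FirstOrder.Ring.CompatibleRing.funMap_one _

lemma cl_eq (f : ∀ i, F i →+* K i) (x y : ∀ i, F i) : cl f x = cl f y ↔ ∀ᶠ i in UU, x i = y i := by
  unfold cl
  rw [mk_eq]
  simp only [(f _).injective.eq_iff]

lemma cl_fix (f : ∀ i, F i →+* K i) (hf : ∀ i b, b ^ (p i ^ a i) = b ↔ b ∈ Set.range (f i)) (x : ∀ i, F i) :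
    sg K p a (cl f x) = cl f x := by
  unfold cl
  rw [sg_mk]
  congr 1
  ext i
  exact (hf i _).mpr ⟨_, rfl⟩

lemma fix_cl (f : ∀ i, F i →+* K i) (hf : ∀ i b, b ^ (p i ^ a i) = b ↔ b ∈ Set.range (f i)) (y : Om K)
    (hy : sg K p a y = y) : ∃ x, y = cl f x := by
  obtain ⟨w, rfl⟩ := mk_surj y
  rw [sg_mk, mk_eq] at hy
  have : ∀ i, ∃ x, w i ^ (p i ^ a i) = w i → f i x = w i := by
    intro i
    by_cases h : w i ^ (p i ^ a i) = w i
    · obtain ⟨x, hx⟩ := (hf i _).mp h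
      exact ⟨x, fun _ => hx⟩
    · exact ⟨0, fun h' => (h h').elim⟩
  choose x hx using this
  refine ⟨x, ?_⟩
  unfold cl
  rw [mk_eq]
  filter_upwards [hy] with i hi
  exact (hx i hi).symm

theorem transfer (hq : ∀ n, ∀ᶠ i in UU, n ≤ p i ^ a i) (f : ∀ i, F i →+* K i)
    (hf : ∀ i b, b ^ (p i ^ a i) = b ↔ b ∈ Set.range (f i)) {α : Type*} {n : ℕ}
    (φ : Language.ring.BoundedFormula α n) :
    ∀ (S : Sys K p a) (v1 v2 : ∀ i, α → F i) (x1 x2 : ∀ i, Fin n → F i),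
      (∀ x, Rel S (cl f fun i => v1 i x) (cl f fun i => v2 i x)) →
      (∀ x, Rel S (cl f fun i => x1 i x) (cl f fun i => x2 i x)) →
      ((∀ᶠ i in UU, φ.Realize (v1 i) (x1 i)) ↔ (∀ᶠ i in UU, φ.Realize (v2 i) (x2 i))) := by
  induction φ with
  | falsum => intros; exact Iff.rfl
  | equal t1 t2 =>
    intro S v1 v2 x1 x2 hv hx
    have hs : ∀ x, Rel S (cl f fun i => Sum.elim (v1 i) (x1 i) x) (cl f fun i => Sum.elim (v2 i) (x2 i) x) := by
      rintro (x | x)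
      · exact hv x
      · exact hx x
    have := rel_eq (rel_term t1 S _ _ hs) (rel_term t2 S _ _ hs)
    rw [cl_eq, cl_eq] at this
    exact this
  | rel R ts => cases R
  | imp φ ψ ih1 ih2 =>
    intro S v1 v2 x1 x2 hv hx
    simp only [BoundedFormula.realize_imp]
    rw [Ultrafilter.eventually_imp, Ultrafilter.eventually_imp, ih1 S v1 v2 x1 x2 hv hx, ih2 S v1 v2 x1 x2 hv hx]
  | @all k φ ih =>
    have dir : ∀ (S : Sys K p a) (v1 v2 : ∀ i, α → F i) (x1 x2 : ∀ i, Fin k → F i),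
      (∀ x, Rel S (cl f fun i => v1 i x) (cl f fun i => v2 i x)) →
      (∀ x, Rel S (cl f fun i => x1 i x) (cl f fun i => x2 i x)) →
      (∀ᶠ i in UU, φ.all.Realize (v1 i) (x1 i)) → (∀ᶠ i in UU, φ.all.Realize (v2 i) (x2 i)) := by
      intro S v1 v2 x1 x2 hv hx h1
      by_contra h2
      rw [← uu_not] at h2
      simp only [BoundedFormula.realize_all, not_forall] at h1 h2
      have : ∀ i, ∃ y, (∃ y, ¬ φ.Realize (v2 i) (Fin.snoc (x2 i) y)) → ¬ φ.Realize (v2 i) (Fin.snoc (x2 i) y) := by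
        intro i
        by_cases h : ∃ y, ¬ φ.Realize (v2 i) (Fin.snoc (x2 i) y)
        · obtain ⟨y, hy⟩ := h
          exact ⟨y, fun _ => hy⟩
        · exact ⟨0, fun h' => (h h').elim⟩
      choose y hy using this
      obtain ⟨S', hS', c, hc⟩ := bf hq S.swap (cl f y) (cl_fix f hf y)
      obtain ⟨z, rfl⟩ := fix_cl f hf c (rel_fix hc (cl_fix f hf y))
      have h3 := ih S'.swap v1 v2 (fun i => Fin.snoc (x1 i) (z i)) (fun i => Fin.snoc (x2 i) (y i))
        (fun x => (rel_swap _ _ _).mpr (hS' _ _ ((rel_swap _ _ _).mpr (hv x)))) (by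
          intro x
          refine Fin.lastCases ?_ (fun x => ?_) x
          · simp only [Fin.snoc_last]
            exact (rel_swap _ _ _).mpr hc
          · simp only [Fin.snoc_castSucc]
            exact (rel_swap _ _ _).mpr (hS' _ _ ((rel_swap _ _ _).mpr (hx x))))
      have h4 := h3.mp (h1.mono fun i hi => hi (z i))
      have h5 : ∀ᶠ (i : ℕ) in UU, False := by
        filter_upwards [h4, h2] with i h6 h7
        exact hy i h7 h6
      exact h5.exists.elim fun _ h => h
    intro S v1 v2 x1 x2 hv hx
    exact ⟨dir S v1 v2 x1 x2 hv hx, dir S.swap v2 v1 x2 x1 (fun x => (rel_swap _ _ _).mpr (hv x))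
      (fun x => (rel_swap _ _ _).mpr (hx x))⟩

end Transfer
end Felgner

namespace Felgner
open FirstOrder Language
section Final
set_option linter.unusedSectionVars false

variable {K : ℕ → Type} [∀ i, Field (K i)] [∀ i, IsAlgClosed (K i)]
  {p a : ℕ → ℕ} [∀ i, Fact (p i).Prime] [∀ i, CharP (K i) (p i)]
  {F : ℕ → Type} [∀ i, Field (F i)] [∀ i, FirstOrder.Ring.CompatibleRing (F i)] [∀ i, Finite (F i)]

lemma coord_pigeon {m : ℕ} (D : ∀ i, Set (Fin m → F i)) (hbig : ∀ n, ∀ᶠ i in UU, n ≤ (D i).ncard) :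
    ∃ v : Fin m, ∀ n, ∀ᶠ i in UU, n ≤ ((fun x => x v) '' D i).ncard := by
  by_contra hcon
  simp only [not_exists, not_forall] at hcon
  choose n hn using hcon
  have h1 : ∀ᶠ i in UU, ∀ v, ((fun x => x v) '' D i).ncard ≤ n v := by
    rw [Filter.eventually_all]
    intro v
    have h2 : ∀ᶠ i in UU, ¬ (n v ≤ ((fun x => x v) '' D i).ncard) := by
      rw [uu_not]
      exact hn v
    exact h2.mono fun i hi => by omega
  have h5 : ∀ᶠ (i : ℕ) in UU, False := by
    filter_upwards [h1, hbig (∏ v, n v + 1)] with i h2 h3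
    have h4 : (D i).ncard ≤ ∏ v, n v := by
      rw [← Nat.card_coe_set_eq]
      refine (Nat.card_le_card_of_injective
        (fun (x : D i) (v : Fin m) => (⟨x.1 v, x.1, x.2, rfl⟩ : ↥((fun x : Fin m → F i => x v) '' D i))) ?_).trans ?_
      · intro x y hxy
        apply Subtype.ext
        funext v
        exact congrArg Subtype.val (congrFun hxy v)
      · rw [Nat.card_pi]
        refine Finset.prod_le_prod' fun v _ => ?_
        rw [Nat.card_coe_set_eq]
        exact h2 v
    omega
  exact h5.exists.elim fun _ h => h

theorem main_ultra (hq : ∀ n, ∀ᶠ i in UU, n ≤ p i ^ a i) (f : ∀ i, F i →+* K i)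
    (hf : ∀ i b, b ^ (p i ^ a i) = b ↔ b ∈ Set.range (f i)) {m : ℕ} (φ : Language.ring.Formula (Fin m))
    (hbig : ∀ n, ∀ᶠ i in UU, n ≤ {x : Fin m → F i | φ.Realize x}.ncard)
    (hsmall : ∀ n, ∀ᶠ i in UU, n * {x : Fin m → F i | φ.Realize x}.ncard ≤ p i ^ a i) : False := by
  classical
  obtain ⟨v, hv⟩ := coord_pigeon _ hbig
  obtain ⟨S, -⟩ := initial_system (K := K) (p := p) (a := a)
  let _ := S.fld
  have := S.ct
  choose l hl using fun x => mk_surj (K := K) (S.e1 x)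
  obtain ⟨b, hb⟩ := saturation (J := S.A) (S := fun i => Fin m → F i)
    (fun j i x => φ.Realize x ∧ f i (x v) ≠ l j i) (by
      intro s
      filter_upwards [hv (s.card + 1)] with i hi
      obtain ⟨y, hy, hy2⟩ := Set.exists_mem_notMem_of_ncard_lt_ncard
        (s := ((s.image fun j => l j i : Finset (K i)) : Set (K i)))
        (t := f i '' ((fun x => x v) '' {x : Fin m → F i | φ.Realize x})) (by
          rw [Set.ncard_image_of_injective _ (f i).injective, Set.ncard_coe_finset]
          exact lt_of_le_of_lt Finset.card_image_le hi)
      obtain ⟨_, ⟨x, hx, rfl⟩, rfl⟩ := hy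
      refine ⟨x, fun j hj => ⟨hx, fun h => hy2 ?_⟩⟩
      rw [h]
      exact Finset.mem_coe.mpr (Finset.mem_image_of_mem (fun j => l j i) hj))
  have hcr : ¬ ∃ y, Rel S (cl f fun i => b i v) y := by
    rintro ⟨y, j, hj, -⟩
    rw [← hl] at hj
    unfold cl at hj
    rw [mk_eq] at hj
    obtain ⟨i, hi1, hi2⟩ := (hj.and (hb j)).exists
    exact hi2.2 hi1.symm
  obtain ⟨S', -, z, hz1, hz2⟩ := step hq S _ (cl_fix f hf _) hcr
    (fun i => {y | ∀ x, φ.Realize x → f i (x v) ≠ y}) (by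
      intro n
      filter_upwards [hsmall n] with i hi
      refine (Nat.mul_le_mul_left n ?_).trans hi
      refine (Set.ncard_le_ncard (t := (fun x : Fin m → F i => f i (x v)) '' {x : Fin m → F i | φ.Realize x}) ?_
        (Set.toFinite _)).trans (Set.ncard_image_le (Set.toFinite _))
      rintro y ⟨-, hy⟩
      by_contra hcon
      apply hy
      intro x hx hxy
      exact hcon ⟨x, hx, hxy⟩)
  have hext : ∀ s : Finset (Fin m), ∃ S2 : Sys K p a, (∀ x y, Rel S' x y → Rel S2 x y) ∧
      ∀ u ∈ s, ∃ y, Rel S2 (cl f fun i => b i u) y := by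
    intro s
    induction s using Finset.induction_on with
    | empty => exact ⟨S', fun _ _ h => h, by simp⟩
    | insert u s hu ih =>
      obtain ⟨S2, h1, h2⟩ := ih
      obtain ⟨S3, h3, h4⟩ := bf hq S2 (cl f fun i => b i u) (cl_fix f hf _)
      refine ⟨S3, fun x y h => h3 _ _ (h1 _ _ h), fun w hw => ?_⟩
      rcases Finset.mem_insert.mp hw with rfl | hw
      · exact h4
      · obtain ⟨y, hy⟩ := h2 w hw
        exact ⟨y, h3 _ _ hy⟩
  obtain ⟨S2, h1, h2⟩ := hext Finset.univ
  have h3 : ∀ u, ∃ w : ∀ i, F i, Rel S2 (cl f fun i => b i u) (cl f w) := by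
    intro u
    obtain ⟨y, hy⟩ := h2 u (Finset.mem_univ u)
    obtain ⟨w, rfl⟩ := fix_cl f hf y (rel_fix hy (cl_fix f hf _))
    exact ⟨w, hy⟩
  choose w hw using h3
  have h4 : cl f (w v) = mk z := (rel_eq (hw v) (h1 _ _ hz1)).mp rfl
  unfold cl at h4
  rw [mk_eq] at h4
  have h5 := (transfer hq f hf φ S2 b (fun i u => w u i) (fun _ => default) (fun _ => default) hw
    (fun x => x.elim0)).mp ((hb 0).mono fun i hi => hi.1)
  obtain ⟨i, hi1, hi2, hi3⟩ := (h4.and (h5.and hz2)).exists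
  exact hi3 _ hi2 hi1

end Final
end Felgner

namespace Felgner
open Polynomial
lemma fixed_range {k W : Type} [Field k] [Finite k] [Field W] (f : k →+* W) (q : ℕ) (hq : Nat.card k = q) (b : W) :
    b ^ q = b ↔ b ∈ Set.range f := by
  have : Fintype k := Fintype.ofFinite k
  have hq1 : 1 < q := by
    rw [← hq]
    exact Finite.one_lt_card
  have h0 : (X ^ q - X : W[X]) ≠ 0 := FiniteField.X_pow_card_sub_X_ne_zero W hq1
  have hsub : Set.range f ⊆ {b : W | b ^ q = b} := by
    rintro _ ⟨x, rfl⟩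
    change f x ^ q = f x
    rw [← map_pow, ← hq, Nat.card_eq_fintype_card, FiniteField.pow_card]
  have heq : Set.range f = {b : W | b ^ q = b} := by
    refine Set.eq_of_subset_of_ncard_le hsub ?_ (fixed_finite q hq1)
    have h1 : (Set.range f).ncard = q := by
      rw [← Set.image_univ, Set.ncard_image_of_injective _ f.injective, Set.ncard_univ, hq]
    rw [h1]
    have h2 : {b : W | b ^ q = b} ⊆ (X ^ q - X : W[X]).rootSet W := by
      intro b hb
      rw [mem_rootSet]
      refine ⟨h0, ?_⟩
      simp only [Set.mem_ofPred_eq] at hb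
      simp [hb]
    refine (Set.ncard_le_ncard h2 (rootSet_finite _ _)).trans ?_
    refine (ncard_rootSet_le _ _).trans ?_
    rw [FiniteField.X_pow_card_sub_X_natDegree_eq W hq1]
  rw [heq]
  exact Iff.rfl

end Felgner

open FirstOrder

/-- The number of `k`-tuples of a (finite) ring `K` satisfying the ring-language formula `φ`,
where `K` is viewed as a structure for the language of rings via `compatibleRingOfRing`. -/
noncomputable def ringFormulaCount {k : ℕ} (φ : Language.ring.Formula (Fin k))
    (K : Type*) [Add K] [Mul K] [Neg K] [One K] [Zero K] : ℕ :=
  letI := Ring.compatibleRingOfRing K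
  Nat.card {x : Fin k → K // φ.Realize x}

/-- Dichotomy for definable sets over finite fields: for each formula `φ` with `m` free
variables there is `C > 0` so that over the field with `Q = p^k` elements the number `N` of
satisfying `m`-tuples is either at most `C`, or at least `Q / C`. -/
theorem definable_count_dichotomy (m : ℕ) (φ : Language.ring.Formula (Fin m)) :
    ∃ C : ℝ, 0 < C ∧
      ∀ (p : ℕ) [Fact p.Prime], ∀ k : ℕ, 1 ≤ k →
        (ringFormulaCount φ (GaloisField p k) : ℝ) ≤ C ∨
        ((p : ℝ) ^ k) / C ≤ (ringFormulaCount φ (GaloisField p k) : ℝ) := by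
  by_contra hcon
  push Not at hcon
  have h1 : ∀ i : ℕ, ∃ (p : ℕ) (_ : Fact p.Prime) (k : ℕ), 1 ≤ k ∧
      ((i + 1 : ℕ) : ℝ) < (ringFormulaCount φ (GaloisField p k) : ℝ) ∧
      (ringFormulaCount φ (GaloisField p k) : ℝ) < (p : ℝ) ^ k / ((i + 1 : ℕ) : ℝ) := by
    intro i
    obtain ⟨p, hp, k, h1, h2, h3⟩ := hcon ((i + 1 : ℕ) : ℝ) (by positivity)
    exact ⟨p, hp, k, h1, h2, h3⟩
  choose p hp k hk hlo hhi using h1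
  have hlo' : ∀ i, i + 1 < ringFormulaCount φ (GaloisField (p i) (k i)) := fun i => by exact_mod_cast hlo i
  have hhi' : ∀ i, (i + 1) * ringFormulaCount φ (GaloisField (p i) (k i)) < p i ^ k i := by
    intro i
    have h2 := hhi i
    rw [lt_div_iff₀ (by positivity)] at h2
    rw [mul_comm]
    exact_mod_cast h2
  let _ : ∀ i, Ring.CompatibleRing (GaloisField (p i) (k i)) := fun i => Ring.compatibleRingOfRing _
  have hch : ∀ i, CharP (AlgebraicClosure (GaloisField (p i) (k i))) (p i) := fun i =>
    charP_of_injective_algebraMap (algebraMap (GaloisField (p i) (k i)) _).injective (p i)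
  have hcount : ∀ i, {x : Fin m → GaloisField (p i) (k i) | φ.Realize x}.ncard =
      ringFormulaCount φ (GaloisField (p i) (k i)) := fun i => (Nat.card_coe_set_eq _).symm
  refine Felgner.main_ultra (K := fun i => AlgebraicClosure (GaloisField (p i) (k i))) (p := p) (a := k)
    (F := fun i => GaloisField (p i) (k i)) ?_ (fun i => algebraMap _ _) ?_ φ ?_ ?_
  · intro n
    filter_upwards [Felgner.uu_ge n] with i hi
    have := hhi' i
    have := hlo' i
    nlinarith
  · intro i b
    exact Felgner.fixed_range _ _ (GaloisField.card (p i) (k i) (by have := hk i; omega)) b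
  · intro n
    filter_upwards [Felgner.uu_ge n] with i hi
    rw [hcount]
    have := hlo' i
    omega
  · intro n
    filter_upwards [Felgner.uu_ge n] with i hi
    rw [hcount]
    exact (Nat.mul_le_mul_right _ (by omega)).trans (hhi' i).le
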